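/- Let m ≥ 1 and n ≥ 2 be integers, let 1 ≤ p < n/(n-1), and let 𝒦 be a finite collection of open boxes (products of m bounded open intervals) in ℝ^m with union W. There exists a constant C = C(m,n,p,𝒦) > 0 with the following property. Let U ⊆ ℝ^m be open with W ⊆ U, let a_j : U → ℂ, j = 1,…,n, be (n−1)-times continuously differentiable with all partial derivatives of order n−1 Lipschitz on W, let V be a relatively compact open subset of U whose closure is covered by 𝒦, and let λ : V → ℂ be continuous with λ(x)^n + Σ_{j=1}^n a_j(x) λ(x)^{n-j} = 0 for all x ∈ V. Then there exist functions g_1,…,g_m ∈ L^p(V, ℂ) such that for each i and every smooth compactly supported φ : V → ℝ one has ∫_V λ · ∂_i φ dx = −∫_V g_i φ dx, and (Σ_i ‖g_i‖_{L^p(V)}^p)^{1/p} ≤ C · max_{1≤j≤n} ‖a_j‖_{C^{n-1,1}(W̄)}^{1/j}, where ‖a_j‖_{C^{n-1,1}(W̄)} denotes the supremum over W of all partial derivatives of a_j of order ≤ n−1 plus the maximum of the Lipschitz constants on W of the partial derivatives of order n−1. -/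

import Mathlib

open Set MeasureTheory Real

noncomputable section

/-- The union of the open boxes `∏_i (k.1 i, k.2 i)`, `k ∈ 𝒦`. -/
def boxUnion {m : ℕ} (𝒦 : Finset ((Fin m → ℝ) × (Fin m → ℝ))) : Set (Fin m → ℝ) :=
  ⋃ k ∈ 𝒦, univ.pi fun i => Ioo (k.1 i) (k.2 i)

/-- The `C^{n-1,1}(W̄)`-norm of a function whose iterated partial derivatives are given
by `D` (indexed by lists of coordinate directions): the supremum over `W` of all partial
derivatives of order `≤ n-1` plus the maximum of the Lipschitz constants on `W` of the
partial derivatives of order `n-1`. -/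
def CNormMulti {m : ℕ} (n : ℕ) (W : Set (Fin m → ℝ))
    (D : List (Fin m) → (Fin m → ℝ) → ℂ) : ℝ :=
  sSup {r : ℝ | ∃ L : List (Fin m), L.length ≤ n - 1 ∧ ∃ x ∈ W, r = ‖D L x‖} +
  sSup {r : ℝ | ∃ L : List (Fin m), L.length = n - 1 ∧
    ∃ x ∈ W, ∃ y ∈ W, x ≠ y ∧ r = ‖D L x - D L y‖ / dist x y}

/-!
On a line parallel to a coordinate axis the coefficients are curves `a : (0, 1) → ℂⁿ` with Lipschitz
derivatives of order `n - 1`, so it suffices to bound, in `L^p` and uniformly in `a`, the velocity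
of a continuous root of a curve of polynomials; Fubini's theorem and integration by parts on lines
then give the weak derivatives.

*Simple roots.* The bound is proved by induction on the degree `d`. A translation of the variable
makes the polynomial centred (Tschirnhausen). By Taylor interpolation and Rolle's theorem, the
derivative of `|aᵢ|^{1/k}`, where `k` is the degree of homogeneity of the coefficient `aᵢ` in the
roots, is bounded in `L^p` for `p < k / (k - 1)`; hence some `h ≥ 1`, bounded in `L^p`, dominates
the homogeneous speed of all the coefficients. Bisection produces windows whose homogeneous
coefficient size is comparable to `θ ∫ h` over the window, with `θ` large. Rescaled to `(0, 1)`,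
such a window oscillates little and so stays near one nonzero centred polynomial, which has at least
two distinct roots; there the polynomial splits into factors of lower degree. Jensen's inequality
makes the contributions of the windows add up to at most a multiple of `∫ h ^ p`.

*Multiple roots.* Where the root `λ` has multiplicity exactly `k`, it is a simple root of the
`(k - 1)`-st derivative of the polynomial in the unknown. The strata of constant multiplicity are
measurable and finite in number, and `λ` is locally absolutely continuous because it is
continuous and piecewise differentiable with integrable derivative.
-/

open scoped ENNReal NNReal

section ContDiffLipOn

/-- `F 0, F 1, …, F k` are successive derivatives on `s ⊆ ℝ`, all bounded by `M`, and the last one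
is `M`-Lipschitz. The values `F j` for `j > k` are irrelevant. -/
structure LipschitzDerivChain {E : Type*} [NormedAddCommGroup E] [NormedSpace ℝ E] (k : ℕ) (M : ℝ)
    (s : Set ℝ) (F : ℕ → ℝ → E) : Prop where
  hasDerivAt : ∀ j < k, ∀ x ∈ s, HasDerivAt (F j) (F (j + 1) x) x
  norm_le : ∀ j ≤ k, ∀ x ∈ s, ‖F j x‖ ≤ M
  norm_sub_le : ∀ x ∈ s, ∀ y ∈ s, ‖F k x - F k y‖ ≤ M * |x - y|

/-- The class `C^{k,1}(s)` of functions of one real variable, with an explicit bound `M` for all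
derivatives of order `≤ k` and for the Lipschitz constant of the `k`-th derivative. -/
def ContDiffLipOn {E : Type*} [NormedAddCommGroup E] [NormedSpace ℝ E] (k : ℕ) (M : ℝ)
    (s : Set ℝ) (f : ℝ → E) : Prop :=
  ∃ F : ℕ → ℝ → E, F 0 = f ∧ LipschitzDerivChain k M s F

variable {E F G : Type*} [NormedAddCommGroup E] [NormedSpace ℝ E]
  [NormedAddCommGroup F] [NormedSpace ℝ F] [NormedAddCommGroup G] [NormedSpace ℝ G]
  {k : ℕ} {M M' : ℝ} {s : Set ℝ}

lemma LipschitzDerivChain.tail {H : ℕ → ℝ → E} (h : LipschitzDerivChain (k + 1) M s H) :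
    LipschitzDerivChain k M s (fun j => H (j + 1)) :=
  ⟨fun j hj => h.hasDerivAt (j + 1) (by omega), fun j hj => h.norm_le (j + 1) (by omega),
    h.norm_sub_le⟩

lemma norm_sub_le_of_hasDerivAt_of_convex {f f' : ℝ → E} (hs : Convex ℝ s)
    (hd : ∀ x ∈ s, HasDerivAt f (f' x) x) (hb : ∀ x ∈ s, ‖f' x‖ ≤ M) :
    ∀ x ∈ s, ∀ y ∈ s, ‖f x - f y‖ ≤ M * |x - y| := fun x hx y hy => by
  simpa using hs.norm_image_sub_le_of_norm_hasDerivWithin_le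
    (fun x hx => (hd x hx).hasDerivWithinAt) hb hy hx

namespace ContDiffLipOn

lemma norm_le {f : ℝ → E} (h : ContDiffLipOn k M s f) : ∀ x ∈ s, ‖f x‖ ≤ M := by
  obtain ⟨H, rfl, hH⟩ := h
  exact hH.norm_le 0 (by omega)

lemma nonneg {f : ℝ → E} (h : ContDiffLipOn k M s f) (hs : s.Nonempty) : 0 ≤ M :=
  (norm_nonneg _).trans (h.norm_le _ hs.some_mem)

lemma zero_iff {f : ℝ → E} : ContDiffLipOn 0 M s f ↔
    (∀ x ∈ s, ‖f x‖ ≤ M) ∧ ∀ x ∈ s, ∀ y ∈ s, ‖f x - f y‖ ≤ M * |x - y| := by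
  constructor
  · rintro ⟨H, rfl, hH⟩
    exact ⟨hH.norm_le 0 le_rfl, hH.norm_sub_le⟩
  · rintro ⟨h1, h2⟩
    exact ⟨fun _ => f, rfl, by simp, fun _ _ => h1, h2⟩

lemma succ_iff {f : ℝ → E} : ContDiffLipOn (k + 1) M s f ↔ (∀ x ∈ s, ‖f x‖ ≤ M) ∧
    ∃ f' : ℝ → E, (∀ x ∈ s, HasDerivAt f (f' x) x) ∧ ContDiffLipOn k M s f' := by
  constructor
  · rintro ⟨H, rfl, hH⟩
    exact ⟨hH.norm_le 0 (by omega), H 1, hH.hasDerivAt 0 (by omega), _, rfl, hH.tail⟩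
  · rintro ⟨hf, f', hd, H, rfl, hH⟩
    refine ⟨fun | 0 => f | j + 1 => H j, rfl, ?_, ?_, hH.norm_sub_le⟩
    · rintro (_ | j) hj
      exacts [hd, hH.hasDerivAt j (by omega)]
    · rintro (_ | j) hj
      exacts [hf, hH.norm_le j (by omega)]

lemma of_succ (hs : Convex ℝ s) {f : ℝ → E} (h : ContDiffLipOn (k + 1) M s f) :
    ContDiffLipOn k M s f := by
  obtain ⟨H, rfl, hH⟩ := h
  exact ⟨H, rfl, fun j hj => hH.hasDerivAt j (by omega), fun j hj => hH.norm_le j (by omega),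
    norm_sub_le_of_hasDerivAt_of_convex hs (hH.hasDerivAt k (by omega)) (hH.norm_le (k + 1) le_rfl)⟩

lemma mono {f : ℝ → E} (h : ContDiffLipOn k M s f) (hM : M ≤ M') : ContDiffLipOn k M' s f := by
  obtain ⟨H, rfl, hH⟩ := h
  exact ⟨H, rfl, hH.hasDerivAt, fun j hj x hx => (hH.norm_le j hj x hx).trans hM,
    fun x hx y hy => (hH.norm_sub_le x hx y hy).trans (by gcongr)⟩

lemma congr (hs : IsOpen s) {f g : ℝ → E} (h : ContDiffLipOn k M s f) (hfg : EqOn f g s) :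
    ContDiffLipOn k M s g := by
  cases k with
  | zero =>
    rw [zero_iff] at *
    refine ⟨fun x hx => hfg hx ▸ h.1 x hx, fun x hx y hy => ?_⟩
    rw [← hfg hx, ← hfg hy]
    exact h.2 x hx y hy
  | succ k =>
    rw [succ_iff] at *
    obtain ⟨hb, f', hd, hf'⟩ := h
    refine ⟨fun x hx => hfg hx ▸ hb x hx, f', fun x hx => ?_, hf'⟩
    refine (hd x hx).congr_of_eventuallyEq ?_
    filter_upwards [hs.mem_nhds hx] with y hy using (hfg hy).symm

lemma of_hasDerivAt (hs : IsOpen s) {f f' : ℝ → E} (h : ContDiffLipOn (k + 1) M s f)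
    (hf' : ∀ x ∈ s, HasDerivAt f (f' x) x) : ContDiffLipOn k M s f' :=
  let ⟨_, _, hg, hgL⟩ := succ_iff.1 h
  hgL.congr hs fun x hx => (hg x hx).unique (hf' x hx)

lemma continuousOn {f : ℝ → E} (h : ContDiffLipOn k M s f) : ContinuousOn f s := by
  cases k with
  | zero =>
    refine (LipschitzOnWith.of_dist_le' (K := M) fun x hx y hy => ?_).continuousOn
    rw [dist_eq_norm, Real.dist_eq]
    exact (zero_iff.1 h).2 x hx y hy
  | succ k =>
    obtain ⟨_, f', hd, _⟩ := succ_iff.1 h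
    exact fun x hx => (hd x hx).continuousAt.continuousWithinAt

lemma add {f g : ℝ → E} (hf : ContDiffLipOn k M s f) (hg : ContDiffLipOn k M' s g) :
    ContDiffLipOn k (M + M') s (fun x => f x + g x) := by
  obtain ⟨H, rfl, hH⟩ := hf
  obtain ⟨H', rfl, hH'⟩ := hg
  refine ⟨fun j x => H j x + H' j x, rfl,
    fun j hj x hx => (hH.hasDerivAt j hj x hx).add (hH'.hasDerivAt j hj x hx),
    fun j hj x hx => norm_add_le_of_le (hH.norm_le j hj x hx) (hH'.norm_le j hj x hx),
    fun x hx y hy => ?_⟩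
  rw [add_sub_add_comm, add_mul]
  exact norm_add_le_of_le (hH.norm_sub_le x hx y hy) (hH'.norm_sub_le x hx y hy)

lemma clm_apply {f : ℝ → E} (L : E →L[ℝ] F) (h : ContDiffLipOn k M s f) :
    ContDiffLipOn k (‖L‖ * M) s (fun x => L (f x)) := by
  obtain ⟨H, rfl, hH⟩ := h
  refine ⟨fun j x => L (H j x), rfl,
    fun j hj x hx => L.hasFDerivAt.comp_hasDerivAt x (hH.hasDerivAt j hj x hx),
    fun j hj x hx => L.le_opNorm_of_le (hH.norm_le j hj x hx), fun x hx y hy => ?_⟩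
  rw [← map_sub, mul_assoc]
  exact L.le_opNorm_of_le (hH.norm_sub_le x hx y hy)

lemma pi {ι : Type*} [Fintype ι] (hM : 0 ≤ M) {f : ℝ → ι → E}
    (h : ∀ i, ContDiffLipOn k M s (fun x => f x i)) : ContDiffLipOn k M s f := by
  choose H hH0 hH using h
  refine ⟨fun j x i => H i j x, ?_, fun j hj x hx => hasDerivAt_pi.2 fun i =>
      (hH i).hasDerivAt j hj x hx, fun j hj x hx => ?_, fun x hx y hy => ?_⟩
  · ext x i
    exact congrFun (hH0 i) x
  · exact (pi_norm_le_iff_of_nonneg hM).2 fun i => (hH i).norm_le j hj x hx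
  · exact (pi_norm_le_iff_of_nonneg (by positivity)).2 fun i => (hH i).norm_sub_le x hx y hy

lemma bilinear (hs : Convex ℝ s) (B : E →L[ℝ] F →L[ℝ] G) (hM : 0 ≤ M) (hM' : 0 ≤ M')
    {f : ℝ → E} {g : ℝ → F} (hf : ContDiffLipOn k M s f) (hg : ContDiffLipOn k M' s g) :
    ContDiffLipOn k (2 ^ (k + 1) * (‖B‖ * M * M')) s (fun x => B (f x) (g x)) := by
  have hnorm : ∀ {a b : ℝ} {u : E} {v : F}, 0 ≤ a → ‖u‖ ≤ a → ‖v‖ ≤ b →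
      ‖B u v‖ ≤ ‖B‖ * a * b := fun _ hu hv => (B.le_opNorm₂ _ _).trans (by gcongr)
  have hpos : 0 ≤ ‖B‖ * M * M' := by positivity
  have hbound : ∀ x ∈ s, ‖B (f x) (g x)‖ ≤ 2 ^ (k + 1) * (‖B‖ * M * M') := fun x hx =>
    (hnorm hM (hf.norm_le x hx) (hg.norm_le x hx)).trans
      (le_mul_of_one_le_left hpos (one_le_pow₀ one_le_two))
  induction k generalizing f g with
  | zero =>
    refine zero_iff.2 ⟨hbound, fun x hx y hy => ?_⟩
    have hsub : B (f x) (g x) - B (f y) (g y) = B (f x - f y) (g x) + B (f y) (g x - g y) := by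
      simp
    have h1 := hnorm (by positivity) ((zero_iff.1 hf).2 x hx y hy) (hg.norm_le x hx)
    have h2 := hnorm hM (hf.norm_le y hy) ((zero_iff.1 hg).2 x hx y hy)
    rw [hsub]
    exact (norm_add_le_of_le h1 h2).trans (le_of_eq (by ring))
  | succ k ih =>
    obtain ⟨-, f', hfd, hf'⟩ := succ_iff.1 hf
    obtain ⟨-, g', hgd, hg'⟩ := succ_iff.1 hg
    have hk : ∀ {u : ℝ → E} {v : ℝ → F}, ContDiffLipOn k M s u → ContDiffLipOn k M' s v →
        ContDiffLipOn k (2 ^ (k + 1) * (‖B‖ * M * M')) s (fun x => B (u x) (v x)) :=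
      fun hu hv => ih hu hv fun x hx => (hnorm hM (hu.norm_le x hx) (hv.norm_le x hx)).trans
        (le_mul_of_one_le_left hpos (one_le_pow₀ one_le_two))
    refine succ_iff.2 ⟨hbound, fun x => B (f x) (g' x) + B (f' x) (g x),
      fun x hx => B.hasDerivAt_of_bilinear (fun _ => hfd x hx) (fun _ => hgd x hx), ?_⟩
    convert (hk (hf.of_succ hs) hg').add (hk hf' (hg.of_succ hs)) using 1
    ring

end ContDiffLipOn

end ContDiffLipOn

lemma exists_nonneg_bound_of_isCompact {X E : Type*} [TopologicalSpace X]
    [SeminormedAddCommGroup E] {K : Set X} (hK : IsCompact K) {f : X → E}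
    (hf : ContinuousOn f K) : ∃ C, 0 ≤ C ∧ ∀ x ∈ K, ‖f x‖ ≤ C := by
  obtain ⟨C, hC⟩ := hK.exists_bound_of_continuousOn hf
  exact ⟨max C 0, le_max_right _ _, fun x hx => (hC x hx).trans (le_max_left _ _)⟩

section Comp

universe u

variable {E F : Type u} [NormedAddCommGroup E] [NormedSpace ℝ E]
  [NormedAddCommGroup F] [NormedSpace ℝ F]

lemma ContDiffLipOn.exists_comp {s : Set ℝ} (hs : Convex ℝ s) {U K : Set E} (hU : IsOpen U)
    (hK : IsCompact K) (hKc : Convex ℝ K) (hKU : K ⊆ U) {k : ℕ} {Ψ : E → F}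
    (hΨ : ContDiffOn ℝ (k + 1 : ℕ) Ψ U) {M : ℝ} (hM : 0 ≤ M) :
    ∃ C, 0 ≤ C ∧ ∀ f : ℝ → E, ContDiffLipOn k M s f → MapsTo f s K →
      ContDiffLipOn k C s (fun x => Ψ (f x)) := by
  induction k generalizing F with
  | zero =>
    obtain ⟨C₁, hC₁, hΨC₁⟩ := exists_nonneg_bound_of_isCompact hK (hΨ.continuousOn.mono hKU)
    obtain ⟨C₂, -, hΨC₂⟩ := exists_nonneg_bound_of_isCompact hK
      ((hΨ.continuousOn_fderiv_of_isOpen hU (by simp)).mono hKU)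
    refine ⟨max C₁ (C₂ * M), hC₁.trans (le_max_left _ _), fun f hf hfK =>
      zero_iff.2 ⟨fun x hx => (hΨC₁ _ (hfK hx)).trans (le_max_left _ _), fun x hx y hy => ?_⟩⟩
    have hC₂ : 0 ≤ C₂ := (norm_nonneg _).trans (hΨC₂ _ (hfK hx))
    have hdiff : ∀ z ∈ K, DifferentiableAt ℝ Ψ z := fun z hz =>
      (hΨ.differentiableOn (by simp)).differentiableAt (hU.mem_nhds (hKU hz))
    calc ‖Ψ (f x) - Ψ (f y)‖ ≤ C₂ * ‖f x - f y‖ :=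
          hKc.norm_image_sub_le_of_norm_fderiv_le hdiff hΨC₂ (hfK hy) (hfK hx)
      _ ≤ C₂ * (M * |x - y|) := by gcongr; exact (zero_iff.1 hf).2 x hx y hy
      _ = C₂ * M * |x - y| := by ring
      _ ≤ max C₁ (C₂ * M) * |x - y| := by gcongr; exact le_max_right _ _
  | succ k ih =>
    have hΨ' : ContDiffOn ℝ (k + 1 : ℕ) (fderiv ℝ Ψ) U := hΨ.fderiv_of_isOpen hU (by norm_cast)
    obtain ⟨C₁, hC₁, hΨC₁⟩ := exists_nonneg_bound_of_isCompact hK (hΨ.continuousOn.mono hKU)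
    obtain ⟨C₂, hC₂, hcomp⟩ := ih hΨ'
    refine ⟨max C₁ (2 ^ (k + 1) * (‖ContinuousLinearMap.id ℝ (E →L[ℝ] F)‖ * C₂ * M)),
      hC₁.trans (le_max_left _ _), fun f hf hfK => ?_⟩
    obtain ⟨-, f', hfd, hf'⟩ := succ_iff.1 hf
    refine succ_iff.2 ⟨fun x hx => (hΨC₁ _ (hfK hx)).trans (le_max_left _ _),
      fun x => fderiv ℝ Ψ (f x) (f' x), fun x hx => ?_, ?_⟩
    · exact ((hΨ.differentiableOn (by simp)).differentiableAt
        (hU.mem_nhds (hKU (hfK hx)))).hasFDerivAt.comp_hasDerivAt x (hfd x hx)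
    · exact (bilinear hs (ContinuousLinearMap.id ℝ (E →L[ℝ] F)) hC₂ hM
        (hcomp f (hf.of_succ hs) hfK) hf').mono (le_max_right _ _)

end Comp

section Landau

lemma lipschitzConst_nonneg {E : Type*} [SeminormedAddCommGroup E] {K : ℝ} {f : ℝ → E}
    (hK : ∀ x ∈ Ioo (0 : ℝ) 1, ∀ y ∈ Ioo (0 : ℝ) 1, ‖f x - f y‖ ≤ K * |x - y|) : 0 ≤ K := by
  have h := (norm_nonneg _).trans
    (hK (1 / 2) (by constructor <;> norm_num) (1 / 4) (by constructor <;> norm_num))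
  norm_num at h
  exact h

lemma exists_mem_Ioo_abs_sub_eq {h x : ℝ} (h0 : 0 < h) (h1 : h < 1 / 2) (hx : x ∈ Ioo (0 : ℝ) 1) :
    ∃ y ∈ Ioo (0 : ℝ) 1, |y - x| = h := by
  by_cases hx' : x < 1 / 2
  · exact ⟨x + h, ⟨by linarith [hx.1], by linarith⟩, by simp [abs_of_pos h0]⟩
  · exact ⟨x - h, ⟨by linarith [hx.1], by linarith [hx.2]⟩, by simp [abs_of_pos h0]⟩

variable {E : Type*} [NormedAddCommGroup E] [NormedSpace ℝ E] {A K : ℝ}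

lemma norm_sub_sub_smul_le_of_convex {s : Set ℝ} (hs : Convex ℝ s) {f f' : ℝ → E} (hK0 : 0 ≤ K)
    (hd : ∀ x ∈ s, HasDerivAt f (f' x) x)
    (hK : ∀ x ∈ s, ∀ y ∈ s, ‖f' x - f' y‖ ≤ K * |x - y|) {x y : ℝ} (hx : x ∈ s) (hy : y ∈ s) :
    ‖f y - f x - (y - x) • f' x‖ ≤ K * |y - x| ^ 2 := by
  have hsub : uIcc x y ⊆ s := hs.ordConnected.uIcc_subset hx hy
  have hmean := (convex_uIcc x y).norm_image_sub_le_of_norm_hasDerivWithin_le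
    (f := fun t => f t - t • f' x) (f' := fun t => f' t - f' x) (C := K * |y - x|)
    (fun t ht => by
      simpa using ((hd t (hsub ht)).fun_sub
        ((hasDerivAt_id t).smul_const (f' x))).hasDerivWithinAt)
    (fun t ht => (hK t (hsub ht) x hx).trans
      (mul_le_mul_of_nonneg_left (abs_sub_left_of_mem_uIcc ht) hK0))
    left_mem_uIcc right_mem_uIcc
  calc ‖f y - f x - (y - x) • f' x‖ = ‖f y - y • f' x - (f x - x • f' x)‖ := by
        rw [sub_smul]; congr 1; abel
    _ ≤ K * |y - x| * ‖y - x‖ := hmean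
    _ = K * |y - x| ^ 2 := by rw [Real.norm_eq_abs]; ring

lemma norm_deriv_le_of_norm_le_of_lipschitz {f f' : ℝ → E} {h : ℝ} (h0 : 0 < h) (h1 : h < 1 / 2)
    (hd : ∀ x ∈ Ioo (0 : ℝ) 1, HasDerivAt f (f' x) x) (hA : ∀ x ∈ Ioo (0 : ℝ) 1, ‖f x‖ ≤ A)
    (hK : ∀ x ∈ Ioo (0 : ℝ) 1, ∀ y ∈ Ioo (0 : ℝ) 1, ‖f' x - f' y‖ ≤ K * |x - y|) :
    ∀ x ∈ Ioo (0 : ℝ) 1, ‖f' x‖ ≤ 2 * A / h + h * K := by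
  intro x hx
  obtain ⟨y, hy, hxy⟩ := exists_mem_Ioo_abs_sub_eq h0 h1 hx
  have htaylor :=
    norm_sub_sub_smul_le_of_convex (convex_Ioo 0 1) (lipschitzConst_nonneg hK) hd hK hx hy
  have hnorm : ‖(y - x) • f' x‖ = h * ‖f' x‖ := by rw [norm_smul, Real.norm_eq_abs, hxy]
  have hsub : ‖f y - f x‖ ≤ A + A := norm_sub_le_of_le (hA y hy) (hA x hx)
  have htri : h * ‖f' x‖ ≤ ‖f y - f x‖ + ‖f y - f x - (y - x) • f' x‖ :=
    hnorm ▸ norm_le_norm_add_norm_sub _ _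
  rw [hxy] at htaylor
  have hquot : 2 * A / h + h * K = (2 * A + K * h ^ 2) / h := by field_simp
  rw [hquot, le_div_iff₀ h0]
  linarith

lemma norm_deriv_le_of_norm_le_of_lipschitz_mul {f f' : ℝ → E} {C : ℝ} (hC : 1 ≤ C)
    (hd : ∀ x ∈ Ioo (0 : ℝ) 1, HasDerivAt f (f' x) x) (hA : ∀ x ∈ Ioo (0 : ℝ) 1, ‖f x‖ ≤ A)
    (hK : ∀ x ∈ Ioo (0 : ℝ) 1, ∀ y ∈ Ioo (0 : ℝ) 1, ‖f' x - f' y‖ ≤ C * K * |x - y|) :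
    ∀ x ∈ Ioo (0 : ℝ) 1, ‖f' x‖ ≤ 8 * C * A + K / 4 := by
  have hconst : 2 * A / (1 / (4 * C)) + 1 / (4 * C) * (C * K) = 8 * C * A + K / 4 := by
    field_simp
    ring
  rw [← hconst]
  exact norm_deriv_le_of_norm_le_of_lipschitz (by positivity)
    (by rw [div_lt_div_iff₀ (by positivity) (by norm_num)]; linarith) hd hA hK

lemma le_two_mul_of_bound_self_improves {α : Type*} {s : Set α} {g : α → ℝ} {a M : ℝ}
    (hM : ∀ x ∈ s, g x ≤ M) (h : ∀ B, (∀ x ∈ s, g x ≤ B) → ∀ x ∈ s, g x ≤ a + B / 2) :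
    ∀ x ∈ s, g x ≤ 2 * a := by
  intro x hx
  have hbdd : BddAbove (g '' s) := ⟨M, forall_mem_image.2 hM⟩
  have hle : ∀ y ∈ s, g y ≤ sSup (g '' s) := fun y hy => le_csSup hbdd (mem_image_of_mem g hy)
  have hsup : sSup (g '' s) ≤ a + sSup (g '' s) / 2 :=
    csSup_le ⟨_, mem_image_of_mem g hx⟩ (forall_mem_image.2 (h _ hle))
  linarith [hle x hx]

lemma LipschitzDerivChain.exists_norm_le (k : ℕ) : ∃ C : ℝ, 1 ≤ C ∧
    ∀ (F : ℕ → ℝ → E) (M A K : ℝ), LipschitzDerivChain k M (Ioo 0 1) F →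
    (∀ x ∈ Ioo (0 : ℝ) 1, ‖F 0 x‖ ≤ A) →
    (∀ x ∈ Ioo (0 : ℝ) 1, ∀ y ∈ Ioo (0 : ℝ) 1, ‖F k x - F k y‖ ≤ K * |x - y|) →
    ∀ j ≤ k, ∀ x ∈ Ioo (0 : ℝ) 1, ‖F j x‖ ≤ C * (A + K) := by
  induction k with
  | zero =>
    refine ⟨1, le_rfl, fun F M A K _ hA hK j hj x hx => ?_⟩
    obtain rfl : j = 0 := by omega
    linarith [hA x hx, lipschitzConst_nonneg hK]
  | succ k ih =>
    obtain ⟨C, hC1, hC⟩ := ih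
    refine ⟨C * (16 * C + 2), by nlinarith, fun F M A K hF hA hK j hj x hx => ?_⟩
    have hK0 := lipschitzConst_nonneg hK
    have hA0 : 0 ≤ A := (norm_nonneg _).trans (hA x hx)
    have htail : ∀ B, (∀ x ∈ Ioo (0 : ℝ) 1, ‖F 1 x‖ ≤ B) → ∀ j ≤ k, ∀ x ∈ Ioo (0 : ℝ) 1,
        ‖F (j + 1) x‖ ≤ C * (B + K) := fun B hB => hC _ M B K hF.tail hB hK
    -- The inductive hypothesis turns a bound `B` for `F 1` into a Lipschitz constant for `F 1`,
    -- and the two-term inequality then improves `B`.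
    have himprove : ∀ B, (∀ x ∈ Ioo (0 : ℝ) 1, ‖F 1 x‖ ≤ B) →
        ∀ x ∈ Ioo (0 : ℝ) 1, ‖F 1 x‖ ≤ 8 * C * A + K / 4 + B / 2 := by
      intro B hB x hx
      have hB0 : 0 ≤ B := (norm_nonneg _).trans (hB x hx)
      have hlip : ∀ x ∈ Ioo (0 : ℝ) 1, ∀ y ∈ Ioo (0 : ℝ) 1,
          ‖F 1 x - F 1 y‖ ≤ (C * (B + K)) * |x - y| := by
        cases k with
        | zero => exact fun x hx y hy => (hK x hx y hy).trans (by gcongr; nlinarith)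
        | succ k =>
          exact norm_sub_le_of_hasDerivAt_of_convex (convex_Ioo 0 1) (hF.hasDerivAt 1 (by omega))
            (htail B hB 1 (by omega))
      linarith [norm_deriv_le_of_norm_le_of_lipschitz_mul hC1 (hF.hasDerivAt 0 (by omega)) hA
        hlip x hx]
    have hF1 := le_two_mul_of_bound_self_improves (hF.norm_le 1 (by omega)) himprove
    rcases j with _ | j
    · have : 1 ≤ C * (16 * C + 2) := by nlinarith
      nlinarith [hA x hx]
    · refine (htail _ hF1 j (by omega) x hx).trans ?_
      rw [mul_assoc C]
      have hC0 : 0 ≤ C := by linarith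
      refine mul_le_mul_of_nonneg_left ?_ hC0
      nlinarith [mul_nonneg hK0 hC0]

end Landau

section Rolle

variable {a b : ℝ}

lemma le_encard_deriv_zeros {f f' : ℝ → ℝ} (hd : ∀ x ∈ Ioo a b, HasDerivAt f (f' x) x) {k : ℕ}
    (hk : (k + 1 : ℕ) ≤ {x ∈ Ioo a b | f x = 0}.encard) :
    k ≤ {x ∈ Ioo a b | f' x = 0}.encard := by
  obtain ⟨t, ht, htk⟩ := exists_subset_encard_eq hk
  have htfin : t.Finite := finite_of_encard_eq_coe htk
  lift t to Finset ℝ using htfin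
  rw [encard_coe_eq_coe_finsetCard, Nat.cast_inj] at htk
  set e := t.orderEmbOfFin htk
  have he : ∀ i, e i ∈ Ioo a b ∧ f (e i) = 0 := fun i => ht (t.orderEmbOfFin_mem htk i)
  have hrolle : ∀ i : Fin k, ∃ z ∈ Ioo (e i.castSucc) (e i.succ), f' z = 0 := fun i => by
    have hsub : Icc (e i.castSucc) (e i.succ) ⊆ Ioo a b := fun x hx =>
      ⟨(he _).1.1.trans_le hx.1, hx.2.trans_lt (he _).1.2⟩
    exact exists_hasDerivAt_eq_zero (e.strictMono Fin.castSucc_lt_succ)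
      (fun x hx => (hd x (hsub hx)).continuousAt.continuousWithinAt)
      ((he _).2.trans (he _).2.symm) (fun x hx => hd x (hsub (Ioo_subset_Icc_self hx)))
  choose z hz hz0 using hrolle
  have hmono : StrictMono z := fun i j hij => ((hz i).2.trans_le
    (e.monotone (Fin.succ_le_castSucc_iff.2 hij))).trans (hz j).1
  calc (k : ℕ∞) = (univ : Set (Fin k)).encard := by simp
    _ = (range z).encard := by rw [← image_univ, hmono.injective.encard_image]
    _ ≤ {x ∈ Ioo a b | f' x = 0}.encard := encard_mono <| range_subset_iff.2 fun i =>
        ⟨⟨(he _).1.1.trans (hz i).1, (hz i).2.trans (he _).1.2⟩, hz0 i⟩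

lemma abs_sub_le_of_mem_Ioo {x y : ℝ} (hx : x ∈ Ioo a b) (hy : y ∈ Ioo a b) : |x - y| ≤ b - a :=
  abs_sub_le_of_le_of_le hx.1.le hx.2.le hy.1.le hy.2.le

lemma abs_le_mul_of_lipschitz_of_zeros_nonempty {L : ℝ} (hL0 : 0 ≤ L) {f : ℝ → ℝ}
    (hL : ∀ x ∈ Ioo a b, ∀ y ∈ Ioo a b, |f x - f y| ≤ L * |x - y|)
    (hf : {x ∈ Ioo a b | f x = 0}.Nonempty) : ∀ x ∈ Ioo a b, |f x| ≤ L * (b - a) := by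
  obtain ⟨z, hz, hz0⟩ := hf
  intro x hx
  calc |f x| = |f x - f z| := by rw [hz0, sub_zero]
    _ ≤ L * (b - a) := (hL x hx z hz).trans (by gcongr; exact abs_sub_le_of_mem_Ioo hx hz)

lemma abs_le_of_encard_zeros {Λ : ℝ} (hab : a ≤ b) (hΛ : 0 ≤ Λ) (k : ℕ) (H : ℕ → ℝ → ℝ)
    (hd : ∀ j < k, ∀ x ∈ Ioo a b, HasDerivAt (H j) (H (j + 1) x) x)
    (hL : ∀ x ∈ Ioo a b, ∀ y ∈ Ioo a b, |H k x - H k y| ≤ Λ * |x - y|)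
    (hk : (k + 1 : ℕ) ≤ {x ∈ Ioo a b | H 0 x = 0}.encard) :
    ∀ x ∈ Ioo a b, |H 0 x| ≤ Λ * (b - a) ^ (k + 1) := by
  have hzero : {x ∈ Ioo a b | H 0 x = 0}.Nonempty :=
    encard_pos.1 (lt_of_lt_of_le (by simp) hk)
  induction k generalizing H with
  | zero => simpa using abs_le_mul_of_lipschitz_of_zeros_nonempty hΛ hL hzero
  | succ k ih =>
    have hzeros := le_encard_deriv_zeros (hd 0 (by omega)) hk
    have hderiv := ih (fun j => H (j + 1)) (fun j hj => hd (j + 1) (by omega)) hL hzeros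
      (encard_pos.1 (lt_of_lt_of_le (by simp) hzeros))
    rw [pow_succ, ← mul_assoc]
    exact abs_le_mul_of_lipschitz_of_zeros_nonempty
      (mul_nonneg hΛ (pow_nonneg (sub_nonneg.2 hab) _))
      (norm_sub_le_of_hasDerivAt_of_convex (convex_Ioo a b) (hd 0 (by omega)) hderiv) hzero

end Rolle

section RadicalDerivative

lemma setLIntegral_Ioc_enorm_rpow_neg {γ l : ℝ} (hγ : γ < 1) (hl : 0 ≤ l) :
    ∫⁻ y in Ioc 0 l, ‖y‖ₑ ^ (-γ) = ENNReal.ofReal (l ^ (1 - γ) / (1 - γ)) := by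
  have hint : IntervalIntegrable (fun y : ℝ => y ^ (-γ)) volume 0 l :=
    intervalIntegral.intervalIntegrable_rpow' (by linarith)
  have heval : ∫ y in (0 : ℝ)..l, y ^ (-γ) = l ^ (1 - γ) / (1 - γ) := by
    rw [integral_rpow (Or.inl (by linarith)), Real.zero_rpow (by linarith), sub_zero,
      neg_add_eq_sub]
  rw [← heval, intervalIntegral.integral_of_le hl, ofReal_integral_eq_lintegral_ofReal hint.1]
  · refine setLIntegral_congr_fun measurableSet_Ioc fun y hy => ?_
    simp only [Real.enorm_eq_ofReal hy.1.le]
    exact ENNReal.ofReal_rpow_of_pos hy.1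
  · exact ae_restrict_of_forall_mem measurableSet_Ioc fun y hy => Real.rpow_nonneg hy.1.le _

lemma setLIntegral_Icc_neg_enorm_rpow_neg {γ l : ℝ} (hγ : γ < 1) (hl : 0 ≤ l) :
    ∫⁻ y in Icc (-l) l, ‖y‖ₑ ^ (-γ) = 2 * ENNReal.ofReal (l ^ (1 - γ) / (1 - γ)) := by
  have hneg : ∫⁻ y in Ico (-l) 0, ‖y‖ₑ ^ (-γ) = ∫⁻ y in Ioc 0 l, ‖y‖ₑ ^ (-γ) := by
    rw [← (Measure.measurePreserving_neg volume).setLIntegral_comp_preimage_emb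
      (MeasurableEquiv.neg ℝ).measurableEmbedding]
    simp
  rw [← Ico_union_Icc_eq_Icc (neg_nonpos.2 hl) hl, lintegral_union measurableSet_Icc
    (disjoint_left.2 fun _ hy hy' => hy.2.not_ge hy'.1), hneg,
    ← setLIntegral_congr Ioc_ae_eq_Icc, setLIntegral_Ioc_enorm_rpow_neg hγ hl, two_mul]

lemma setLIntegral_Icc_enorm_rpow_neg_le {γ l : ℝ} (h0 : 0 ≤ γ) (h1 : γ < 1) (hl : 0 ≤ l) (c : ℝ) :
    ∫⁻ y in Icc (c - l) (c + l), ‖y‖ₑ ^ (-γ) ≤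
      ENNReal.ofReal ((2 / (1 - γ) + 2) * l ^ (1 - γ)) := by
  rcases hl.eq_or_lt with rfl | hl'
  · simp
  have hfar : ∫⁻ y in Icc (c - l) (c + l) \ Icc (-l) l, ‖y‖ₑ ^ (-γ) ≤
      ENNReal.ofReal (2 * l ^ (1 - γ)) :=
    calc ∫⁻ y in Icc (c - l) (c + l) \ Icc (-l) l, ‖y‖ₑ ^ (-γ)
        ≤ ∫⁻ _ in Icc (c - l) (c + l) \ Icc (-l) l, ENNReal.ofReal (l ^ (-γ)) := by
          refine setLIntegral_mono' (measurableSet_Icc.diff measurableSet_Icc) fun y hy => ?_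
          have hly : l ≤ |y| := by
            by_contra hcon
            exact hy.2 (abs_le.1 (not_le.1 hcon).le)
          rw [← ENNReal.ofReal_rpow_of_pos hl', Real.enorm_eq_ofReal_abs, ENNReal.rpow_neg,
            ENNReal.rpow_neg]
          gcongr
      _ ≤ ∫⁻ _ in Icc (c - l) (c + l), ENNReal.ofReal (l ^ (-γ)) := lintegral_mono_set sdiff_subset
      _ = ENNReal.ofReal (2 * l ^ (1 - γ)) := by
        rw [setLIntegral_const, Real.volume_Icc, ← ENNReal.ofReal_mul (by positivity),
          sub_eq_neg_add 1 γ, Real.rpow_add hl', Real.rpow_one]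
        congr 1
        ring
  have : 0 < 1 - γ := by linarith
  calc ∫⁻ y in Icc (c - l) (c + l), ‖y‖ₑ ^ (-γ)
      ≤ ∫⁻ y in Icc (-l) l ∪ (Icc (c - l) (c + l) \ Icc (-l) l), ‖y‖ₑ ^ (-γ) :=
        lintegral_mono_set (by rw [union_sdiff_self]; exact subset_union_right)
    _ ≤ 2 * ENNReal.ofReal (l ^ (1 - γ) / (1 - γ)) + ENNReal.ofReal (2 * l ^ (1 - γ)) :=
        (lintegral_union_le _ _ _).trans
          (add_le_add (setLIntegral_Icc_neg_enorm_rpow_neg h1 hl).le hfar)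
    _ = ENNReal.ofReal ((2 / (1 - γ) + 2) * l ^ (1 - γ)) := by
        rw [← ENNReal.ofReal_ofNat 2, ← ENNReal.ofReal_mul (by norm_num),
          ← ENNReal.ofReal_add (by positivity) (by positivity)]
        congr 1
        ring

lemma setLIntegral_Ioo_le_add {μ : Measure ℝ} [NullSingletonClass μ] (f : ℝ → ℝ≥0∞) (a b c : ℝ) :
    ∫⁻ x in Ioo a b, f x ∂μ ≤ ∫⁻ x in Ioo a c, f x ∂μ + ∫⁻ x in Ioo c b, f x ∂μ := by
  have hcover : Ioo a b ⊆ Ioc a c ∪ Ioo c b := fun x hx =>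
    (le_or_gt x c).imp (fun h => ⟨hx.1, h⟩) (fun h => ⟨h, hx.2⟩)
  exact (lintegral_mono_set hcover).trans ((lintegral_union_le _ _ _).trans
    (add_le_add (setLIntegral_congr Ioo_ae_eq_Ioc.symm).le le_rfl))

lemma injOn_of_hasDerivAt_ne_zero {u u' : ℝ → ℝ} {s : Set ℝ} (hs : s.OrdConnected)
    (hd : ∀ x ∈ s, HasDerivAt u (u' x) x) (hz : ∀ x ∈ s, u' x ≠ 0) : InjOn u s := by
  have hlt : ∀ x ∈ s, ∀ y ∈ s, x < y → u x ≠ u y := fun x hx y hy hxy h => by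
    have hsub : Icc x y ⊆ s := hs.out hx hy
    obtain ⟨c, hc, hc0⟩ := exists_hasDerivAt_eq_zero hxy
      (fun t ht => (hd t (hsub ht)).continuousAt.continuousWithinAt) h
      (fun t ht => hd t (hsub (Ioo_subset_Icc_self ht)))
    exact hz c (hsub (Ioo_subset_Icc_self hc)) hc0
  intro x hx y hy h
  rcases lt_trichotomy x y with hxy | hxy | hxy
  exacts [(hlt x hx y hy hxy h).elim, hxy, (hlt y hy x hx hxy h.symm).elim]

variable {u u' : ℝ → ℝ} {a b K p q : ℝ}

lemma setLIntegral_radical_deriv_le_of_deriv_ne_zero (hp : 1 ≤ p) (hq : 0 ≤ q) (hpq : q * p < 1)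
    (hd : ∀ x ∈ Ioo a b, HasDerivAt u (u' x) x) (hK : ∀ x ∈ Ioo a b, |u' x| ≤ K)
    (hz : ∀ x ∈ Ioo a b, u' x ≠ 0) :
    ∫⁻ x in Ioo a b, (‖u' x‖ₑ * ‖u x‖ₑ ^ (-q)) ^ p ≤
      ENNReal.ofReal (K ^ (p - 1) * ((2 / (1 - q * p) + 2) * (K * (b - a)) ^ (1 - q * p))) := by
  rcases le_or_gt b a with hba | hab
  · simp [Ioo_eq_empty (not_lt.2 hba)]
  obtain ⟨x₀, hx₀⟩ := nonempty_Ioo.2 hab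
  have hK0 : 0 ≤ K := (abs_nonneg _).trans (hK x₀ hx₀)
  have himg : u '' Ioo a b ⊆ Icc (u x₀ - K * (b - a)) (u x₀ + K * (b - a)) := by
    rintro _ ⟨x, hx, rfl⟩
    rw [← mem_Icc_iff_abs_le, abs_sub_comm]
    exact (norm_sub_le_of_hasDerivAt_of_convex (convex_Ioo a b) hd hK x hx x₀ hx₀).trans
      (by gcongr; exact abs_sub_le_of_mem_Ioo hx hx₀)
  have hpow : ∀ x ∈ Ioo a b, (‖u' x‖ₑ * ‖u x‖ₑ ^ (-q)) ^ p ≤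
      ENNReal.ofReal (K ^ (p - 1)) * (ENNReal.ofReal |u' x| * ‖u x‖ₑ ^ (-(q * p))) := by
    intro x hx
    rw [ENNReal.mul_rpow_of_nonneg _ _ (by linarith), ← ENNReal.rpow_mul, ← mul_assoc, neg_mul,
      ← Real.enorm_eq_ofReal_abs, ← ENNReal.ofReal_rpow_of_nonneg hK0 (by linarith)]
    gcongr
    calc ‖u' x‖ₑ ^ p = ‖u' x‖ₑ ^ (p - 1) * ‖u' x‖ₑ := by
          conv_rhs => rw [← ENNReal.rpow_one ‖u' x‖ₑ,
            ← ENNReal.rpow_mul, one_mul, ← ENNReal.rpow_add_of_nonneg _ _ (by linarith) zero_le_one,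
            sub_add_cancel]
      _ ≤ ENNReal.ofReal K ^ (p - 1) * ‖u' x‖ₑ := by
          rw [Real.enorm_eq_ofReal_abs]
          gcongr
          exact hK x hx
  calc ∫⁻ x in Ioo a b, (‖u' x‖ₑ * ‖u x‖ₑ ^ (-q)) ^ p
      ≤ ∫⁻ x in Ioo a b, ENNReal.ofReal (K ^ (p - 1)) *
          (ENNReal.ofReal |u' x| * ‖u x‖ₑ ^ (-(q * p))) := setLIntegral_mono' measurableSet_Ioo hpow
    _ = ENNReal.ofReal (K ^ (p - 1)) * ∫⁻ y in u '' Ioo a b, ‖y‖ₑ ^ (-(q * p)) := by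
        rw [lintegral_const_mul' _ _ ENNReal.ofReal_ne_top,
          lintegral_image_eq_lintegral_abs_deriv_mul measurableSet_Ioo
          (fun x hx => (hd x hx).hasDerivWithinAt)
          (injOn_of_hasDerivAt_ne_zero ordConnected_Ioo hd hz)]
    _ ≤ _ := by
        rw [ENNReal.ofReal_mul (by positivity)]
        gcongr
        exact (lintegral_mono_set himg).trans (setLIntegral_Icc_enorm_rpow_neg_le
          (by positivity) hpq (mul_nonneg hK0 (sub_pos.2 hab).le) _)

lemma setLIntegral_Ioo_le_of_encard_le {μ : Measure ℝ} [NullSingletonClass μ] {f : ℝ → ℝ≥0∞}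
    {Z : Set ℝ} {B : ℝ≥0∞} (c : ℕ) (hB : ∀ a' b', a ≤ a' → b' ≤ b → (∀ x ∈ Ioo a' b', x ∉ Z) →
      ∫⁻ x in Ioo a' b', f x ∂μ ≤ B) (hc : (Ioo a b ∩ Z).encard ≤ c) :
    ∫⁻ x in Ioo a b, f x ∂μ ≤ 2 ^ c * B := by
  induction c generalizing a b with
  | zero =>
    have hZ : Ioo a b ∩ Z = ∅ := encard_eq_zero.1 (nonpos_iff_eq_zero.1 hc)
    simpa using hB a b le_rfl le_rfl fun x hx hxZ => notMem_empty x (hZ ▸ ⟨hx, hxZ⟩)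
  | succ c ih =>
    by_cases hZ : ∀ x ∈ Ioo a b, x ∉ Z
    · exact (hB a b le_rfl le_rfl hZ).trans
        (le_mul_of_one_le_left zero_le (one_le_pow₀ one_le_two))
    push Not at hZ
    obtain ⟨z, hz, hzZ⟩ := hZ
    have hcount : ∀ t ⊆ Ioo a b ∩ Z, z ∉ t → t.encard ≤ c := fun t ht hzt => by
      have hle := (encard_mono (insert_subset (show z ∈ Ioo a b ∩ Z from ⟨hz, hzZ⟩) ht)).trans hc
      rw [encard_insert_of_notMem hzt] at hle
      exact (ENat.add_le_add_iff_right ENat.one_ne_top).1 (by exact_mod_cast hle)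
    have hleft := ih (b := z) (fun a' b' ha hb => hB a' b' ha (hb.trans hz.2.le)) <|
      hcount _ (inter_subset_inter_left _ (Ioo_subset_Ioo_right hz.2.le))
        fun h => lt_irrefl z h.1.2
    have hright := ih (a := z) (fun a' b' ha hb => hB a' b' (hz.1.le.trans ha) hb) <|
      hcount _ (inter_subset_inter_left _ (Ioo_subset_Ioo_left hz.1.le))
        fun h => lt_irrefl z h.1.1
    calc ∫⁻ x in Ioo a b, f x ∂μ ≤ 2 ^ c * B + 2 ^ c * B :=
          (setLIntegral_Ioo_le_add f a b z).trans (add_le_add hleft hright)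
      _ = 2 ^ (c + 1) * B := by ring

lemma radical_scaling_le {Λ C l : ℝ} (N : ℕ) (hΛ : 0 ≤ Λ) (hp : 1 ≤ p) (hqN : q * (N + 1) ≤ N)
    (hC : 0 ≤ C) (hl0 : 0 < l) (hl1 : l ≤ 1) :
    (Λ * l ^ N) ^ (p - 1) * (C * (Λ * l ^ N * l) ^ (1 - q * p)) ≤
      Λ ^ (p - 1) * (C * Λ ^ (1 - q * p)) * l := by
  have hexp : (1 : ℝ) ≤ N * (p - 1) + (N + 1) * (1 - q * p) := by nlinarith
  calc (Λ * l ^ N) ^ (p - 1) * (C * (Λ * l ^ N * l) ^ (1 - q * p))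
      = Λ ^ (p - 1) * (C * Λ ^ (1 - q * p)) * l ^ (N * (p - 1) + (N + 1) * (1 - q * p)) := by
        rw [mul_assoc Λ, ← pow_succ, Real.mul_rpow hΛ (by positivity),
          Real.mul_rpow hΛ (by positivity), ← Real.rpow_natCast, ← Real.rpow_natCast,
          ← Real.rpow_mul hl0.le, ← Real.rpow_mul hl0.le, Real.rpow_add hl0, Nat.cast_succ]
        ring
    _ ≤ Λ ^ (p - 1) * (C * Λ ^ (1 - q * p)) * l := by
        gcongr
        simpa using Real.rpow_le_rpow_of_exponent_ge hl0 hl1 hexp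

lemma exists_setLIntegral_radical_deriv_le_of_encard_le (N c : ℕ) {Λ : ℝ} (hΛ : 0 ≤ Λ)
    (hp : 1 ≤ p) (hq : 0 ≤ q) (hqN : q * (N + 1) ≤ N) (hpq : q * p < 1) :
    ∃ C : ℝ≥0∞, C ≠ ⊤ ∧ ∀ (a b : ℝ) (u u' : ℝ → ℝ), a < b → b - a ≤ 1 →
      (∀ x ∈ Ioo a b, HasDerivAt u (u' x) x) → (∀ x ∈ Ioo a b, |u' x| ≤ Λ * (b - a) ^ N) →
      {x ∈ Ioo a b | u' x = 0}.encard ≤ c →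
      ∫⁻ x in Ioo a b, (‖u' x‖ₑ * ‖u x‖ₑ ^ (-q)) ^ p ≤ C * ENNReal.ofReal (b - a) := by
  have : 0 < 1 - q * p := by linarith
  set D := Λ ^ (p - 1) * ((2 / (1 - q * p) + 2) * Λ ^ (1 - q * p))
  refine ⟨2 ^ c * ENNReal.ofReal D, by finiteness, fun a b u u' hab hab1 hd hK hc => ?_⟩
  have hba : 0 < b - a := sub_pos.2 hab
  have hgap : ∀ a' b', a ≤ a' → b' ≤ b → (∀ x ∈ Ioo a' b', x ∉ {x | u' x = 0}) →
      ∫⁻ x in Ioo a' b', (‖u' x‖ₑ * ‖u x‖ₑ ^ (-q)) ^ p ≤ ENNReal.ofReal (D * (b - a)) := by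
    intro a' b' ha hb hz
    rcases le_or_gt b' a' with hba' | hab'
    · simp [Ioo_eq_empty (not_lt.2 hba')]
    have hsub : Ioo a' b' ⊆ Ioo a b := Ioo_subset_Ioo ha hb
    refine (setLIntegral_radical_deriv_le_of_deriv_ne_zero hp hq hpq (fun x hx => hd x (hsub hx))
      (fun x hx => hK x (hsub hx)) hz).trans (ENNReal.ofReal_le_ofReal ?_)
    refine le_trans ?_ (radical_scaling_le N hΛ hp hqN (by positivity) hba hab1)
    have : 0 ≤ b' - a' := (sub_pos.2 hab').le
    gcongr
  rw [mul_assoc, ← ENNReal.ofReal_mul (by positivity)]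
  exact setLIntegral_Ioo_le_of_encard_le c hgap hc

lemma setLIntegral_Ioo_le_of_bisection {μ : Measure ℝ} [NullSingletonClass μ] {f : ℝ → ℝ≥0∞}
    {w : ℝ → ℝ → ℝ≥0∞} {P : ℕ → ℝ → ℝ → Prop}
    (h_zero : ∀ a b, P 0 a b → ∫⁻ x in Ioo a b, f x ∂μ ≤ w a b)
    (h_succ : ∀ k a b, P (k + 1) a b → ∫⁻ x in Ioo a b, f x ∂μ ≤ w a b ∨
      ∃ c, P k a c ∧ P k c b ∧ w a c + w c b ≤ w a b) (k : ℕ) (h : P k a b) :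
    ∫⁻ x in Ioo a b, f x ∂μ ≤ w a b := by
  induction k generalizing a b with
  | zero => exact h_zero a b h
  | succ k ih =>
    rcases h_succ k a b h with hle | ⟨c, hac, hcb, hw⟩
    · exact hle
    · exact ((setLIntegral_Ioo_le_add f a b c).trans (add_le_add (ih hac) (ih hcb))).trans hw

lemma lintegral_le_of_forall_setLIntegral_lt_le {α : Type*} [MeasurableSpace α] {μ : Measure α}
    {f : α → ℝ≥0∞} {g : α → ℝ} {C : ℝ≥0∞} (hf : ∀ᵐ x ∂μ, f x ≠ 0 → 0 < g x)
    (h : ∀ δ > 0, ∫⁻ x in {x | δ < g x}, f x ∂μ ≤ C) : ∫⁻ x, f x ∂μ ≤ C := by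
  have hmono : Monotone fun k : ℕ => {x | 1 / ((k : ℝ) + 1) < g x} := fun k l hkl x hx =>
    (Nat.one_div_le_one_div (α := ℝ) hkl).trans_lt (show 1 / ((k : ℝ) + 1) < g x from hx)
  calc ∫⁻ x, f x ∂μ ≤ ∫⁻ x, (⋃ k : ℕ, {x | 1 / ((k : ℝ) + 1) < g x}).indicator f x ∂μ := by
        refine lintegral_mono_ae (hf.mono fun x hx => ?_)
        by_cases hfx : f x = 0
        · simp [hfx]
        · rw [indicator_of_mem]
          exact mem_iUnion.2 (exists_nat_one_div_lt (hx hfx))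
    _ ≤ ∫⁻ x in ⋃ k : ℕ, {x | 1 / ((k : ℝ) + 1) < g x}, f x ∂μ := lintegral_indicator_le _ _
    _ ≤ C := by
        rw [setLIntegral_iUnion_of_directed f hmono.directed_le]
        exact iSup_le fun k => h _ Nat.one_div_pos_of_nat

lemma ContDiffLipOn.encard_zeros_le_or_abs_le {N : ℕ} {M : ℝ} {s : Set ℝ} {v : ℝ → ℝ}
    (hv : ContDiffLipOn N M s v) (hab : a < b) (hs : Ioo a b ⊆ s) :
    {x ∈ Ioo a b | v x = 0}.encard ≤ N ∨ ∀ x ∈ Ioo a b, |v x| ≤ M * (b - a) ^ (N + 1) := by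
  have hM : 0 ≤ M := hv.nonneg ((nonempty_Ioo.2 hab).mono hs)
  obtain ⟨G, rfl, hG⟩ := hv
  refine (le_or_gt _ _).imp_right fun h => ?_
  exact abs_le_of_encard_zeros hab.le hM N G (fun j hj x hx => hG.hasDerivAt j hj x (hs hx))
    (fun x hx y hy => hG.norm_sub_le x (hs hx) y (hs hy)) (Order.add_one_le_of_lt h)

lemma exists_setLIntegral_radical_deriv_lt_le (N : ℕ) {M : ℝ} (hM : 0 ≤ M) (hp : 1 ≤ p)
    (hq : 0 ≤ q) (hqN : q * (N + 2) ≤ N + 1) (hpq : q * p < 1) :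
    ∃ C : ℝ≥0∞, C ≠ ⊤ ∧ ∀ u u' : ℝ → ℝ, (∀ x ∈ Ioo (0 : ℝ) 1, HasDerivAt u (u' x) x) →
      ContDiffLipOn N M (Ioo 0 1) u' → ∀ δ > 0,
      ∫⁻ x in Ioo 0 1, (‖u' x‖ₑ * ‖u x‖ₑ ^ (-q)) ^ p ∂volume.restrict {x | δ < |u' x|} ≤ C := by
  have hΛ : 0 ≤ M * 2 ^ (N + 1) := by positivity
  obtain ⟨C, hC, hgap⟩ := exists_setLIntegral_radical_deriv_le_of_encard_le (N + 1) N hΛ hp hq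
    (by push_cast; linarith) hpq
  refine ⟨C, hC, fun u u' hd hu' δ hδ => ?_⟩
  obtain ⟨k, hk⟩ := pow_unbounded_of_one_lt (M * 2 ^ (N + 1) / δ)
    (one_lt_pow₀ one_lt_two N.succ_ne_zero : (1 : ℝ) < 2 ^ (N + 1))
  rw [div_lt_iff₀ hδ] at hk
  refine (setLIntegral_Ioo_le_of_bisection (w := fun a b => C * ENNReal.ofReal (b - a))
    (P := fun k a b => 0 ≤ a ∧ a < b ∧ b ≤ 1 ∧
      (∀ x ∈ Ioo a b, |u' x| ≤ M * 2 ^ (N + 1) * (b - a) ^ (N + 1)) ∧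
      M * 2 ^ (N + 1) * (b - a) ^ (N + 1) ≤ (2 ^ (N + 1)) ^ k * δ) ?_ ?_ k ?_).trans_eq (by simp)
  · rintro a b ⟨-, -, -, hle, hδle⟩
    have hempty : Ioo a b ∩ {x | δ < |u' x|} = ∅ := eq_empty_of_forall_notMem fun x hx =>
      hx.2.not_ge ((hle x hx.1).trans (by simpa using hδle))
    simp [Measure.restrict_restrict measurableSet_Ioo, hempty]
  · rintro k a b ⟨ha, hab, hb, hle, hδle⟩
    have hsub : Ioo a b ⊆ Ioo 0 1 := Ioo_subset_Ioo ha hb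
    refine (hu'.encard_zeros_le_or_abs_le hab hsub).imp (fun hzeros => ?_) fun hsmall => ?_
    · exact (lintegral_mono' (Measure.restrict_mono subset_rfl Measure.restrict_le_self)
        le_rfl).trans (hgap a b u u' hab (by linarith) (fun x hx => hd x (hsub hx)) hle hzeros)
    have hhalf : M * 2 ^ (N + 1) * ((b - a) / 2) ^ (N + 1) = M * (b - a) ^ (N + 1) := by
      rw [div_pow]
      field_simp
    have hδhalf : M * (b - a) ^ (N + 1) ≤ (2 ^ (N + 1)) ^ k * δ := by
      refine le_of_mul_le_mul_left (le_trans (le_of_eq ?_) (hδle.trans_eq ?_))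
        (by positivity : (0 : ℝ) < 2 ^ (N + 1)) <;> ring
    have hleft : (a + b) / 2 - a = (b - a) / 2 := by ring
    have hright : b - (a + b) / 2 = (b - a) / 2 := by ring
    refine ⟨(a + b) / 2, ⟨ha, by linarith, by linarith, ?_⟩, ⟨by linarith, by linarith, hb, ?_⟩, ?_⟩
    · rw [hleft, hhalf]
      exact ⟨fun x hx => hsmall x ⟨hx.1, by linarith [hx.2]⟩, hδhalf⟩
    · rw [hright, hhalf]
      exact ⟨fun x hx => hsmall x ⟨by linarith [hx.1], hx.2⟩, hδhalf⟩
    · rw [← mul_add, ← ENNReal.ofReal_add (by linarith) (by linarith), hleft, hright, add_halves]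
  · rw [sub_zero, one_pow, mul_one]
    refine ⟨le_rfl, one_pos, le_rfl, fun x hx => (hu'.norm_le x hx).trans ?_, hk.le⟩
    exact le_mul_of_one_le_right hM (one_le_pow₀ one_le_two)

lemma exists_setLIntegral_radical_deriv_le (N : ℕ) {M : ℝ} (hM : 0 ≤ M) (hp : 1 ≤ p)
    (hq : 0 ≤ q) (hqN : q * (N + 2) ≤ N + 1) (hpq : q * p < 1) :
    ∃ C : ℝ≥0∞, C ≠ ⊤ ∧ ∀ u u' : ℝ → ℝ, (∀ x ∈ Ioo (0 : ℝ) 1, HasDerivAt u (u' x) x) →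
      ContDiffLipOn N M (Ioo 0 1) u' →
      ∫⁻ x in Ioo 0 1, (‖u' x‖ₑ * ‖u x‖ₑ ^ (-q)) ^ p ≤ C := by
  obtain ⟨C, hC, h⟩ := exists_setLIntegral_radical_deriv_lt_le N hM hp hq hqN hpq
  refine ⟨C, hC, fun u u' hd hu' => lintegral_le_of_forall_setLIntegral_lt_le
    (g := fun x => |u' x|) (ae_of_all _ fun x hx => ?_) fun δ hδ => ?_⟩
  · by_contra hcon
    simp [abs_nonpos_iff.1 (not_lt.1 hcon), show 0 < p by linarith] at hx
  · rw [← Measure.restrict_comm measurableSet_Ioo]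
    exact h u u' hd hu' δ hδ

end RadicalDerivative

section MonicOfFn

open Polynomial

variable {R : Type*} [CommRing R] [DecidableEq R] {d : ℕ}

/-- The monic polynomial `X ^ d + c_{d-1} X ^ (d-1) + ⋯ + c_0` with prescribed lower order
coefficients; the coefficient vector is indexed by the exponent. -/
def monicOfFn (d : ℕ) (c : Fin d → R) : R[X] :=
  X ^ d + ofFn d c

lemma monicOfFn_monic (c : Fin d → R) : (monicOfFn d c).Monic :=
  monic_X_pow_add (ofFn_degree_lt c)

lemma degree_monicOfFn [Nontrivial R] (c : Fin d → R) : (monicOfFn d c).degree = d := by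
  rw [monicOfFn, degree_add_eq_left_of_degree_lt] <;> rw [degree_X_pow]
  exact ofFn_degree_lt c

lemma natDegree_monicOfFn [Nontrivial R] (c : Fin d → R) : (monicOfFn d c).natDegree = d :=
  natDegree_eq_of_degree_eq_some (degree_monicOfFn c)

lemma coeff_monicOfFn (c : Fin d → R) (i : Fin d) : (monicOfFn d c).coeff i = c i := by
  simp [monicOfFn, coeff_X_pow, i.2.ne]

lemma monicOfFn_injective : Function.Injective (monicOfFn (R := R) d) := fun c c' h => by
  ext i
  rw [← coeff_monicOfFn c, h, coeff_monicOfFn]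

lemma monicOfFn_zero : monicOfFn d (0 : Fin d → R) = X ^ d := by
  simp [monicOfFn]

lemma monicOfFn_coeff {Q : R[X]} (hQ : Q.Monic) (hd : Q.natDegree = d) :
    monicOfFn d (fun i => Q.coeff i) = Q := by
  ext s
  rcases lt_trichotomy s d with hs | rfl | hs
  · exact coeff_monicOfFn _ ⟨s, hs⟩
  · nontriviality R
    have hlead := (monicOfFn_monic fun i : Fin s => Q.coeff i).coeff_natDegree
    rw [natDegree_monicOfFn] at hlead
    rw [hlead, ← hd, hQ.coeff_natDegree]
  · simp [monicOfFn, coeff_X_pow, hs.ne', hs.le, coeff_eq_zero_of_natDegree_lt (hd.trans_lt hs)]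

lemma eval_ofFn (c : Fin d → R) (z : R) : eval z (ofFn d c) = ∑ i, c i * z ^ (i : ℕ) := by
  simp [ofFn_eq_sum_monomial, eval_finsetSum]

lemma eval_monicOfFn (c : Fin d → R) (z : R) :
    eval z (monicOfFn d c) = z ^ d + ∑ i, c i * z ^ (i : ℕ) := by
  rw [monicOfFn, eval_add, eval_pow, eval_X, eval_ofFn]

/-- The map sending the coefficient vectors of two monic polynomials to the coefficient vector of
their product. -/
def mulCoeffs (k e : ℕ) (x : (Fin k → R) × (Fin e → R)) : Fin (k + e) → R :=
  fun i => (monicOfFn k x.1 * monicOfFn e x.2).coeff i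

lemma monicOfFn_mulCoeffs (k e : ℕ) (x : (Fin k → R) × (Fin e → R)) :
    monicOfFn (k + e) (mulCoeffs k e x) = monicOfFn k x.1 * monicOfFn e x.2 := by
  nontriviality R
  exact monicOfFn_coeff ((monicOfFn_monic _).mul (monicOfFn_monic _)) <| by
    rw [(monicOfFn_monic _).natDegree_mul (monicOfFn_monic _), natDegree_monicOfFn,
      natDegree_monicOfFn]

lemma eq_zero_of_mul_add_mul_eq_zero [IsDomain R] {k e : ℕ} {x y : (Fin k → R) × (Fin e → R)}
    (hx : IsCoprime (monicOfFn k x.1) (monicOfFn e x.2))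
    (h : ofFn k y.1 * monicOfFn e x.2 + monicOfFn k x.1 * ofFn e y.2 = 0) : y = 0 := by
  have hdvd₁ : monicOfFn k x.1 ∣ ofFn k y.1 :=
    hx.dvd_of_dvd_mul_right ⟨-ofFn e y.2, by linear_combination h⟩
  have hdvd₂ : monicOfFn e x.2 ∣ ofFn e y.2 :=
    hx.symm.dvd_of_dvd_mul_left ⟨-ofFn k y.1, by linear_combination h⟩
  have hzero₁ := eq_zero_of_dvd_of_degree_lt hdvd₁ (by
    rw [degree_monicOfFn]; exact ofFn_degree_lt _)
  have hzero₂ := eq_zero_of_dvd_of_degree_lt hdvd₂ (by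
    rw [degree_monicOfFn]; exact ofFn_degree_lt _)
  exact Prod.ext (injective_ofFn k (by simpa using hzero₁))
    (injective_ofFn e (by simpa using hzero₂))

end MonicOfFn

section LocalFactorization

open Polynomial

variable {𝕜 : Type*} [NontriviallyNormedField 𝕜] [DecidableEq 𝕜] {k e d : ℕ}

lemma contDiff_coeff_monicOfFn (s : ℕ) {n : WithTop ℕ∞} :
    ContDiff 𝕜 n fun c : Fin d → 𝕜 => (monicOfFn d c).coeff s := by
  rcases lt_or_ge s d with hs | hs
  · simpa only [← coeff_monicOfFn _ ⟨s, hs⟩] using contDiff_apply 𝕜 𝕜 (⟨s, hs⟩ : Fin d)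
  · simpa only [monicOfFn, coeff_add, ofFn_coeff_eq_zero_of_ge _ hs] using contDiff_const

lemma contDiff_mulCoeffs {n : WithTop ℕ∞} : ContDiff 𝕜 n (mulCoeffs (R := 𝕜) k e) := by
  refine contDiff_pi.2 fun i => ?_
  simp only [mulCoeffs, coeff_mul]
  exact ContDiff.sum fun s _ => ((contDiff_coeff_monicOfFn s.1).comp contDiff_fst).mul
    ((contDiff_coeff_monicOfFn s.2).comp contDiff_snd)

lemma fderiv_mulCoeffs_apply (x y : (Fin k → 𝕜) × (Fin e → 𝕜)) (i : Fin (k + e)) :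
    fderiv 𝕜 (mulCoeffs k e) x y i =
      (ofFn k y.1 * monicOfFn e x.2 + monicOfFn k x.1 * ofFn e y.2).coeff i := by
  have hline : HasLineDerivAt 𝕜 (mulCoeffs k e) (fderiv 𝕜 (mulCoeffs k e) x y) x y :=
    ((contDiff_mulCoeffs (n := 1)).differentiable (by simp) x).hasFDerivAt.hasLineDerivAt y
  refine (hasDerivAt_pi.1 hline i).unique ?_
  have hquad : ∀ t : 𝕜, mulCoeffs k e (x + t • y) i = (monicOfFn k x.1 * monicOfFn e x.2).coeff i +
      t * (ofFn k y.1 * monicOfFn e x.2 + monicOfFn k x.1 * ofFn e y.2).coeff i +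
      t ^ 2 * (ofFn k y.1 * ofFn e y.2).coeff i := by
    intro t
    simp only [mulCoeffs, monicOfFn, ← coeff_C_mul, ← coeff_add, Prod.fst_add, Prod.snd_add,
      Prod.smul_fst, Prod.smul_snd, map_add, map_smul, smul_eq_C_mul, C_pow]
    congr 1
    ring
  simp only [hquad]
  simpa using (((hasDerivAt_id (0 : 𝕜)).mul_const _).const_add _).fun_add
    (((hasDerivAt_id (0 : 𝕜)).pow 2).mul_const _)

lemma fderiv_mulCoeffs_injective {x : (Fin k → 𝕜) × (Fin e → 𝕜)}
    (hx : IsCoprime (monicOfFn k x.1) (monicOfFn e x.2)) :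
    Function.Injective (fderiv 𝕜 (mulCoeffs k e) x) := by
  refine (injective_iff_map_eq_zero _).2 fun y hy => eq_zero_of_mul_add_mul_eq_zero hx ?_
  have hdeg : (ofFn k y.1 * monicOfFn e x.2 + monicOfFn k x.1 * ofFn e y.2).degree <
      ((k + e : ℕ) : WithBot ℕ) := by
    refine (degree_add_le _ _).trans_lt (max_lt ?_ ?_)
    · rw [degree_mul, degree_monicOfFn, Nat.cast_add]
      exact WithBot.add_lt_add_right (WithBot.natCast_ne_bot e) (ofFn_degree_lt _)
    · rw [degree_mul, degree_monicOfFn, Nat.cast_add]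
      exact WithBot.add_lt_add_left (WithBot.natCast_ne_bot k) (ofFn_degree_lt _)
  ext s
  rcases lt_or_ge s (k + e) with hs | hs
  · rw [← fderiv_mulCoeffs_apply x y ⟨s, hs⟩, hy, coeff_zero, Pi.zero_apply]
  · rw [coeff_zero]
    exact coeff_eq_zero_of_degree_lt (hdeg.trans_le (by exact_mod_cast hs))

lemma exists_contDiffOn_factorization_of_isCoprime {𝕜 : Type*} [RCLike 𝕜] [DecidableEq 𝕜] (N : ℕ)
    {x : (Fin k → 𝕜) × (Fin e → 𝕜)} (hx : IsCoprime (monicOfFn k x.1) (monicOfFn e x.2)) :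
    ∃ R > 0, ∃ Ψ : (Fin (k + e) → 𝕜) → (Fin k → 𝕜) × (Fin e → 𝕜),
      ContDiffOn 𝕜 N Ψ (Metric.ball (mulCoeffs k e x) R) ∧
      ∀ a ∈ Metric.ball (mulCoeffs k e x) R,
        monicOfFn (k + e) a = monicOfFn k (Ψ a).1 * monicOfFn e (Ψ a).2 := by
  let E := (LinearEquiv.ofInjectiveOfFinrankEq (fderiv 𝕜 (mulCoeffs k e) x).toLinearMap
    (fderiv_mulCoeffs_injective hx) (by simp)).toContinuousLinearEquiv
  have hE : HasFDerivAt (mulCoeffs k e) (E : _ →L[𝕜] _) x :=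
    ((contDiff_mulCoeffs (n := 1)).differentiable (by simp) x).hasFDerivAt
  have hsmooth : ContDiffAt 𝕜 (N + 1 : ℕ) (mulCoeffs k e) x := contDiff_mulCoeffs.contDiffAt
  have hN : ((N + 1 : ℕ) : WithTop ℕ∞) ≠ 0 := by simp
  obtain ⟨U, hU, hUc⟩ := (hsmooth.to_localInverse hE hN).contDiffOn le_rfl (by simp)
  have hright : ∀ᶠ a in nhds (mulCoeffs k e x),
      mulCoeffs k e (hsmooth.localInverse hE hN a) = a :=
    (hsmooth.hasStrictFDerivAt' hE hN).eventually_right_inverse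
  obtain ⟨R, hR, hRU⟩ := Metric.mem_nhds_iff.1 (Filter.inter_mem hU hright)
  refine ⟨R, hR, hsmooth.localInverse hE hN, ?_, fun a ha => ?_⟩
  · exact (hUc.mono fun a ha => (hRU ha).1).of_le (by exact_mod_cast N.le_succ)
  · rw [← monicOfFn_mulCoeffs, (hRU ha).2]

lemma exists_isCoprime_mul_eq_of_nextCoeff_eq_zero {K : Type*} [Field K] [IsAlgClosed K]
    [CharZero K] {Q : K[X]} (hQ : Q.Monic) (hnext : Q.nextCoeff = 0) (hne : Q ≠ X ^ Q.natDegree) :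
    ∃ A B : K[X], A.Monic ∧ B.Monic ∧ IsCoprime A B ∧ Q = A * B ∧
      1 ≤ A.natDegree ∧ 1 ≤ B.natDegree := by
  have hdeg : Q.degree ≠ 0 := fun h => by
    rw [hQ.degree_le_zero_iff_eq_one.1 h.le] at hne
    simp at hne
  obtain ⟨z, hz⟩ := IsAlgClosed.exists_root Q hdeg
  obtain ⟨B, hB, hBz⟩ := exists_eq_pow_rootMultiplicity_mul_and_not_dvd Q hQ.ne_zero z
  set k := Q.rootMultiplicity z
  have hk : 1 ≤ k := (rootMultiplicity_pos hQ.ne_zero).2 hz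
  have hA : ((X - C z) ^ k).Monic := (monic_X_sub_C z).pow k
  have hBm : B.Monic := hA.of_mul_monic_left (hB ▸ hQ)
  refine ⟨(X - C z) ^ k, B, hA, hBm,
    ((irreducible_X_sub_C z).coprime_iff_not_dvd.2 hBz).pow_left, hB, by simpa using hk, ?_⟩
  by_contra hcon
  rw [hBm.natDegree_eq_zero.1 (by omega), mul_one] at hB
  rw [hB, (monic_X_sub_C z).nextCoeff_pow, nextCoeff_X_sub_C] at hnext
  have hz0 : z = 0 := by simpa [show k ≠ 0 by omega] using hnext
  rw [hz0, C_0, sub_zero] at hB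
  exact hne (by rw [hB, natDegree_X_pow])

lemma exists_contDiffOn_factorization (N : ℕ) {c : Fin (d + 1) → ℂ} (hc : c ≠ 0)
    (hlast : c (Fin.last d) = 0) :
    ∃ k e : ℕ, 1 ≤ k ∧ 1 ≤ e ∧ k + e = d + 1 ∧
      ∃ R > 0, ∃ Ψ : (Fin (d + 1) → ℂ) → (Fin k → ℂ) × (Fin e → ℂ),
        ContDiffOn ℝ N Ψ (Metric.ball c R) ∧ ∀ a ∈ Metric.ball c R,
          monicOfFn (d + 1) a = monicOfFn k (Ψ a).1 * monicOfFn e (Ψ a).2 := by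
  have hnat : (monicOfFn (d + 1) c).natDegree = d + 1 := natDegree_monicOfFn c
  obtain ⟨A, B, hA, hB, hAB, hprod, hk, he⟩ :=
    exists_isCoprime_mul_eq_of_nextCoeff_eq_zero (monicOfFn_monic c)
      (by rw [nextCoeff_of_natDegree_pos (by omega), hnat]
          exact (coeff_monicOfFn c (Fin.last d)).trans hlast)
      (by rw [hnat, ← monicOfFn_zero]; exact monicOfFn_injective.ne hc)
  have hsum : A.natDegree + B.natDegree = d + 1 := by rw [← hA.natDegree_mul hB, ← hprod, hnat]
  refine ⟨A.natDegree, B.natDegree, hk, he, hsum, ?_⟩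
  have hA' := monicOfFn_coeff hA rfl
  have hB' := monicOfFn_coeff hB rfl
  obtain ⟨R, hR, Ψ, hΨ, h⟩ := exists_contDiffOn_factorization_of_isCoprime N
    (x := (fun i => A.coeff i, fun i => B.coeff i)) (by rwa [hA', hB'])
  have hcenter := monicOfFn_mulCoeffs _ _ (fun i : Fin A.natDegree => A.coeff i,
    fun i : Fin B.natDegree => B.coeff i)
  rw [hA', hB', ← hprod] at hcenter
  generalize mulCoeffs A.natDegree B.natDegree (R := ℂ) _ = v at hΨ h hcenter
  generalize A.natDegree + B.natDegree = D at *
  subst hsum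
  rw [monicOfFn_injective hcenter] at hΨ h
  exact ⟨R, hR, Ψ, hΨ.restrict_scalars ℝ, h⟩

end LocalFactorization

section RootVelocity

open Polynomial

variable {d k e : ℕ} {p M : ℝ} {Ω : Set ℝ} {l : ℝ → ℂ}

lemma hasStrictFDerivAt_eval_monicOfFn (c : Fin d → ℂ) (z : ℂ) :
    HasStrictFDerivAt (fun q : (Fin d → ℂ) × ℂ => eval q.2 (monicOfFn d q.1))
      ((leval z ∘ₗ ofFn d).toContinuousLinearMap.coprod
        (ContinuousLinearMap.toSpanSingleton ℂ (eval z (derivative (monicOfFn d c))))) (c, z) := by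
  have hsnd := hasStrictFDerivAt_snd (𝕜 := ℂ) (p := (c, z))
  have hcoord (i : Fin d) := (hasStrictFDerivAt_pi'.1
    (hasStrictFDerivAt_fst (𝕜 := ℂ) (p := (c, z))) i)
  simp only [eval_monicOfFn]
  refine ((HasStrictFDerivAt.pow hsnd d).fun_add <| HasStrictFDerivAt.fun_sum
    fun i (_ : i ∈ Finset.univ) => (hcoord i).fun_mul (HasStrictFDerivAt.pow hsnd i)
    ).congr_fderiv ?_
  ext i
  · simp [eval_ofFn, mul_comm]
  · simp [monicOfFn, ofFn_eq_sum_monomial, derivative_X_pow, derivative_monomial, eval_finsetSum,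
      mul_assoc]

lemma hasDerivWithinAt_eval_monicOfFn {s : Set ℝ} {t : ℝ} {a : ℝ → Fin d → ℂ} {a' : Fin d → ℂ}
    {z : ℝ → ℂ} {z' : ℂ} (ha : HasDerivWithinAt a a' s t) (hz : HasDerivWithinAt z z' s t) :
    HasDerivWithinAt (fun s => eval (z s) (monicOfFn d (a s)))
      (eval (z t) (ofFn d a') + eval (z t) (derivative (monicOfFn d (a t))) * z') s t := by
  have hF := (hasStrictFDerivAt_eval_monicOfFn (a t) (z t)).hasFDerivAt.restrictScalars ℝ
  exact (HasFDerivAt.comp_hasDerivWithinAt (f := fun s => (a s, z s)) t hF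
    (ha.prodMk hz)).congr_deriv (by simp [mul_comm])

lemma continuousOn_eval_monicOfFn {X : Type*} [TopologicalSpace X] {s : Set X} {a : X → Fin d → ℂ}
    {l : X → ℂ} (ha : ContinuousOn a s) (hl : ContinuousOn l s) :
    ContinuousOn (fun x => eval (l x) (monicOfFn d (a x))) s := by
  simp only [eval_monicOfFn]
  fun_prop

lemma continuousOn_eval_derivative_monicOfFn {X : Type*} [TopologicalSpace X] {s : Set X}
    {a : X → Fin d → ℂ} {l : X → ℂ} (ha : ContinuousOn a s) (hl : ContinuousOn l s) :
    ContinuousOn (fun x => eval (l x) (derivative (monicOfFn d (a x)))) s := by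
  simp only [monicOfFn, ofFn_eq_sum_monomial, derivative_add, derivative_X_pow, derivative_sum,
    derivative_monomial, eval_add, eval_mul, eval_C, eval_pow, eval_X, eval_finsetSum,
    eval_monomial]
  fun_prop

lemma measurableSet_sep_eq_zero {X : Type*} [TopologicalSpace X] [MeasurableSpace X]
    [OpensMeasurableSpace X] {s : Set X} {f : X → ℂ} (hs : MeasurableSet s)
    (hf : ContinuousOn f s) : MeasurableSet {x ∈ s | f x = 0} := by
  obtain ⟨u, hu, hus⟩ := continuousOn_iff_isClosed.1 hf {0} isClosed_singleton
  have : {x ∈ s | f x = 0} = u ∩ s := by rw [← hus, inter_comm]; rfl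
  exact this ▸ hu.measurableSet.inter hs

/-- The derivative of a differentiable root of the polynomials with coefficient curve `a`, when that
root passes through the simple root `z` of `monicOfFn d (a t)`, as a function of `a = a t`, of
`a' = deriv a t` and of `z` (implicit function theorem). It is `0` where `z` is a multiple root. -/
def rootVelocity (a a' : Fin d → ℂ) (z : ℂ) : ℂ :=
  -(eval z (ofFn d a') / eval z (derivative (monicOfFn d a)))

/-- `l` is a continuous selection, over the measurable set `Ω` of parameters in `(0, 1)`, of simple
roots of the polynomials with coefficient curve `a`. -/
structure IsSimpleRootOn (a : ℝ → Fin d → ℂ) (Ω : Set ℝ) (l : ℝ → ℂ) : Prop where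
  measurableSet : MeasurableSet Ω
  subset : Ω ⊆ Ioo 0 1
  continuousOn : ContinuousOn l Ω
  eval_eq_zero : ∀ t ∈ Ω, eval (l t) (monicOfFn d (a t)) = 0
  eval_derivative_ne_zero : ∀ t ∈ Ω, eval (l t) (derivative (monicOfFn d (a t))) ≠ 0

/-- The largest `p`-energy of the velocity of a simple root of the polynomials with coefficient
curve `a`, whose derivative is `a'`. -/
def rootEnergy (p : ℝ) (a a' : ℝ → Fin d → ℂ) : ℝ≥0∞ :=
  ⨆ (Ω : Set ℝ) (l : ℝ → ℂ) (_ : IsSimpleRootOn a Ω l),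
    ∫⁻ t in Ω, ‖rootVelocity (a t) (a' t) (l t)‖ₑ ^ p

/-- The energies of the simple roots of monic polynomials of degree `d` are bounded in terms of the
`C^{N+1,1}`-norms of the coefficient curves. -/
def UniformVelocityBound (N : ℕ) (p : ℝ) (d : ℕ) : Prop :=
  ∀ M : ℝ, ∃ C : ℝ≥0∞, C ≠ ⊤ ∧ ∀ a a' : ℝ → Fin d → ℂ, ContDiffLipOn (N + 1) M (Ioo 0 1) a →
    (∀ t ∈ Ioo (0 : ℝ) 1, HasDerivAt a (a' t) t) → rootEnergy p a a' ≤ C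

lemma rootEnergy_le_iff {a a' : ℝ → Fin d → ℂ} {C : ℝ≥0∞} :
    rootEnergy p a a' ≤ C ↔ ∀ Ω l, IsSimpleRootOn a Ω l →
      ∫⁻ t in Ω, ‖rootVelocity (a t) (a' t) (l t)‖ₑ ^ p ≤ C := by
  simp only [rootEnergy, iSup_le_iff]

lemma IsSimpleRootOn.setLIntegral_le_rootEnergy {a : ℝ → Fin d → ℂ} (h : IsSimpleRootOn a Ω l)
    (p : ℝ) (a' : ℝ → Fin d → ℂ) :
    ∫⁻ t in Ω, ‖rootVelocity (a t) (a' t) (l t)‖ₑ ^ p ≤ rootEnergy p a a' :=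
  rootEnergy_le_iff.1 le_rfl Ω l h

lemma ofFn_eq_of_monicOfFn_eq_mul {s : Set ℝ} {t : ℝ} {a : ℝ → Fin d → ℂ} {b : ℝ → Fin k → ℂ}
    {c : ℝ → Fin e → ℂ} {a' : Fin d → ℂ} {b' : Fin k → ℂ} {c' : Fin e → ℂ} (hs : s ∈ nhds t)
    (ha : HasDerivAt a a' t) (hb : HasDerivAt b b' t) (hc : HasDerivAt c c' t)
    (hprod : ∀ r ∈ s, monicOfFn d (a r) = monicOfFn k (b r) * monicOfFn e (c r)) :
    ofFn d a' = ofFn k b' * monicOfFn e (c t) + monicOfFn k (b t) * ofFn e c' := by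
  have hderiv {n : ℕ} {u : ℝ → Fin n → ℂ} {u' : Fin n → ℂ} (hu : HasDerivAt u u' t) (z : ℂ) :
      HasDerivAt (fun r => eval z (monicOfFn n (u r))) (eval z (ofFn n u')) t := by
    simpa using hasDerivWithinAt_eval_monicOfFn (s := univ) hu.hasDerivWithinAt
      (hasDerivWithinAt_const t univ z)
  refine Polynomial.funext fun z => ?_
  rw [eval_add, eval_mul, eval_mul]
  refine (hderiv ha z).unique (((hderiv hb z).fun_mul (hderiv hc z)).congr_of_eventuallyEq ?_)
  filter_upwards [hs] with r hr
  rw [hprod r hr, eval_mul]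

lemma setLIntegral_rootVelocity_le_of_monicOfFn_eq_mul {a a' : ℝ → Fin d → ℂ}
    {b b' : ℝ → Fin k → ℂ} {c c' : ℝ → Fin e → ℂ} (hA : IsSimpleRootOn a Ω l)
    (ha : ∀ t ∈ Ioo (0 : ℝ) 1, HasDerivAt a (a' t) t)
    (hb : ∀ t ∈ Ioo (0 : ℝ) 1, HasDerivAt b (b' t) t)
    (hc : ∀ t ∈ Ioo (0 : ℝ) 1, HasDerivAt c (c' t) t)
    (hprod : ∀ t ∈ Ioo (0 : ℝ) 1, monicOfFn d (a t) = monicOfFn k (b t) * monicOfFn e (c t)) :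
    ∫⁻ t in {t ∈ Ω | eval (l t) (monicOfFn k (b t)) = 0}, ‖rootVelocity (a t) (a' t) (l t)‖ₑ ^ p ≤
      rootEnergy p b b' := by
  set Ω' := {t ∈ Ω | eval (l t) (monicOfFn k (b t)) = 0}
  have hsub : Ω' ⊆ Ω := sep_subset _ _
  have hder : ∀ t ∈ Ω', eval (l t) (derivative (monicOfFn d (a t))) =
      eval (l t) (derivative (monicOfFn k (b t))) * eval (l t) (monicOfFn e (c t)) := fun t ht => by
    simp [hprod t (hA.subset ht.1), derivative_mul, ht.2]
  have hne : ∀ t ∈ Ω', eval (l t) (derivative (monicOfFn k (b t))) *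
      eval (l t) (monicOfFn e (c t)) ≠ 0 := fun t ht =>
    hder t ht ▸ hA.eval_derivative_ne_zero t ht.1
  have hvel : ∀ t ∈ Ω', rootVelocity (a t) (a' t) (l t) = rootVelocity (b t) (b' t) (l t) := by
    intro t ht
    have ht1 := hA.subset ht.1
    have hofFn := ofFn_eq_of_monicOfFn_eq_mul (isOpen_Ioo.mem_nhds ht1) (ha t ht1) (hb t ht1)
      (hc t ht1) hprod
    rw [rootVelocity, rootVelocity, hder t ht, hofFn, eval_add, eval_mul, eval_mul, ht.2, zero_mul,
      add_zero, mul_div_mul_right _ _ (right_ne_zero_of_mul (hne t ht))]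
  have hbΩ : ContinuousOn b Ω := fun t ht =>
    (hb t (hA.subset ht)).continuousAt.continuousWithinAt
  have hmeas : MeasurableSet Ω' :=
    measurableSet_sep_eq_zero hA.measurableSet (continuousOn_eval_monicOfFn hbΩ hA.continuousOn)
  have hB : IsSimpleRootOn b Ω' l := ⟨hmeas, hsub.trans hA.subset, hA.continuousOn.mono hsub,
    fun t ht => ht.2, fun t ht => left_ne_zero_of_mul (hne t ht)⟩
  refine (setLIntegral_congr_fun hmeas fun t ht => ?_).trans_le (hB.setLIntegral_le_rootEnergy p b')
  simp only [hvel t ht]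

lemma rootEnergy_le_add_of_monicOfFn_eq_mul {a a' : ℝ → Fin d → ℂ}
    {b b' : ℝ → Fin k → ℂ} {c c' : ℝ → Fin e → ℂ}
    (ha : ∀ t ∈ Ioo (0 : ℝ) 1, HasDerivAt a (a' t) t)
    (hb : ∀ t ∈ Ioo (0 : ℝ) 1, HasDerivAt b (b' t) t)
    (hc : ∀ t ∈ Ioo (0 : ℝ) 1, HasDerivAt c (c' t) t)
    (hprod : ∀ t ∈ Ioo (0 : ℝ) 1, monicOfFn d (a t) = monicOfFn k (b t) * monicOfFn e (c t)) :
    rootEnergy p a a' ≤ rootEnergy p b b' + rootEnergy p c c' := by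
  refine rootEnergy_le_iff.2 fun Ω l hA => ?_
  have hcover : Ω ⊆ {t ∈ Ω | eval (l t) (monicOfFn k (b t)) = 0} ∪
      {t ∈ Ω | eval (l t) (monicOfFn e (c t)) = 0} := fun t ht => by
    have h0 := hA.eval_eq_zero t ht
    rw [hprod t (hA.subset ht), eval_mul, mul_eq_zero] at h0
    exact h0.imp (⟨ht, ·⟩) (⟨ht, ·⟩)
  calc _ ≤ _ := lintegral_mono_set hcover
    _ ≤ _ := lintegral_union_le _ _ _
    _ ≤ _ := add_le_add (setLIntegral_rootVelocity_le_of_monicOfFn_eq_mul hA ha hb hc hprod)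
      (setLIntegral_rootVelocity_le_of_monicOfFn_eq_mul hA ha hc hb fun t ht => by
        rw [hprod t ht, mul_comm])

lemma exists_rootEnergy_le_of_mapsTo_ball {N : ℕ}
    (IH : ∀ k, 1 ≤ k → k ≤ d → UniformVelocityBound N p k) {c : Fin (d + 1) → ℂ} (hc : c ≠ 0)
    (hlast : c (Fin.last d) = 0) (hM : 0 ≤ M) :
    ∃ R > 0, ∃ C : ℝ≥0∞, C ≠ ⊤ ∧ ∀ a a' : ℝ → Fin (d + 1) → ℂ,
      ContDiffLipOn (N + 1) M (Ioo 0 1) a → (∀ t ∈ Ioo (0 : ℝ) 1, HasDerivAt a (a' t) t) →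
      MapsTo a (Ioo 0 1) (Metric.ball c R) → rootEnergy p a a' ≤ C := by
  obtain ⟨k, e, hk, he, hke, R, hR, Ψ, hΨ, hprod⟩ :=
    exists_contDiffOn_factorization (N + 1 + 1) hc hlast
  have hball : Metric.closedBall c (R / 2) ⊆ Metric.ball c R :=
    Metric.closedBall_subset_ball (half_lt_self hR)
  obtain ⟨B, -, hB⟩ := ContDiffLipOn.exists_comp (convex_Ioo (0 : ℝ) 1) Metric.isOpen_ball
    (isCompact_closedBall c (R / 2)) (convex_closedBall c (R / 2)) hball hΨ hM
  obtain ⟨C₁, hC₁, h₁⟩ := IH k hk (by omega)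
    (‖ContinuousLinearMap.fst ℝ (Fin k → ℂ) (Fin e → ℂ)‖ * B)
  obtain ⟨C₂, hC₂, h₂⟩ := IH e he (by omega)
    (‖ContinuousLinearMap.snd ℝ (Fin k → ℂ) (Fin e → ℂ)‖ * B)
  refine ⟨R / 2, half_pos hR, C₁ + C₂, by finiteness, fun a a' ha ha' hmaps => ?_⟩
  have hmaps' := hmaps.mono_right Metric.ball_subset_closedBall
  have hb := (hB a ha hmaps').clm_apply (ContinuousLinearMap.fst ℝ (Fin k → ℂ) (Fin e → ℂ))
  have hc := (hB a ha hmaps').clm_apply (ContinuousLinearMap.snd ℝ (Fin k → ℂ) (Fin e → ℂ))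
  obtain ⟨-, b', hb', -⟩ := ContDiffLipOn.succ_iff.1 hb
  obtain ⟨-, c', hc', -⟩ := ContDiffLipOn.succ_iff.1 hc
  exact (rootEnergy_le_add_of_monicOfFn_eq_mul ha' hb' hc' fun t ht =>
    hprod _ (hball (hmaps' ht))).trans (add_le_add (h₁ _ _ hb hb') (h₂ _ _ hc hc'))

lemma exists_rootEnergy_le_of_isCompact {N : ℕ}
    (IH : ∀ k, 1 ≤ k → k ≤ d → UniformVelocityBound N p k) {K : Set (Fin (d + 1) → ℂ)}
    (hK : IsCompact K) (hK0 : ∀ c ∈ K, c ≠ 0 ∧ c (Fin.last d) = 0) (hM : 0 ≤ M) :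
    ∃ ε > 0, ∃ C : ℝ≥0∞, C ≠ ⊤ ∧ ∀ a a' : ℝ → Fin (d + 1) → ℂ,
      ContDiffLipOn (N + 1) M (Ioo 0 1) a → (∀ t ∈ Ioo (0 : ℝ) 1, HasDerivAt a (a' t) t) →
      (∃ c ∈ K, MapsTo a (Ioo 0 1) (Metric.ball c ε)) → rootEnergy p a a' ≤ C := by
  refine hK.induction_on (p := fun s => ∃ ε > 0, ∃ C : ℝ≥0∞, C ≠ ⊤ ∧
    ∀ a a' : ℝ → Fin (d + 1) → ℂ, ContDiffLipOn (N + 1) M (Ioo 0 1) a →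
      (∀ t ∈ Ioo (0 : ℝ) 1, HasDerivAt a (a' t) t) →
      (∃ c ∈ s, MapsTo a (Ioo 0 1) (Metric.ball c ε)) → rootEnergy p a a' ≤ C) ?_ ?_ ?_ ?_
  · exact ⟨1, one_pos, 0, by simp, fun _ _ _ _ ⟨_, hc, _⟩ => hc.elim⟩
  · rintro s t hst ⟨ε, hε, C, hC, h⟩
    exact ⟨ε, hε, C, hC, fun a a' ha ha' ⟨c, hc, hac⟩ => h a a' ha ha' ⟨c, hst hc, hac⟩⟩
  · rintro s t ⟨ε₁, hε₁, C₁, hC₁, h₁⟩ ⟨ε₂, hε₂, C₂, hC₂, h₂⟩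
    refine ⟨min ε₁ ε₂, lt_min hε₁ hε₂, C₁ + C₂, by finiteness, ?_⟩
    rintro a a' ha ha' ⟨c, hc | hc, hac⟩
    · exact (h₁ a a' ha ha' ⟨c, hc, hac.mono_right
        (Metric.ball_subset_ball (min_le_left _ _))⟩).trans le_self_add
    · exact (h₂ a a' ha ha' ⟨c, hc, hac.mono_right
        (Metric.ball_subset_ball (min_le_right _ _))⟩).trans le_add_self
  · intro c hc
    obtain ⟨R, hR, C, hC, h⟩ :=
      exists_rootEnergy_le_of_mapsTo_ball IH (hK0 c hc).1 (hK0 c hc).2 hM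
    refine ⟨Metric.ball c (R / 2), mem_nhdsWithin_of_mem_nhds
      (Metric.ball_mem_nhds c (half_pos hR)), R / 2, half_pos hR, C, hC, ?_⟩
    rintro a a' ha ha' ⟨b, hb, hab⟩
    refine h a a' ha ha' (hab.mono_right (Metric.ball_subset_ball' ?_))
    linarith [Metric.mem_ball.1 hb]

end RootVelocity

section SpeedDensity
variable {d N : ℕ} {p q M : ℝ}

lemma ContDiffLipOn.clm_apply_of_norm_le_one {E F : Type*} [NormedAddCommGroup E]
    [NormedSpace ℝ E] [NormedAddCommGroup F] [NormedSpace ℝ F] {s : Set ℝ} {f : ℝ → E}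
    {L : E →L[ℝ] F} (hL : ‖L‖ ≤ 1) (hM : 0 ≤ M) (h : ContDiffLipOn N M s f) :
    ContDiffLipOn N M s (fun x => L (f x)) :=
  (h.clm_apply L).mono (mul_le_of_le_one_left hM hL)

lemma norm_proj_le_one {ι : Type*} [Fintype ι] (i : ι) :
    ‖(ContinuousLinearMap.proj i : (ι → ℂ) →L[ℝ] ℂ)‖ ≤ 1 :=
  ContinuousLinearMap.opNorm_le_bound _ zero_le_one fun z => by
    simpa using norm_le_pi_norm z i

lemma aemeasurable_enorm_mul_enorm_rpow {E : Type*} [NormedAddCommGroup E] [MeasurableSpace E]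
    [BorelSpace E] {s : Set ℝ} (hs : MeasurableSet s) {u v : ℝ → E} (hu : ContinuousOn u s)
    (hv : ContinuousOn v s) (q : ℝ) :
    AEMeasurable (fun t => ‖v t‖ₑ * ‖u t‖ₑ ^ q) (volume.restrict s) :=
  (hv.aemeasurable hs).enorm.mul ((hu.aemeasurable hs).enorm.pow_const q)

lemma enorm_mul_enorm_rpow_neg_le_re_add_im (hq : 0 ≤ q) (w z : ℂ) :
    ‖w‖ₑ * ‖z‖ₑ ^ (-q) ≤ ‖w.re‖ₑ * ‖z.re‖ₑ ^ (-q) + ‖w.im‖ₑ * ‖z.im‖ₑ ^ (-q) := by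
  have hw : ‖w‖ₑ ≤ ‖w.re‖ₑ + ‖w.im‖ₑ := by
    simpa [← ofReal_norm, ← ENNReal.ofReal_add] using
      ENNReal.ofReal_le_ofReal (Complex.norm_le_abs_re_add_abs_im w)
  have hanti {x : ℝ} (hx : |x| ≤ ‖z‖) : ‖z‖ₑ ^ (-q) ≤ ‖x‖ₑ ^ (-q) := by
    rw [ENNReal.rpow_neg, ENNReal.rpow_neg]
    gcongr
    simpa [← ofReal_norm] using ENNReal.ofReal_le_ofReal hx
  calc ‖w‖ₑ * ‖z‖ₑ ^ (-q) ≤ (‖w.re‖ₑ + ‖w.im‖ₑ) * ‖z‖ₑ ^ (-q) := by gcongr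
    _ = ‖w.re‖ₑ * ‖z‖ₑ ^ (-q) + ‖w.im‖ₑ * ‖z‖ₑ ^ (-q) := add_mul _ _ _
    _ ≤ _ := add_le_add (mul_le_mul' le_rfl (hanti (Complex.abs_re_le_norm z)))
        (mul_le_mul' le_rfl (hanti (Complex.abs_im_le_norm z)))

lemma exists_setLIntegral_radical_deriv_le_complex (N : ℕ) (hM : 0 ≤ M) (hp : 1 ≤ p)
    (hq : 0 ≤ q) (hqN : q * (N + 2) ≤ N + 1) (hpq : q * p < 1) :
    ∃ C : ℝ≥0∞, C ≠ ⊤ ∧ ∀ u u' : ℝ → ℂ, (∀ x ∈ Ioo (0 : ℝ) 1, HasDerivAt u (u' x) x) →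
      ContDiffLipOn N M (Ioo 0 1) u' →
      ∫⁻ x in Ioo 0 1, (‖u' x‖ₑ * ‖u x‖ₑ ^ (-q)) ^ p ≤ C := by
  obtain ⟨C, hC, h⟩ := exists_setLIntegral_radical_deriv_le N hM hp hq hqN hpq
  refine ⟨2 ^ (p - 1) * (C + C), by finiteness, fun u u' hu hu' => ?_⟩
  have hre := h (fun x => (u x).re) (fun x => (u' x).re)
    (fun x hx => Complex.reCLM.hasFDerivAt.comp_hasDerivAt x (hu x hx))
    (hu'.clm_apply_of_norm_le_one Complex.reCLM_norm.le hM)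
  have him := h (fun x => (u x).im) (fun x => (u' x).im)
    (fun x hx => Complex.imCLM.hasFDerivAt.comp_hasDerivAt x (hu x hx))
    (hu'.clm_apply_of_norm_le_one Complex.imCLM_norm.le hM)
  have hu0 : ContinuousOn u (Ioo 0 1) := fun x hx => (hu x hx).continuousAt.continuousWithinAt
  have hmeas : AEMeasurable (fun x => (‖(u' x).re‖ₑ * ‖(u x).re‖ₑ ^ (-q)) ^ p)
      (volume.restrict (Ioo 0 1)) := (aemeasurable_enorm_mul_enorm_rpow measurableSet_Ioo
    (Complex.continuous_re.comp_continuousOn hu0)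
    (Complex.continuous_re.comp_continuousOn hu'.continuousOn) (-q)).pow_const p
  calc ∫⁻ x in Ioo 0 1, (‖u' x‖ₑ * ‖u x‖ₑ ^ (-q)) ^ p
      ≤ ∫⁻ x in Ioo 0 1, 2 ^ (p - 1) * ((‖(u' x).re‖ₑ * ‖(u x).re‖ₑ ^ (-q)) ^ p +
          (‖(u' x).im‖ₑ * ‖(u x).im‖ₑ ^ (-q)) ^ p) := lintegral_mono fun x =>
        (ENNReal.rpow_le_rpow (enorm_mul_enorm_rpow_neg_le_re_add_im hq _ _)
          (zero_le_one.trans hp)).trans (ENNReal.rpow_add_le_mul_rpow_add_rpow _ _ hp)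
    _ ≤ 2 ^ (p - 1) * (C + C) := by
        rw [lintegral_const_mul' _ _ (by finiteness), lintegral_add_left' hmeas]
        gcongr

lemma exists_integrable_majorant {α : Type*} [MeasurableSpace α] {μ : Measure α}
    [IsProbabilityMeasure μ] {C : ℝ≥0∞} (hp : 1 ≤ p) {G : α → ℝ≥0∞} (hG : AEMeasurable G μ)
    (hC : C ≠ ⊤) (hGC : ∫⁻ x, G x ^ p ∂μ ≤ C) :
    ∃ h : α → ℝ, (∀ x, 1 ≤ h x) ∧ Integrable h μ ∧ Integrable (fun x => h x ^ p) μ ∧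
      ∫ x, h x ^ p ∂μ ≤ (2 ^ (p - 1) * (1 + C)).toReal ∧ ∀ᵐ x ∂μ, G x ≤ ENNReal.ofReal (h x) := by
  have : 0 < p := zero_lt_one.trans_le hp
  have hbound : ∫⁻ x, (1 + G x) ^ p ∂μ ≤ 2 ^ (p - 1) * (1 + C) := by
    calc ∫⁻ x, (1 + G x) ^ p ∂μ ≤ ∫⁻ x, 2 ^ (p - 1) * (1 ^ p + G x ^ p) ∂μ :=
          lintegral_mono fun x => ENNReal.rpow_add_le_mul_rpow_add_rpow _ _ hp
      _ ≤ _ := by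
          rw [lintegral_const_mul' _ _ (by finiteness), lintegral_add_left measurable_const]
          simp only [ENNReal.one_rpow, lintegral_const, measure_univ, mul_one]
          gcongr
  have hmeas : AEMeasurable (fun x => 1 + G x) μ := hG.const_add 1
  have htop : 2 ^ (p - 1) * (1 + C) ≠ ⊤ := by finiteness
  have hfin := ne_top_of_le_ne_top htop hbound
  have hfin_one : ∫⁻ x, (1 + G x) ∂μ ≠ ⊤ := ne_top_of_le_ne_top hfin <| lintegral_mono fun x => by
    simpa using ENNReal.rpow_le_rpow_of_exponent_le (x := 1 + G x) le_self_add hp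
  have hGfin : ∀ᵐ x ∂μ, G x ≠ ⊤ := by
    filter_upwards [ae_lt_top' hmeas hfin_one] with x hx
    exact ne_top_of_le_ne_top hx.ne le_add_self
  have hae : ∀ᵐ x ∂μ, (1 + G x).toReal = 1 + (G x).toReal := by
    filter_upwards [hGfin] with x hx
    simp [ENNReal.toReal_add, hx]
  have haep : ∀ᵐ x ∂μ, ((1 + G x) ^ p).toReal = (1 + (G x).toReal) ^ p := by
    filter_upwards [hae] with x hx
    rw [← ENNReal.toReal_rpow, hx]
  refine ⟨fun x => 1 + (G x).toReal, fun x => le_add_of_nonneg_right ENNReal.toReal_nonneg,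
    (integrable_toReal_of_lintegral_ne_top hmeas hfin_one).congr hae,
    (integrable_toReal_of_lintegral_ne_top (hmeas.pow_const p) hfin).congr haep, ?_, ?_⟩
  · rw [← integral_congr_ae haep, integral_toReal (hmeas.pow_const p)
      (ae_lt_top' (hmeas.pow_const p) hfin)]
    exact ENNReal.toReal_mono htop hbound
  · filter_upwards [hGfin] with x hx
    rw [ENNReal.le_ofReal_iff_toReal_le hx (by positivity)]
    linarith

lemma norm_le_mul_rpow_of_enorm_mul_rpow_neg_le {E F : Type*} [NormedAddCommGroup E]
    [NormedAddCommGroup F] {w : E} {z : F} {h : ℝ} (hq : 0 ≤ q) (hh : 0 ≤ h)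
    (hle : ‖w‖ₑ * ‖z‖ₑ ^ (-q) ≤ ENNReal.ofReal h) : ‖w‖ ≤ h * ‖z‖ ^ q := by
  rcases eq_or_ne w 0 with rfl | hw
  · simpa using by positivity
  have hw0 : ‖w‖ₑ ≠ 0 := enorm_ne_zero.2 hw
  have hne : ‖z‖ₑ ^ q ≠ 0 := fun hz => by
    rw [ENNReal.rpow_neg, hz, ENNReal.inv_zero, ENNReal.mul_top hw0] at hle
    exact ENNReal.ofReal_ne_top (top_le_iff.1 hle)
  rw [ENNReal.rpow_neg, ← div_eq_mul_inv, ENNReal.div_le_iff hne (by finiteness)] at hle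
  rw [← ENNReal.ofReal_le_ofReal_iff (by positivity), ENNReal.ofReal_mul hh,
    ← ENNReal.ofReal_rpow_of_nonneg (norm_nonneg z) hq, ofReal_norm, ofReal_norm]
  exact hle

/-- The function `h` bounds, up to the homogeneity weights `1 - 1 / (d - i)`, the speed of the
coefficients `a i` of a curve of monic polynomials of degree `d`. In the variable
`a i ^ (1 / (d - i))`, which has the size of the roots, the speed is then at most `h`. -/
structure IsSpeedDensity (p : ℝ) (a a' : ℝ → Fin d → ℂ) (h : ℝ → ℝ) : Prop where
  one_le : ∀ t, 1 ≤ h t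
  integrableOn : IntegrableOn h (Ioo 0 1)
  integrableOn_rpow : IntegrableOn (fun t => h t ^ p) (Ioo 0 1)
  norm_le : ∀ i : Fin d, ∀ᵐ t ∂volume.restrict (Ioo 0 1),
    ‖a' t i‖ ≤ h t * ‖a t i‖ ^ (1 - ((d - i : ℕ) : ℝ)⁻¹)

lemma one_le_weight (i : Fin d) : (1 : ℝ) ≤ (d - i : ℕ) := by
  exact_mod_cast (by omega : 1 ≤ d - (i : ℕ))

lemma one_sub_inv_weight_nonneg (i : Fin d) : 0 ≤ 1 - ((d - i : ℕ) : ℝ)⁻¹ :=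
  sub_nonneg.2 (inv_le_one_of_one_le₀ (one_le_weight i))

lemma one_sub_inv_weight_mul_le (hd : d ≤ N + 2) (i : Fin d) :
    (1 - ((d - i : ℕ) : ℝ)⁻¹) * (N + 2) ≤ N + 1 := by
  have hle : ((d - i : ℕ) : ℝ) ≤ N + 2 := by exact_mod_cast (by omega : d - i ≤ N + 2)
  have hinv : 1 ≤ ((d - i : ℕ) : ℝ)⁻¹ * (N + 2) := by
    rwa [inv_mul_eq_div, one_le_div (zero_lt_one.trans_le (one_le_weight i))]
  linarith

lemma exists_isSpeedDensity (hM : 0 ≤ M) (hp : 1 ≤ p) (hpN : p * (N + 1) < N + 2)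
    (hd : d ≤ N + 2) :
    ∃ S : ℝ, ∀ a a' : ℝ → Fin d → ℂ, ContDiffLipOn (N + 1) M (Ioo 0 1) a →
      (∀ t ∈ Ioo (0 : ℝ) 1, HasDerivAt a (a' t) t) →
      ∃ h : ℝ → ℝ, IsSpeedDensity p a a' h ∧ ∫ t in (0 : ℝ)..1, h t ^ p ≤ S := by
  set q : Fin d → ℝ := fun i => 1 - ((d - i : ℕ) : ℝ)⁻¹
  have hq : ∀ i, 0 ≤ q i := one_sub_inv_weight_nonneg
  have hqN : ∀ i, q i * (N + 2) ≤ N + 1 := one_sub_inv_weight_mul_le hd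
  have hqp : ∀ i, q i * p < 1 := fun i => by
    by_contra! hcon
    nlinarith [hqN i]
  choose C hC hrad using fun i =>
    exists_setLIntegral_radical_deriv_le_complex N hM hp (hq i) (hqN i) (hqp i)
  set K : ℝ≥0∞ := (Finset.univ : Finset (Fin d)).card ^ (p - 1)
  have hKtop : K ≠ ⊤ := by finiteness
  have hCtop : K * ∑ i, C i ≠ ⊤ := ENNReal.mul_ne_top hKtop (ENNReal.sum_ne_top.2 fun i _ => hC i)
  refine ⟨(2 ^ (p - 1) * (1 + K * ∑ i, C i)).toReal, fun a a' ha ha' => ?_⟩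
  have ha'L := ha.of_hasDerivAt isOpen_Ioo ha'
  set G : Fin d → ℝ → ℝ≥0∞ := fun i t => ‖a' t i‖ₑ * ‖a t i‖ₑ ^ (-q i)
  have hGmeas : ∀ i, AEMeasurable (G i) (volume.restrict (Ioo 0 1)) := fun i =>
    aemeasurable_enorm_mul_enorm_rpow measurableSet_Ioo (continuousOn_pi.1 ha.continuousOn i)
      (continuousOn_pi.1 ha'L.continuousOn i) _
  have hGint : ∫⁻ t in Ioo 0 1, (∑ i, G i t) ^ p ≤ K * ∑ i, C i := by
    calc ∫⁻ t in Ioo 0 1, (∑ i, G i t) ^ p ≤ ∫⁻ t in Ioo 0 1, K * ∑ i, G i t ^ p :=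
          lintegral_mono fun t => ENNReal.rpow_sum_le_const_mul_sum_rpow _ _ hp
      _ = K * ∑ i, ∫⁻ t in Ioo 0 1, G i t ^ p := by
          rw [lintegral_const_mul' _ _ hKtop,
            lintegral_finsetSum' _ fun i _ => (hGmeas i).pow_const p]
      _ ≤ K * ∑ i, C i := by
          gcongr with i
          exact hrad i _ _ (fun t ht => hasDerivAt_pi.1 (ha' t ht) i)
            (ha'L.clm_apply_of_norm_le_one (norm_proj_le_one i) hM)
  have : IsProbabilityMeasure (volume.restrict (Ioo (0 : ℝ) 1)) := ⟨by simp⟩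
  obtain ⟨h, h1, hint, hintp, hle, hGh⟩ := exists_integrable_majorant hp
    (Finset.aemeasurable_fun_sum _ fun i _ => hGmeas i) hCtop hGint
  refine ⟨h, ⟨h1, hint, hintp, fun i => ?_⟩, ?_⟩
  · filter_upwards [hGh] with t ht
    exact norm_le_mul_rpow_of_enorm_mul_rpow_neg_le (hq i) (zero_le_one.trans (h1 t)) <|
      (Finset.single_le_sum (f := fun i => G i t) (fun _ _ => zero_le) (Finset.mem_univ i)).trans ht
  · rwa [intervalIntegral.integral_of_le zero_le_one, integral_Ioc_eq_integral_Ioo]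

end SpeedDensity

section Scaling

open Polynomial

variable {d : ℕ}

/-- The coefficient vector of the monic polynomial whose roots are `s` times those of
`monicOfFn d c`. -/
def scaleCoeffs (s : ℂ) (c : Fin d → ℂ) : Fin d → ℂ := fun i => s ^ (d - i : ℕ) * c i

lemma eval_ofFn_scaleCoeffs (s z : ℂ) (c : Fin d → ℂ) :
    eval (s * z) (ofFn d (scaleCoeffs s c)) = s ^ d * eval z (ofFn d c) := by
  simp only [eval_ofFn, scaleCoeffs, Finset.mul_sum, mul_pow]
  refine Finset.sum_congr rfl fun i _ => ?_
  have hpow : s ^ (d - i : ℕ) * s ^ (i : ℕ) = s ^ d := pow_sub_mul_pow s i.2.le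
  rw [← hpow]
  ring

lemma monicOfFn_scaleCoeffs_comp (s : ℂ) (c : Fin d → ℂ) :
    (monicOfFn d (scaleCoeffs s c)).comp (C s * X) = C (s ^ d) * monicOfFn d c :=
  Polynomial.funext fun z => by
    simp [monicOfFn, eval_ofFn_scaleCoeffs, mul_pow, mul_add]

lemma eval_monicOfFn_scaleCoeffs (s z : ℂ) (c : Fin d → ℂ) :
    eval (s * z) (monicOfFn d (scaleCoeffs s c)) = s ^ d * eval z (monicOfFn d c) := by
  simpa using congr_arg (eval z) (monicOfFn_scaleCoeffs_comp s c)

lemma eval_derivative_monicOfFn_scaleCoeffs (s z : ℂ) (c : Fin d → ℂ) :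
    s * eval (s * z) (derivative (monicOfFn d (scaleCoeffs s c))) =
      s ^ d * eval z (derivative (monicOfFn d c)) := by
  have h := congr_arg (fun P => eval z (derivative P)) (monicOfFn_scaleCoeffs_comp s c)
  rw [derivative_comp, derivative_C_mul (s ^ d)] at h
  simpa using h

lemma rootVelocity_scaleCoeffs {s : ℂ} (hs : s ≠ 0) (r : ℝ) (a a' : Fin d → ℂ) (z : ℂ) :
    rootVelocity (scaleCoeffs s a) (scaleCoeffs s (r • a')) (s * z) =
      r * s * rootVelocity a a' z := by
  have hnum : eval z (ofFn d (r • a')) = r * eval z (ofFn d a') := by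
    simp [eval_ofFn, Finset.mul_sum]
  have hden := eval_derivative_monicOfFn_scaleCoeffs s z a
  rw [rootVelocity, rootVelocity, eval_ofFn_scaleCoeffs, hnum,
    eq_div_of_mul_eq hs ((mul_comm _ _).trans hden)]
  field_simp

/-- The homogeneous size of the coefficients of a monic polynomial: it scales like the roots and is
comparable to the largest of their absolute values. -/
def coeffGauge (c : Fin d → ℂ) : ℝ := ‖fun i => ‖c i‖ ^ ((d - i : ℕ) : ℝ)⁻¹‖

lemma coeffGauge_nonneg (c : Fin d → ℂ) : 0 ≤ coeffGauge c := norm_nonneg _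

lemma continuous_coeffGauge : Continuous (coeffGauge (d := d)) :=
  (continuous_pi fun i => (continuous_apply i).norm.rpow_const fun _ =>
    Or.inr (by positivity)).norm

lemma coeffGauge_le_iff {c : Fin d → ℂ} {A : ℝ} (hA : 0 ≤ A) :
    coeffGauge c ≤ A ↔ ∀ i : Fin d, ‖c i‖ ≤ A ^ (d - i : ℕ) := by
  rw [coeffGauge, pi_norm_le_iff_of_nonneg hA]
  refine forall_congr' fun i => ?_
  have hi : (0 : ℝ) < (d - i : ℕ) := by exact_mod_cast (by omega : 0 < d - (i : ℕ))
  rw [Real.norm_of_nonneg (by positivity), Real.rpow_inv_le_iff_of_pos (norm_nonneg _) hA hi,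
    Real.rpow_natCast]

lemma coeffGauge_le_one_iff {c : Fin d → ℂ} : coeffGauge c ≤ 1 ↔ ‖c‖ ≤ 1 := by
  simp [coeffGauge_le_iff zero_le_one, pi_norm_le_iff_of_nonneg zero_le_one]

lemma coeffGauge_pos_iff {c : Fin d → ℂ} : 0 < coeffGauge c ↔ c ≠ 0 := by
  rw [(coeffGauge_nonneg c).lt_iff_ne', not_iff_not, ← (coeffGauge_nonneg c).ge_iff_eq',
    coeffGauge_le_iff le_rfl, funext_iff]
  refine forall_congr' fun i => ?_
  rw [zero_pow (by omega), norm_le_zero_iff, Pi.zero_apply]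

lemma coeffGauge_le_of_norm_le {c : Fin d → ℂ} {A : ℝ} (hA : 1 ≤ A) (hc : ‖c‖ ≤ A) :
    coeffGauge c ≤ A :=
  (coeffGauge_le_iff (zero_le_one.trans hA)).2 fun i =>
    ((norm_le_pi_norm c i).trans hc).trans (le_self_pow₀ hA (by omega))

lemma coeffGauge_scaleCoeffs (s : ℂ) (c : Fin d → ℂ) :
    coeffGauge (scaleCoeffs s c) = ‖s‖ * coeffGauge c := by
  rw [coeffGauge, coeffGauge, ← norm_norm s, ← norm_smul]
  congr 1 with i
  rw [scaleCoeffs, norm_mul, norm_pow, Real.mul_rpow (by positivity) (norm_nonneg _),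
    Real.pow_rpow_inv_natCast (norm_nonneg _) (by omega), Pi.smul_apply, smul_eq_mul]

/-- The restriction of the curve `a` to `(u, v)`, reparametrised over `(0, 1)` and with the roots
divided by `A`. -/
def zoom (u v A : ℝ) (a : ℝ → Fin d → ℂ) : ℝ → Fin d → ℂ :=
  fun x => scaleCoeffs (A : ℂ)⁻¹ (a (u + (v - u) * x))

lemma hasDerivAt_affine (u v x : ℝ) : HasDerivAt (fun x => u + (v - u) * x) (v - u) x := by
  simpa using ((hasDerivAt_id x).const_mul (v - u)).const_add u

lemma affine_mem_Ioo_iff {u v x : ℝ} (huv : u < v) : u + (v - u) * x ∈ Ioo u v ↔ x ∈ Ioo 0 1 := by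
  have h : 0 < v - u := sub_pos.2 huv
  rw [mem_Ioo, mem_Ioo, lt_add_iff_pos_right, mul_pos_iff_of_pos_left h, ← lt_sub_iff_add_lt',
    mul_lt_iff_lt_one_right h]

lemma hasDerivAt_zoom {u v x A : ℝ} {a a' : ℝ → Fin d → ℂ}
    (ha : HasDerivAt a (a' (u + (v - u) * x)) (u + (v - u) * x)) :
    HasDerivAt (zoom u v A a) (zoom u v A (fun t => (v - u) • a' t) x) x :=
  hasDerivAt_pi.2 fun i =>
    (hasDerivAt_pi.1 (ha.scomp x (hasDerivAt_affine u v x)) i).const_mul _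

lemma setLIntegral_comp_affine {u v : ℝ} (huv : u < v) {s : Set ℝ} (hs : MeasurableSet s)
    (f : ℝ → ℝ≥0∞) :
    ∫⁻ t in s, f t = ENNReal.ofReal (v - u) *
      ∫⁻ x in (fun x => u + (v - u) * x) ⁻¹' s, f (u + (v - u) * x) := by
  have h : v - u ≠ 0 := (sub_pos.2 huv).ne'
  have hsurj : Function.Surjective fun x => u + (v - u) * x := fun t =>
    ⟨(t - u) / (v - u), by field_simp; ring⟩
  conv_lhs => rw [← image_preimage_eq s hsurj]
  rw [lintegral_image_eq_lintegral_abs_deriv_mul (hs.preimage (by fun_prop))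
    (fun x _ => (hasDerivAt_affine u v x).hasDerivWithinAt)
    (fun x _ y _ hxy => mul_left_cancel₀ h (add_left_cancel hxy)),
    abs_of_pos (sub_pos.2 huv), lintegral_const_mul' _ _ ENNReal.ofReal_ne_top]

variable {u v A p : ℝ} {a a' : ℝ → Fin d → ℂ} {Ω : Set ℝ} {l : ℝ → ℂ}

lemma IsSimpleRootOn.comp_affine (h : IsSimpleRootOn a Ω l) (huv : u < v) (hA : 0 < A) :
    IsSimpleRootOn (zoom u v A a) ((fun x => u + (v - u) * x) ⁻¹' (Ω ∩ Ioo u v))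
      (fun x => (A : ℂ)⁻¹ * l (u + (v - u) * x)) where
  measurableSet := (h.measurableSet.inter measurableSet_Ioo).preimage (by fun_prop)
  subset _ hx := (affine_mem_Ioo_iff huv).1 hx.2
  continuousOn := continuousOn_const.mul <|
    h.continuousOn.comp (by fun_prop) fun _ hx => hx.1
  eval_eq_zero x hx := by
    rw [zoom, eval_monicOfFn_scaleCoeffs, h.eval_eq_zero _ hx.1, mul_zero]
  eval_derivative_ne_zero x hx h0 := by
    have hA0 : (A : ℂ)⁻¹ ≠ 0 := by simpa using hA.ne'
    have hmul := eval_derivative_monicOfFn_scaleCoeffs (A : ℂ)⁻¹ (l (u + (v - u) * x))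
      (a (u + (v - u) * x))
    rw [zoom] at h0
    rw [h0, mul_zero] at hmul
    exact mul_ne_zero (pow_ne_zero d hA0) (h.eval_derivative_ne_zero _ hx.1) hmul.symm

lemma IsSimpleRootOn.setLIntegral_inter_Ioo_le_rootEnergy_zoom (h : IsSimpleRootOn a Ω l)
    (hp : 0 ≤ p) (huv : u < v) (hA : 0 < A) :
    ∫⁻ t in Ω ∩ Ioo u v, ‖rootVelocity (a t) (a' t) (l t)‖ₑ ^ p ≤
      ENNReal.ofReal ((v - u) * (A / (v - u)) ^ p) *
        rootEnergy p (zoom u v A a) (zoom u v A fun t => (v - u) • a' t) := by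
  have hℓ : 0 < v - u := sub_pos.2 huv
  have hA0 : (A : ℂ)⁻¹ ≠ 0 := by simpa using hA.ne'
  have hscale (t : ℝ) : ‖rootVelocity (a t) (a' t) (l t)‖ₑ ^ p =
      ENNReal.ofReal ((A / (v - u)) ^ p) *
        ‖rootVelocity (scaleCoeffs (A : ℂ)⁻¹ (a t)) (scaleCoeffs (A : ℂ)⁻¹ ((v - u) • a' t))
          ((A : ℂ)⁻¹ * l t)‖ₑ ^ p := by
    rw [← ENNReal.ofReal_rpow_of_nonneg (by positivity) hp, ← ENNReal.mul_rpow_of_nonneg _ _ hp,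
      rootVelocity_scaleCoeffs hA0, ← ofReal_norm, ← ofReal_norm,
      ← ENNReal.ofReal_mul (by positivity)]
    congr 2
    rw [norm_mul, norm_mul, norm_inv, Complex.norm_real, Complex.norm_real,
      Real.norm_of_nonneg hℓ.le, Real.norm_of_nonneg hA.le]
    field_simp
  rw [setLIntegral_comp_affine huv (h.measurableSet.inter measurableSet_Ioo)]
  simp_rw [hscale]
  rw [lintegral_const_mul' _ _ ENNReal.ofReal_ne_top, ← mul_assoc, ← ENNReal.ofReal_mul hℓ.le]
  gcongr
  exact (h.comp_affine huv hA).setLIntegral_le_rootEnergy p _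

end Scaling

section Window

variable {d N : ℕ} {p u v A M : ℝ} {a a' : ℝ → Fin d → ℂ} {h : ℝ → ℝ}

lemma LipschitzDerivChain.comp_affine {E : Type*} [NormedAddCommGroup E] [NormedSpace ℝ E]
    {k : ℕ} {W : ℝ} {F : ℕ → ℝ → E} (hF : LipschitzDerivChain k M (Ioo 0 1) F) (hu : 0 ≤ u)
    (huv : u < v) (hv : v ≤ 1) (hW : 0 < W) (hM : 0 ≤ M) (hWM : (v - u) ^ (k + 1) ≤ W) :
    LipschitzDerivChain k (max (W⁻¹ * M) M) (Ioo 0 1)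
        (fun j x => (W⁻¹ * (v - u) ^ j) • F j (u + (v - u) * x)) ∧
      ∀ x ∈ Ioo (0 : ℝ) 1, ∀ y ∈ Ioo (0 : ℝ) 1, ‖(W⁻¹ * (v - u) ^ k) • F k (u + (v - u) * x) -
        (W⁻¹ * (v - u) ^ k) • F k (u + (v - u) * y)‖ ≤ M * |x - y| := by
  have hℓ : 0 < v - u := sub_pos.2 huv
  have hmem {x : ℝ} (hx : x ∈ Ioo (0 : ℝ) 1) : u + (v - u) * x ∈ Ioo (0 : ℝ) 1 :=
    Ioo_subset_Ioo hu hv ((affine_mem_Ioo_iff huv).2 hx)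
  have hlip : ∀ x ∈ Ioo (0 : ℝ) 1, ∀ y ∈ Ioo (0 : ℝ) 1,
      ‖(W⁻¹ * (v - u) ^ k) • F k (u + (v - u) * x) -
        (W⁻¹ * (v - u) ^ k) • F k (u + (v - u) * y)‖ ≤ M * |x - y| := fun x hx y hy => by
    rw [← smul_sub, norm_smul, Real.norm_of_nonneg (by positivity)]
    calc W⁻¹ * (v - u) ^ k * ‖F k (u + (v - u) * x) - F k (u + (v - u) * y)‖
        ≤ W⁻¹ * (v - u) ^ k * (M * |(u + (v - u) * x) - (u + (v - u) * y)|) := by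
          gcongr
          exact hF.norm_sub_le _ (hmem hx) _ (hmem hy)
      _ = W⁻¹ * (v - u) ^ (k + 1) * (M * |x - y|) := by
          rw [add_sub_add_left_eq_sub, ← mul_sub, abs_mul, abs_of_pos hℓ]
          ring
      _ ≤ 1 * (M * |x - y|) := by
          gcongr
          rwa [inv_mul_le_one₀ hW]
      _ = M * |x - y| := one_mul _
  refine ⟨⟨fun j hj x hx => ?_, fun j hj x hx => ?_, fun x hx y hy => (hlip x hx y hy).trans
    (by gcongr; exact le_max_right _ _)⟩, hlip⟩
  · have hder := ((hF.hasDerivAt j hj _ (hmem hx)).scomp x (hasDerivAt_affine u v x)).const_smul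
      (W⁻¹ * (v - u) ^ j)
    rwa [smul_smul, mul_assoc, ← pow_succ] at hder
  · rw [norm_smul, Real.norm_of_nonneg (by positivity)]
    refine le_max_of_le_left ?_
    calc W⁻¹ * (v - u) ^ j * ‖F j (u + (v - u) * x)‖ ≤ W⁻¹ * 1 * M := by
          gcongr
          · exact pow_le_one₀ hℓ.le (by linarith)
          · exact hF.norm_le j hj _ (hmem hx)
      _ = W⁻¹ * M := by rw [mul_one]

/- The bound does not depend on the size of the window: the function is bounded by `1` and its top
order difference quotients by `M`, and the intermediate derivatives are interpolated. -/
lemma ContDiffLipOn.exists_comp_affine (E : Type*) [NormedAddCommGroup E] [NormedSpace ℝ E]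
    (k : ℕ) : ∃ C : ℝ, 1 ≤ C ∧ ∀ (f : ℝ → E) (M W u v : ℝ), ContDiffLipOn k M (Ioo 0 1) f →
      0 ≤ u → u < v → v ≤ 1 → 0 < W → (v - u) ^ (k + 1) ≤ W → (∀ t ∈ Ioo u v, ‖f t‖ ≤ W) →
      ContDiffLipOn k (C * (1 + M)) (Ioo 0 1) (fun x => W⁻¹ • f (u + (v - u) * x)) := by
  obtain ⟨C, hC, hbound⟩ := LipschitzDerivChain.exists_norm_le (E := E) k
  refine ⟨C, hC, fun f M W u v hf hu huv hv hW hWℓ hfW => ?_⟩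
  have hM : 0 ≤ M := hf.nonneg (nonempty_Ioo.2 one_pos)
  obtain ⟨F, rfl, hF⟩ := hf
  obtain ⟨hchain, hlip⟩ := hF.comp_affine hu huv hv hW hM hWℓ
  refine ⟨_, by simp, hchain.hasDerivAt, hbound _ _ 1 M hchain (fun x hx => ?_) hlip,
    fun x hx y hy => (hlip x hx y hy).trans ?_⟩
  · rw [pow_zero, mul_one, norm_smul, norm_inv, Real.norm_of_nonneg hW.le, inv_mul_le_one₀ hW]
    exact hfW _ ((affine_mem_Ioo_iff huv).2 hx)
  · gcongr
    nlinarith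

lemma exists_contDiffLipOn_zoom (hd : d ≤ N + 2) (M : ℝ) :
    ∃ M' : ℝ, 0 ≤ M' ∧ ∀ (a : ℝ → Fin d → ℂ) (u v A : ℝ), ContDiffLipOn (N + 1) M (Ioo 0 1) a →
      0 ≤ u → u < v → v ≤ 1 → v - u ≤ A → (∀ t ∈ Ioo u v, coeffGauge (a t) ≤ A) →
      ContDiffLipOn (N + 1) M' (Ioo 0 1) (zoom u v A a) := by
  obtain ⟨C, -, h⟩ := ContDiffLipOn.exists_comp_affine ℂ (N + 1)
  refine ⟨max (C * (1 + M)) 0, le_max_right _ _, fun a u v A ha hu huv hv hA hgauge => ?_⟩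
  have hA0 : 0 < A := (sub_pos.2 huv).trans_le hA
  have hM : 0 ≤ M := ha.nonneg (nonempty_Ioo.2 one_pos)
  refine ContDiffLipOn.pi (le_max_right _ _) fun i => ?_
  have hi : (v - u) ^ (N + 1 + 1) ≤ A ^ (d - i : ℕ) :=
    (pow_le_pow_of_le_one (sub_pos.2 huv).le (by linarith) (by omega)).trans
      (pow_le_pow_left₀ (sub_pos.2 huv).le hA _)
  have hai : ContDiffLipOn (N + 1) M (Ioo 0 1) (fun t => a t i) :=
    ha.clm_apply_of_norm_le_one (norm_proj_le_one i) hM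
  have := (h _ M _ u v hai hu huv hv (by positivity) hi fun t ht =>
    (coeffGauge_le_iff hA0.le).1 (hgauge t ht) i).mono (le_max_left _ 0)
  simpa [zoom, scaleCoeffs] using this

namespace IsSpeedDensity

lemma intervalIntegrable (hh : IsSpeedDensity p a a' h) (hu : 0 ≤ u) (huv : u ≤ v) (hv : v ≤ 1) :
    IntervalIntegrable h volume u v :=
  (intervalIntegrable_iff_integrableOn_Ioo_of_le huv).2
    (hh.integrableOn.mono_set (Ioo_subset_Ioo hu hv))

lemma intervalIntegrable_rpow (hh : IsSpeedDensity p a a' h) (hu : 0 ≤ u) (huv : u ≤ v)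
    (hv : v ≤ 1) : IntervalIntegrable (fun t => h t ^ p) volume u v :=
  (intervalIntegrable_iff_integrableOn_Ioo_of_le huv).2
    (hh.integrableOn_rpow.mono_set (Ioo_subset_Ioo hu hv))

lemma sub_le_integral (hh : IsSpeedDensity p a a' h) (hu : 0 ≤ u) (huv : u ≤ v) (hv : v ≤ 1) :
    v - u ≤ ∫ t in u..v, h t := by
  simpa using intervalIntegral.integral_mono_on huv (intervalIntegrable_const (c := (1 : ℝ)))
    (hh.intervalIntegrable hu huv hv) fun t _ => hh.one_le t

lemma sub_mul_average_rpow_le (hh : IsSpeedDensity p a a' h) (hp : 1 ≤ p) (hu : 0 ≤ u)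
    (huv : u < v) (hv : v ≤ 1) :
    (v - u) * ((∫ t in u..v, h t) / (v - u)) ^ p ≤ ∫ t in u..v, h t ^ p := by
  have hℓ : 0 < v - u := sub_pos.2 huv
  have hjensen := (convexOn_rpow hp).map_set_average_le (t := Ioc u v) (μ := volume) (f := h)
    (Real.continuous_rpow_const (zero_le_one.trans hp)).continuousOn isClosed_Ici
    (by simpa using huv) (by simp)
    (ae_of_all _ fun t => zero_le_one.trans (hh.one_le t))
    (hh.intervalIntegrable hu huv.le hv).1 (hh.intervalIntegrable_rpow hu huv.le hv).1
  rw [← uIoc_of_le huv.le, interval_average_eq, interval_average_eq, smul_eq_mul, smul_eq_mul,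
    inv_mul_eq_div, le_inv_mul_iff₀ hℓ] at hjensen
  exact hjensen

lemma norm_sub_le (hh : IsSpeedDensity p a a' h) (ha : ContDiffLipOn (N + 1) M (Ioo 0 1) a)
    (ha' : ∀ t ∈ Ioo (0 : ℝ) 1, HasDerivAt a (a' t) t) (hu : 0 ≤ u) (huv : u < v) (hv : v ≤ 1)
    (hA : 0 < A) (hgauge : ∀ t ∈ Ioo u v, coeffGauge (a t) ≤ A) {s t : ℝ} (hs : s ∈ Ioo u v)
    (ht : t ∈ Ioo u v) (i : Fin d) :
    ‖a t i - a s i‖ ≤ A ^ (d - i : ℕ) / A * ∫ r in u..v, h r := by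
  have hsub : uIcc s t ⊆ Ioo u v := (convex_Ioo u v).ordConnected.uIcc_subset hs ht
  have hsub' : uIcc s t ⊆ Ioo 0 1 := hsub.trans (Ioo_subset_Ioo hu hv)
  have hsub_uIoc : uIoc s t ⊆ uIoc u v := by
    rw [uIoc_of_le huv.le]
    exact uIoc_subset_uIcc.trans (hsub.trans Ioo_subset_Ioc_self)
  have hint := hh.intervalIntegrable hu huv.le hv
  have hftc : ∫ r in s..t, a' r i = a t i - a s i :=
    intervalIntegral.integral_eq_sub_of_hasDerivAt
      (fun r hr => hasDerivAt_pi.1 (ha' r (hsub' hr)) i)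
      ((continuousOn_pi.1 (ha.of_hasDerivAt isOpen_Ioo ha').continuousOn i).mono
        hsub').intervalIntegrable
  have hspeed : ∀ᵐ r ∂volume.restrict (uIoc s t), ‖a' r i‖ ≤ A ^ (d - i : ℕ) / A * h r := by
    filter_upwards [ae_restrict_of_ae_restrict_of_subset (uIoc_subset_uIcc.trans hsub')
      (hh.norm_le i), ae_restrict_mem measurableSet_uIoc] with r hr hrmem
    have hpow : A ^ (d - i : ℕ) / A = (A ^ (d - i : ℕ)) ^ (1 - ((d - i : ℕ) : ℝ)⁻¹) := by
      rw [Real.rpow_sub (by positivity), Real.rpow_one, Real.pow_rpow_inv_natCast hA.le (by omega)]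
    refine hr.trans ?_
    rw [mul_comm, hpow]
    gcongr
    · exact zero_le_one.trans (hh.one_le r)
    · exact one_sub_inv_weight_nonneg i
    · exact (coeffGauge_le_iff hA.le).1 (hgauge r (hsub (uIoc_subset_uIcc hrmem))) i
  calc ‖a t i - a s i‖ ≤ |∫ r in s..t, A ^ (d - i : ℕ) / A * h r| := by
        rw [← hftc]
        exact intervalIntegral.norm_integral_le_abs_of_norm_le hspeed
          ((hint.mono_set' hsub_uIoc).const_mul _)
    _ = A ^ (d - i : ℕ) / A * |∫ r in s..t, h r| := by
        rw [intervalIntegral.integral_const_mul, abs_mul, abs_of_pos (by positivity)]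
    _ ≤ A ^ (d - i : ℕ) / A * |∫ r in u..v, h r| :=
        mul_le_mul_of_nonneg_left (intervalIntegral.abs_integral_mono_interval hsub_uIoc
          (ae_of_all _ fun r => zero_le_one.trans (hh.one_le r)) hint) (by positivity)
    _ = A ^ (d - i : ℕ) / A * ∫ r in u..v, h r := by
        rw [abs_of_nonneg ((sub_pos.2 huv).le.trans (hh.sub_le_integral hu huv.le hv))]

end IsSpeedDensity

end Window

section CenteredBound

open Polynomial

variable {d N : ℕ} {p M : ℝ}

lemma isCompact_setOf_coeffGauge_mem_Icc (δ : ℝ) :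
    IsCompact {c : Fin (d + 1) → ℂ | c (Fin.last d) = 0 ∧ coeffGauge c ∈ Icc δ 1} := by
  refine Metric.isCompact_of_isClosed_isBounded ?_ ?_
  · exact (isClosed_eq (continuous_apply _) continuous_const).inter
      (isClosed_Icc.preimage continuous_coeffGauge)
  · exact (Metric.isBounded_closedBall (x := 0) (r := 1)).subset fun c hc =>
      mem_closedBall_zero_iff.2 (coeffGauge_le_one_iff.1 hc.2.2)

lemma norm_zoom_sub_zoom_apply {u v A : ℝ} (hA : 0 < A) (a : ℝ → Fin d → ℂ) (x y : ℝ) (i : Fin d) :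
    ‖zoom u v A a x i - zoom u v A a y i‖ =
      ‖a (u + (v - u) * x) i - a (u + (v - u) * y) i‖ / A ^ (d - i : ℕ) := by
  rw [zoom, zoom, scaleCoeffs, scaleCoeffs, ← mul_sub, norm_mul, norm_pow, norm_inv,
    Complex.norm_real, Real.norm_of_nonneg hA.le, inv_pow, inv_mul_eq_div]

/- As `h` dominates the speed, the rescaled coefficients oscillate by at most `1 / θ`. -/
lemma IsSpeedDensity.exists_mapsTo_zoom_ball {a a' : ℝ → Fin (d + 1) → ℂ} {h : ℝ → ℝ}
    {u v θ ε : ℝ} (hh : IsSpeedDensity p a a' h) (ha : ContDiffLipOn (N + 1) M (Ioo 0 1) a)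
    (ha' : ∀ t ∈ Ioo (0 : ℝ) 1, HasDerivAt a (a' t) t)
    (hlast : ∀ t ∈ Ioo (0 : ℝ) 1, a t (Fin.last d) = 0) (hu : 0 ≤ u) (huv : u < v) (hv : v ≤ 1)
    (hθ : 0 < θ) (hε : 0 < ε) (hθε : 1 < ε * θ)
    (hle : ∀ t ∈ Ioo u v, coeffGauge (a t) ≤ θ * ∫ t in u..v, h t)
    (hge : ∃ t ∈ Ioo u v, θ * (∫ t in u..v, h t) / 2 ≤ coeffGauge (a t)) :
    ∃ c ∈ {c : Fin (d + 1) → ℂ | c (Fin.last d) = 0 ∧ coeffGauge c ∈ Icc (1 / 2) 1},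
      MapsTo (zoom u v (θ * ∫ t in u..v, h t) a) (Ioo 0 1) (Metric.ball c ε) := by
  obtain ⟨t₀, ht₀, hge⟩ := hge
  have hν0 : 0 < ∫ t in u..v, h t := (sub_pos.2 huv).trans_le (hh.sub_le_integral hu huv.le hv)
  set ν := ∫ t in u..v, h t
  have hA : 0 < θ * ν := by positivity
  have hx₀ : u + (v - u) * ((t₀ - u) / (v - u)) = t₀ := by
    have : v - u ≠ 0 := (sub_pos.2 huv).ne'
    field_simp
    ring
  have hgauge (t : ℝ) : coeffGauge (scaleCoeffs ((θ * ν : ℝ) : ℂ)⁻¹ (a t)) =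
      (θ * ν)⁻¹ * coeffGauge (a t) := by
    rw [coeffGauge_scaleCoeffs, norm_inv, Complex.norm_real, Real.norm_of_nonneg hA.le]
  refine ⟨zoom u v (θ * ν) a ((t₀ - u) / (v - u)), ⟨?_, ?_, ?_⟩, fun x hx => ?_⟩
  · rw [zoom, hx₀, scaleCoeffs, hlast t₀ (Ioo_subset_Ioo hu hv ht₀), mul_zero]
  · rw [zoom, hx₀, hgauge, le_inv_mul_iff₀ hA]
    linarith
  · rw [zoom, hx₀, hgauge, inv_mul_le_one₀ hA]
    exact hle t₀ ht₀
  · rw [mem_ball_iff_norm, pi_norm_lt_iff hε]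
    intro i
    rw [Pi.sub_apply, norm_zoom_sub_zoom_apply hA, hx₀]
    have hosc := hh.norm_sub_le ha ha' hu huv hv hA hle ht₀ ((affine_mem_Ioo_iff huv).2 hx) i
    calc _ ≤ (θ * ν) ^ (d + 1 - i : ℕ) / (θ * ν) * ν / (θ * ν) ^ (d + 1 - i : ℕ) := by gcongr
      _ = 1 / θ := by field_simp
      _ < ε := (div_lt_iff₀ hθ).2 hθε

/- Rescaling the window brings the coefficients close to a nonzero vector of bounded size, near
which the polynomials split into factors of lower degree. -/
lemma exists_setLIntegral_le_of_le_coeffGauge (hp : 1 ≤ p) (hd : d + 1 ≤ N + 2)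
    (IH : ∀ k, 1 ≤ k → k ≤ d → UniformVelocityBound N p k) (M : ℝ) :
    ∃ θ₀ : ℝ, 1 ≤ θ₀ ∧ ∃ C : ℝ≥0∞, C ≠ ⊤ ∧ ∀ (a a' : ℝ → Fin (d + 1) → ℂ) (h : ℝ → ℝ)
      (Ω : Set ℝ) (l : ℝ → ℂ), ContDiffLipOn (N + 1) M (Ioo 0 1) a →
      (∀ t ∈ Ioo (0 : ℝ) 1, HasDerivAt a (a' t) t) →
      (∀ t ∈ Ioo (0 : ℝ) 1, a t (Fin.last d) = 0) → IsSpeedDensity p a a' h →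
      IsSimpleRootOn a Ω l → ∀ θ ≥ θ₀, ∀ u v : ℝ, 0 ≤ u → u < v → v ≤ 1 →
      (∀ t ∈ Ioo u v, coeffGauge (a t) ≤ θ * ∫ t in u..v, h t) →
      (∃ t ∈ Ioo u v, θ * (∫ t in u..v, h t) / 2 ≤ coeffGauge (a t)) →
      ∫⁻ t in Ω ∩ Ioo u v, ‖rootVelocity (a t) (a' t) (l t)‖ₑ ^ p ≤
        C * ENNReal.ofReal (θ ^ p * ∫ t in u..v, h t ^ p) := by
  obtain ⟨M', hM', hzoom⟩ := exists_contDiffLipOn_zoom hd M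
  obtain ⟨ε, hε, C, hC, hcompact⟩ := exists_rootEnergy_le_of_isCompact IH
    (isCompact_setOf_coeffGauge_mem_Icc (1 / 2))
    (fun c hc => ⟨coeffGauge_pos_iff.1 (one_half_pos.trans_le hc.2.1), hc.1⟩) hM'
  refine ⟨max 1 (2 / ε), le_max_left _ _, C, hC, ?_⟩
  intro a a' h Ω l ha ha' hlast hh hl θ hθ u v hu huv hv hle hge
  have hθ1 : 1 ≤ θ := (le_max_left _ _).trans hθ
  have hθε : 1 < ε * θ := by
    linarith [(div_le_iff₀' hε).1 ((le_max_right _ _).trans hθ)]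
  have hnear := hh.exists_mapsTo_zoom_ball ha ha' hlast hu huv hv (by positivity) hε hθε hle hge
  have hℓ : 0 < v - u := sub_pos.2 huv
  have hν : v - u ≤ ∫ t in u..v, h t := hh.sub_le_integral hu huv.le hv
  set ν := ∫ t in u..v, h t
  have hν0 : 0 < ν := hℓ.trans_le hν
  have hjensen : (v - u) * (θ * ν / (v - u)) ^ p ≤ θ ^ p * ∫ t in u..v, h t ^ p := by
    rw [mul_div_assoc, Real.mul_rpow (by positivity) (by positivity), mul_left_comm]
    gcongr
    exact hh.sub_mul_average_rpow_le hp hu huv hv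
  calc ∫⁻ t in Ω ∩ Ioo u v, ‖rootVelocity (a t) (a' t) (l t)‖ₑ ^ p
      ≤ ENNReal.ofReal ((v - u) * (θ * ν / (v - u)) ^ p) *
          rootEnergy p (zoom u v (θ * ν) a) (zoom u v (θ * ν) fun t => (v - u) • a' t) :=
        hl.setLIntegral_inter_Ioo_le_rootEnergy_zoom (zero_le_one.trans hp) huv (by positivity)
    _ ≤ ENNReal.ofReal (θ ^ p * ∫ t in u..v, h t ^ p) * C := by
        gcongr
        exact hcompact _ _ (hzoom a u v _ ha hu huv hv (by nlinarith) hle)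
          (fun x hx => hasDerivAt_zoom
            (ha' _ (Ioo_subset_Ioo hu hv ((affine_mem_Ioo_iff huv).2 hx)))) hnear
    _ = C * ENNReal.ofReal (θ ^ p * ∫ t in u..v, h t ^ p) := mul_comm _ _

lemma exists_integral_eq_half {h : ℝ → ℝ} {u v : ℝ} (huv : u < v)
    (hint : IntervalIntegrable h volume u v) (hpos : 0 < ∫ t in u..v, h t) :
    ∃ w ∈ Ioo u v, ∫ t in u..w, h t = (∫ t in u..v, h t) / 2 ∧
      ∫ t in w..v, h t = (∫ t in u..v, h t) / 2 := by
  have hcont : ContinuousOn (fun x => ∫ t in u..x, h t) (Icc u v) := by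
    have := intervalIntegral.continuousOn_primitive_interval' hint left_mem_uIcc
    rwa [uIcc_of_le huv.le] at this
  obtain ⟨w, hw, hwν⟩ := intermediate_value_Ioo huv.le hcont
    (show (∫ t in u..v, h t) / 2 ∈ Ioo (∫ t in u..u, h t) _ by
      rw [intervalIntegral.integral_same]
      constructor <;> linarith)
  have hw' : w ∈ uIcc u v := Icc_subset_uIcc (Ioo_subset_Icc_self hw)
  have hadd := intervalIntegral.integral_add_adjacent_intervals
    (hint.mono_set (uIcc_subset_uIcc_left hw')) (hint.mono_set (uIcc_subset_uIcc_right hw'))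
  exact ⟨w, hw, hwν, by linarith⟩

/- Halve the mass of `h` until the gauge is somewhere at least half of its permitted size. Where the
gauge exceeds a fixed `δ > 0`, this happens after boundedly many halvings. -/
lemma IsSpeedDensity.setLIntegral_lt_le_of_window_bound {a a' : ℝ → Fin d → ℂ} {h : ℝ → ℝ}
    (hh : IsSpeedDensity p a a' h) {θ δ : ℝ} (hθ : 0 < θ) (hδ : 0 < δ) {Ω : Set ℝ}
    {f : ℝ → ℝ≥0∞} {C : ℝ≥0∞}
    (hbound : ∀ u v, 0 ≤ u → u < v → v ≤ 1 →
      (∀ t ∈ Ioo u v, coeffGauge (a t) ≤ θ * ∫ t in u..v, h t) →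
      (∃ t ∈ Ioo u v, θ * (∫ t in u..v, h t) / 2 ≤ coeffGauge (a t)) →
      ∫⁻ t in Ω ∩ Ioo u v, f t ≤ C * ENNReal.ofReal (θ ^ p * ∫ t in u..v, h t ^ p))
    (hle : ∀ t ∈ Ioo (0 : ℝ) 1, coeffGauge (a t) ≤ θ * ∫ t in (0 : ℝ)..1, h t) :
    ∫⁻ t in Ioo 0 1, f t ∂(volume.restrict Ω).restrict {t | δ < coeffGauge (a t)} ≤
      C * ENNReal.ofReal (θ ^ p * ∫ t in (0 : ℝ)..1, h t ^ p) := by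
  obtain ⟨k, hk⟩ := pow_unbounded_of_one_lt ((θ * ∫ t in (0 : ℝ)..1, h t) / δ) one_lt_two
  rw [div_lt_iff₀ hδ] at hk
  refine setLIntegral_Ioo_le_of_bisection
    (w := fun u v => C * ENNReal.ofReal (θ ^ p * ∫ t in u..v, h t ^ p))
    (P := fun k u v => 0 ≤ u ∧ u < v ∧ v ≤ 1 ∧
      (∀ t ∈ Ioo u v, coeffGauge (a t) ≤ θ * ∫ t in u..v, h t) ∧
      θ * (∫ t in u..v, h t) ≤ 2 ^ k * δ) ?_ ?_ k ⟨le_rfl, one_pos, le_rfl, hle, hk.le⟩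
  · rintro u v ⟨-, -, -, hle, hδle⟩
    have hempty : Ioo u v ∩ {t | δ < coeffGauge (a t)} = ∅ := eq_empty_of_forall_notMem
      fun t ht => ht.2.not_ge ((hle t ht.1).trans (by simpa using hδle))
    simp [Measure.restrict_restrict measurableSet_Ioo, hempty]
  · rintro k u v ⟨hu, huv, hv, hle, hδle⟩
    by_cases hge : ∃ t ∈ Ioo u v, θ * (∫ t in u..v, h t) / 2 ≤ coeffGauge (a t)
    · refine Or.inl (le_trans ?_ (hbound u v hu huv hv hle hge))
      refine (lintegral_mono' (Measure.restrict_mono subset_rfl Measure.restrict_le_self)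
        le_rfl).trans_eq ?_
      rw [Measure.restrict_restrict measurableSet_Ioo, inter_comm]
    push Not at hge
    obtain ⟨w, ⟨huw, hwv⟩, hleft, hright⟩ := exists_integral_eq_half huv
      (hh.intervalIntegrable hu huv.le hv)
      ((sub_pos.2 huv).trans_le (hh.sub_le_integral hu huv.le hv))
    have hw : 0 ≤ w ∧ w ≤ 1 := ⟨hu.trans huw.le, hwv.le.trans hv⟩
    have hδhalf : θ * ((∫ t in u..v, h t) / 2) ≤ 2 ^ k * δ := by
      rw [pow_succ'] at hδle
      linarith
    refine Or.inr ⟨w, ⟨hu, huw, hw.2, fun t ht => ?_, hleft ▸ hδhalf⟩,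
      ⟨hw.1, hwv, hv, fun t ht => ?_, hright ▸ hδhalf⟩, ?_⟩
    · rw [hleft, ← mul_div_assoc]
      exact (hge t ⟨ht.1, ht.2.trans hwv⟩).le
    · rw [hright, ← mul_div_assoc]
      exact (hge t ⟨huw.trans ht.1, ht.2⟩).le
    · have hnonneg : ∀ u v : ℝ, u ≤ v → 0 ≤ θ ^ p * ∫ t in u..v, h t ^ p := fun u v huv =>
        mul_nonneg (by positivity) (intervalIntegral.integral_nonneg huv fun t _ =>
          Real.rpow_nonneg (zero_le_one.trans (hh.one_le t)) p)
      rw [← mul_add, ← ENNReal.ofReal_add (hnonneg _ _ huw.le) (hnonneg _ _ hwv.le), ← mul_add,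
        intervalIntegral.integral_add_adjacent_intervals
          (hh.intervalIntegrable_rpow hu huw.le hw.2) (hh.intervalIntegrable_rpow hw.1 hwv.le hv)]

lemma IsSpeedDensity.setLIntegral_le_of_window_bound {a a' : ℝ → Fin d → ℂ} {h : ℝ → ℝ}
    (hh : IsSpeedDensity p a a' h) {θ : ℝ} (hθ : 0 < θ) {Ω : Set ℝ}
    (hΩ : MeasurableSet Ω) (hsub : Ω ⊆ Ioo 0 1) (hne : ∀ t ∈ Ω, a t ≠ 0) {f : ℝ → ℝ≥0∞}
    {C : ℝ≥0∞}
    (hbound : ∀ u v, 0 ≤ u → u < v → v ≤ 1 →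
      (∀ t ∈ Ioo u v, coeffGauge (a t) ≤ θ * ∫ t in u..v, h t) →
      (∃ t ∈ Ioo u v, θ * (∫ t in u..v, h t) / 2 ≤ coeffGauge (a t)) →
      ∫⁻ t in Ω ∩ Ioo u v, f t ≤ C * ENNReal.ofReal (θ ^ p * ∫ t in u..v, h t ^ p))
    (hle : ∀ t ∈ Ioo (0 : ℝ) 1, coeffGauge (a t) ≤ θ * ∫ t in (0 : ℝ)..1, h t) :
    ∫⁻ t in Ω, f t ≤ C * ENNReal.ofReal (θ ^ p * ∫ t in (0 : ℝ)..1, h t ^ p) := by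
  refine lintegral_le_of_forall_setLIntegral_lt_le (g := fun t => coeffGauge (a t))
    ?_ fun δ hδ => ?_
  · filter_upwards [ae_restrict_mem hΩ] with t ht _
    exact coeffGauge_pos_iff.2 (hne t ht)
  · have := hh.setLIntegral_lt_le_of_window_bound hθ hδ hbound hle
    rwa [Measure.restrict_comm measurableSet_Ioo, Measure.restrict_restrict measurableSet_Ioo,
      inter_eq_right.2 hsub] at this

lemma IsSimpleRootOn.ne_zero {a : ℝ → Fin d → ℂ} {Ω : Set ℝ} {l : ℝ → ℂ}
    (hl : IsSimpleRootOn a Ω l) (hd : 2 ≤ d) {t : ℝ} (ht : t ∈ Ω) : a t ≠ 0 := by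
  intro h0
  have hroot := hl.eval_eq_zero t ht
  have hsimple := hl.eval_derivative_ne_zero t ht
  rw [h0, monicOfFn_zero, eval_pow, eval_X] at hroot
  rw [h0, monicOfFn_zero, eq_zero_of_pow_eq_zero hroot] at hsimple
  refine hsimple ?_
  simp [derivative_X_pow, show d - 1 ≠ 0 by omega]

lemma exists_rootEnergy_le_of_last_eq_zero (hp : 1 ≤ p) (hpN : p * (N + 1) < N + 2) (hd : 1 ≤ d)
    (hdN : d + 1 ≤ N + 2) (IH : ∀ k, 1 ≤ k → k ≤ d → UniformVelocityBound N p k) (M : ℝ) :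
    ∃ C : ℝ≥0∞, C ≠ ⊤ ∧ ∀ a a' : ℝ → Fin (d + 1) → ℂ, ContDiffLipOn (N + 1) M (Ioo 0 1) a →
      (∀ t ∈ Ioo (0 : ℝ) 1, HasDerivAt a (a' t) t) →
      (∀ t ∈ Ioo (0 : ℝ) 1, a t (Fin.last d) = 0) → rootEnergy p a a' ≤ C := by
  obtain ⟨S, hS⟩ := exists_isSpeedDensity (abs_nonneg M) hp hpN hdN
  obtain ⟨θ₀, hθ₀, C, hC, hwindow⟩ := exists_setLIntegral_le_of_le_coeffGauge hp hdN IH M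
  set θ := θ₀ + |M|
  have hθ : 1 ≤ θ := le_add_of_le_of_nonneg hθ₀ (abs_nonneg M)
  refine ⟨C * ENNReal.ofReal (θ ^ p * S), by finiteness, fun a a' ha ha' hlast => ?_⟩
  obtain ⟨h, hh, hhS⟩ := hS a a' (ha.mono (le_abs_self M)) ha'
  have hgauge : ∀ t ∈ Ioo (0 : ℝ) 1, coeffGauge (a t) ≤ θ * ∫ t in (0 : ℝ)..1, h t := by
    intro t ht
    have hmass : (1 : ℝ) ≤ ∫ t in (0 : ℝ)..1, h t := by
      simpa using hh.sub_le_integral le_rfl zero_le_one le_rfl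
    refine (coeffGauge_le_of_norm_le hθ ?_).trans (le_mul_of_one_le_right (by positivity) hmass)
    exact (ha.norm_le t ht).trans (by linarith [le_abs_self M])
  refine rootEnergy_le_iff.2 fun Ω l hl => ?_
  refine (hh.setLIntegral_le_of_window_bound (by positivity) hl.measurableSet hl.subset
    (fun t ht => hl.ne_zero (by omega) ht)
    (hwindow a a' h Ω l ha ha' hlast hh hl θ (le_add_of_nonneg_right (abs_nonneg M)))
    hgauge).trans ?_
  gcongr

end CenteredBound

section Tschirnhausen

open Polynomial

variable {d N : ℕ} {p : ℝ}

/-- The Tschirnhausen transform: the coefficients of `monicOfFn (d + 1) c` translated so that the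
coefficient of `X ^ d` vanishes. -/
def tschirnhausen (c : Fin (d + 1) → ℂ) : Fin (d + 1) → ℂ :=
  fun i => (taylor (-(c (Fin.last d) / (d + 1))) (monicOfFn (d + 1) c)).coeff i

lemma monicOfFn_tschirnhausen (c : Fin (d + 1) → ℂ) : monicOfFn (d + 1) (tschirnhausen c) =
    taylor (-(c (Fin.last d) / (d + 1))) (monicOfFn (d + 1) c) :=
  monicOfFn_coeff ((leadingCoeff_taylor (r := _) (f := _)).trans (monicOfFn_monic c))
    ((natDegree_taylor _ _).trans (natDegree_monicOfFn c))

lemma tschirnhausen_apply (c : Fin (d + 1) → ℂ) (i : Fin (d + 1)) : tschirnhausen c i =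
    (-(c (Fin.last d) / (d + 1))) ^ (d + 1 - i : ℕ) * (d + 1).choose i +
      ∑ j : Fin (d + 1),
        c j * ((-(c (Fin.last d) / (d + 1))) ^ (j - i : ℕ) * (j : ℕ).choose i) := by
  simp only [tschirnhausen, monicOfFn, ofFn_eq_sum_monomial, map_add, map_sum, taylor_X_pow,
    taylor_monomial, coeff_add, finsetSum_coeff, coeff_C_mul, coeff_X_add_C_pow]

lemma contDiff_tschirnhausen {n : WithTop ℕ∞} : ContDiff ℝ n (tschirnhausen (d := d)) := by
  simp only [contDiff_pi, tschirnhausen_apply]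
  fun_prop

lemma tschirnhausen_last (c : Fin (d + 1) → ℂ) : tschirnhausen c (Fin.last d) = 0 := by
  have hd : (d + 1 : ℂ) ≠ 0 := by exact_mod_cast d.succ_ne_zero
  rw [tschirnhausen_apply, Fin.sum_univ_castSucc]
  simp [Nat.choose_eq_zero_of_lt, div_mul_cancel₀ _ hd]

lemma derivative_taylor_apply {R : Type*} [CommSemiring R] (r : R) (f : R[X]) :
    derivative (taylor r f) = taylor r (derivative f) := by
  simp [taylor_apply, derivative_comp]

lemma rootVelocity_eq_sub_of_monicOfFn_eq_taylor {a b : ℝ → Fin d → ℂ} {a' b' : Fin d → ℂ}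
    {r : ℝ → ℂ} {r' z : ℂ} {t : ℝ} (ha : HasDerivAt a a' t) (hb : HasDerivAt b b' t)
    (hr : HasDerivAt r r' t) (hab : ∀ s, monicOfFn d (b s) = taylor (r s) (monicOfFn d (a s)))
    (hz : eval (z + r t) (derivative (monicOfFn d (a t))) ≠ 0) :
    rootVelocity (b t) b' z = rootVelocity (a t) a' (z + r t) - r' := by
  have hsum : eval z (ofFn d b') = eval (z + r t) (ofFn d a') +
      eval (z + r t) (derivative (monicOfFn d (a t))) * r' := by
    have hleft := hasDerivWithinAt_eval_monicOfFn (s := univ) hb.hasDerivWithinAt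
      (hasDerivWithinAt_const t _ z)
    have hright := hasDerivWithinAt_eval_monicOfFn (s := univ) ha.hasDerivWithinAt
      (hr.const_add z).hasDerivWithinAt
    simp only [hab, taylor_eval, mul_zero, add_zero, hasDerivWithinAt_univ] at hleft hright
    exact hleft.unique hright
  rw [rootVelocity, rootVelocity, hsum, hab, derivative_taylor_apply, taylor_eval]
  field_simp
  ring

lemma IsSimpleRootOn.sub_of_monicOfFn_eq_taylor {a b : ℝ → Fin d → ℂ} {r l : ℝ → ℂ} {Ω : Set ℝ}
    (hl : IsSimpleRootOn a Ω l) (hr : ContinuousOn r (Ioo 0 1))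
    (hab : ∀ t, monicOfFn d (b t) = taylor (r t) (monicOfFn d (a t))) :
    IsSimpleRootOn b Ω (fun t => l t - r t) where
  measurableSet := hl.measurableSet
  subset := hl.subset
  continuousOn := hl.continuousOn.sub (hr.mono hl.subset)
  eval_eq_zero t ht := by simpa [hab, taylor_eval] using hl.eval_eq_zero t ht
  eval_derivative_ne_zero t ht := by
    simpa [hab, derivative_taylor_apply, taylor_eval] using hl.eval_derivative_ne_zero t ht

lemma rootEnergy_le_of_monicOfFn_eq_taylor {a a' b b' : ℝ → Fin d → ℂ} {r r' : ℝ → ℂ} {K : ℝ}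
    (hp : 1 ≤ p) (ha : ∀ t ∈ Ioo (0 : ℝ) 1, HasDerivAt a (a' t) t)
    (hb : ∀ t ∈ Ioo (0 : ℝ) 1, HasDerivAt b (b' t) t)
    (hr : ∀ t ∈ Ioo (0 : ℝ) 1, HasDerivAt r (r' t) t) (hK : ∀ t ∈ Ioo (0 : ℝ) 1, ‖r' t‖ ≤ K)
    (hab : ∀ t, monicOfFn d (b t) = taylor (r t) (monicOfFn d (a t))) :
    rootEnergy p a a' ≤ 2 ^ (p - 1) * (rootEnergy p b b' + ENNReal.ofReal K ^ p) := by
  refine rootEnergy_le_iff.2 fun Ω l hl => ?_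
  have hl' : IsSimpleRootOn b Ω (fun t => l t - r t) :=
    hl.sub_of_monicOfFn_eq_taylor (fun t ht => (hr t ht).continuousAt.continuousWithinAt) hab
  have hvel : ∀ t ∈ Ω, ‖rootVelocity (a t) (a' t) (l t)‖ₑ ^ p ≤
      2 ^ (p - 1) * (‖rootVelocity (b t) (b' t) (l t - r t)‖ₑ ^ p + ENNReal.ofReal K ^ p) := by
    intro t ht
    have ht' := hl.subset ht
    have hsplit := rootVelocity_eq_sub_of_monicOfFn_eq_taylor (z := l t - r t) (ha t ht')
      (hb t ht') (hr t ht') hab (by simpa using hl.eval_derivative_ne_zero t ht)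
    rw [sub_add_cancel] at hsplit
    rw [eq_add_of_sub_eq hsplit.symm]
    have hr' : ‖r' t‖ₑ ≤ ENNReal.ofReal K := by
      rw [← ofReal_norm]
      exact ENNReal.ofReal_le_ofReal (hK t ht')
    calc _ ≤ (‖rootVelocity (b t) (b' t) (l t - r t)‖ₑ + ENNReal.ofReal K) ^ p := by
          gcongr
          exact (enorm_add_le _ _).trans (by gcongr)
      _ ≤ _ := ENNReal.rpow_add_le_mul_rpow_add_rpow _ _ hp
  calc ∫⁻ t in Ω, ‖rootVelocity (a t) (a' t) (l t)‖ₑ ^ p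
      ≤ ∫⁻ t in Ω, 2 ^ (p - 1) *
          (‖rootVelocity (b t) (b' t) (l t - r t)‖ₑ ^ p + ENNReal.ofReal K ^ p) :=
        setLIntegral_mono' hl.measurableSet hvel
    _ = 2 ^ (p - 1) * ((∫⁻ t in Ω, ‖rootVelocity (b t) (b' t) (l t - r t)‖ₑ ^ p) +
          ENNReal.ofReal K ^ p * volume Ω) := by
        rw [lintegral_const_mul' _ _ (by finiteness), lintegral_add_right _ measurable_const,
          setLIntegral_const]
    _ ≤ 2 ^ (p - 1) * (rootEnergy p b b' + ENNReal.ofReal K ^ p) := by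
        gcongr
        · exact hl'.setLIntegral_le_rootEnergy p b'
        · refine mul_le_of_le_one_right' ((measure_mono hl.subset).trans ?_)
          simp

lemma rootEnergy_eq_zero_of_forall_eq_zero {a a' : ℝ → Fin d → ℂ} (hp : 0 < p)
    (ha' : ∀ t ∈ Ioo (0 : ℝ) 1, a' t = 0) : rootEnergy p a a' = 0 := by
  refine le_antisymm (rootEnergy_le_iff.2 fun Ω l hl => ?_) zero_le
  refine (setLIntegral_congr_fun hl.measurableSet fun t ht => ?_).trans_le (lintegral_zero).le
  simp [rootVelocity, ha' t (hl.subset ht), hp]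

lemma rootEnergy_eq_zero_of_degree_one {b b' : ℝ → Fin 1 → ℂ} (hp : 0 < p)
    (hb' : ∀ t ∈ Ioo (0 : ℝ) 1, HasDerivAt b (b' t) t) (hb : ∀ t ∈ Ioo (0 : ℝ) 1, b t 0 = 0) :
    rootEnergy p b b' = 0 := by
  refine rootEnergy_eq_zero_of_forall_eq_zero hp fun t ht => ?_
  have hzero : b =ᶠ[nhds t] 0 := by
    filter_upwards [isOpen_Ioo.mem_nhds ht] with s hs
    ext i
    rw [Subsingleton.elim i 0]
    exact hb s hs
  exact (hb' t ht).unique ((hasDerivAt_const t 0).congr_of_eventuallyEq hzero)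

lemma uniformVelocityBound_succ (hp : 1 ≤ p) (hpN : p * (N + 1) < N + 2) (hdN : d + 1 ≤ N + 2)
    (IH : ∀ k, 1 ≤ k → k ≤ d → UniformVelocityBound N p k) :
    UniformVelocityBound N p (d + 1) := by
  intro M
  obtain ⟨M', -, hM'⟩ := ContDiffLipOn.exists_comp (convex_Ioo 0 1) isOpen_univ
    (isCompact_closedBall (0 : Fin (d + 1) → ℂ) |M|) (convex_closedBall _ _) (subset_univ _)
    (contDiff_tschirnhausen.contDiffOn (n := (N + 1 + 1 : ℕ))) (abs_nonneg M)
  obtain ⟨C, hC, hcentered⟩ : ∃ C : ℝ≥0∞, C ≠ ⊤ ∧ ∀ b b' : ℝ → Fin (d + 1) → ℂ,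
      ContDiffLipOn (N + 1) M' (Ioo 0 1) b → (∀ t ∈ Ioo (0 : ℝ) 1, HasDerivAt b (b' t) t) →
      (∀ t ∈ Ioo (0 : ℝ) 1, b t (Fin.last d) = 0) → rootEnergy p b b' ≤ C := by
    rcases Nat.eq_zero_or_pos d with rfl | hd
    · exact ⟨0, ENNReal.zero_ne_top, fun b b' _ hb' hlast =>
        (rootEnergy_eq_zero_of_degree_one (by linarith) hb' hlast).le⟩
    · exact exists_rootEnergy_le_of_last_eq_zero hp hpN hd hdN IH M'
  refine ⟨2 ^ (p - 1) * (C + ENNReal.ofReal |M| ^ p), by finiteness, fun a a' ha ha' => ?_⟩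
  have hb : ContDiffLipOn (N + 1) M' (Ioo 0 1) (fun t => tschirnhausen (a t)) :=
    hM' a (ha.mono (le_abs_self M)) fun t ht =>
      mem_closedBall_zero_iff.2 ((ha.norm_le t ht).trans (le_abs_self M))
  obtain ⟨-, b', hb', -⟩ := ContDiffLipOn.succ_iff.1 hb
  refine (rootEnergy_le_of_monicOfFn_eq_taylor hp ha' hb'
    (r' := fun t => -(a' t (Fin.last d) / (d + 1))) (K := |M|) (fun t ht =>
      ((hasDerivAt_pi.1 (ha' t ht) (Fin.last d)).div_const _).neg) (fun t ht => ?_)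
    fun t => monicOfFn_tschirnhausen (a t)).trans ?_
  · rw [norm_neg, norm_div]
    have hd : (1 : ℝ) ≤ ‖(d + 1 : ℂ)‖ := by
      rw [← Nat.cast_succ, Complex.norm_natCast]
      exact_mod_cast Nat.succ_pos d
    refine (div_le_self (norm_nonneg _) hd).trans ((norm_le_pi_norm _ _).trans ?_)
    exact ((ha.of_hasDerivAt isOpen_Ioo ha').norm_le t ht).trans (le_abs_self M)
  · gcongr
    exact hcentered _ b' hb hb' fun t _ => tschirnhausen_last (a t)

theorem uniformVelocityBound (hp : 1 ≤ p) (hpN : p * (N + 1) < N + 2) (hd : 1 ≤ d)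
    (hdN : d ≤ N + 2) : UniformVelocityBound N p d := by
  induction d using Nat.strong_induction_on with
  | _ d ih =>
    obtain ⟨d, rfl⟩ := Nat.exists_eq_succ_of_ne_zero (Nat.one_le_iff_ne_zero.1 hd)
    exact uniformVelocityBound_succ hp hpN hdN fun k hk hkd =>
      ih k (Nat.lt_succ_of_le hkd) hk (by omega)

end Tschirnhausen

section Multiplicity

open Polynomial

variable {n : ℕ}

/-- The coefficient vector of the normalised `k`-th derivative of `monicOfFn n c`. -/
def derivCoeffs (n k : ℕ) : (Fin n → ℂ) →L[ℂ] (Fin (n - k) → ℂ) :=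
  ContinuousLinearMap.pi fun i => (((i + k).descFactorial k : ℂ) / n.descFactorial k) •
    ContinuousLinearMap.proj ⟨i + k, Nat.add_lt_of_lt_sub i.2⟩

lemma derivCoeffs_apply (k : ℕ) (c : Fin n → ℂ) (i : Fin (n - k)) :
    derivCoeffs n k c i = (i + k).descFactorial k / n.descFactorial k *
      c ⟨i + k, Nat.add_lt_of_lt_sub i.2⟩ := rfl

lemma iterate_derivative_monicOfFn {k : ℕ} (hk : k ≤ n) (c : Fin n → ℂ) :
    derivative^[k] (monicOfFn n c) =
      C (n.descFactorial k : ℂ) * monicOfFn (n - k) (derivCoeffs n k c) := by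
  have hne : (n.descFactorial k : ℂ) ≠ 0 := by
    exact_mod_cast (Nat.descFactorial_pos.2 hk).ne'
  ext s
  rw [coeff_iterate_derivative, coeff_C_mul, nsmul_eq_mul]
  rcases lt_trichotomy s (n - k) with hs | rfl | hs
  · have hsk := coeff_monicOfFn c ⟨s + k, Nat.add_lt_of_lt_sub hs⟩
    have hs' := coeff_monicOfFn (derivCoeffs n k c) ⟨s, hs⟩
    rw [derivCoeffs_apply] at hs'
    simp only at hsk hs'
    rw [hsk, hs', div_mul_eq_mul_div, mul_div_cancel₀ _ hne]
  · rw [Nat.sub_add_cancel hk]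
    have hcoeff (d : ℕ) (b : Fin d → ℂ) : (monicOfFn d b).coeff d = 1 := by
      simpa [natDegree_monicOfFn] using (monicOfFn_monic b).coeff_natDegree
    rw [hcoeff, hcoeff]
  · rw [coeff_eq_zero_of_natDegree_lt, coeff_eq_zero_of_natDegree_lt, mul_zero, mul_zero] <;>
      rw [natDegree_monicOfFn] <;> omega

lemma isRoot_iterate_derivative_monicOfFn_iff {k : ℕ} (hk : k ≤ n) (c : Fin n → ℂ) (z : ℂ) :
    (derivative^[k] (monicOfFn n c)).IsRoot z ↔
      eval z (monicOfFn (n - k) (derivCoeffs n k c)) = 0 := by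
  have hne : n.descFactorial k ≠ 0 := (Nat.descFactorial_pos.2 hk).ne'
  simp [iterate_derivative_monicOfFn hk, hne]

lemma isRoot_iterate_succ_derivative_monicOfFn_iff {k : ℕ} (hk : k ≤ n) (c : Fin n → ℂ) (z : ℂ) :
    (derivative^[k + 1] (monicOfFn n c)).IsRoot z ↔
      eval z (derivative (monicOfFn (n - k) (derivCoeffs n k c))) = 0 := by
  have hne : n.descFactorial k ≠ 0 := (Nat.descFactorial_pos.2 hk).ne'
  rw [Function.iterate_succ_apply', iterate_derivative_monicOfFn hk, derivative_C_mul]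
  simp [hne]

/-- The multiplicity of the root `z` of `monicOfFn n c`, minus one: differentiating that many times
turns `z` into a simple root. -/
def excessMultiplicity (c : Fin n → ℂ) (z : ℂ) : ℕ := rootMultiplicity z (monicOfFn n c) - 1

lemma rootMultiplicity_monicOfFn {c : Fin n → ℂ} {z : ℂ} (hz : eval z (monicOfFn n c) = 0) :
    rootMultiplicity z (monicOfFn n c) = excessMultiplicity c z + 1 :=
  (Nat.succ_pred (rootMultiplicity_pos (monicOfFn_monic c).ne_zero |>.2 hz).ne').symm

lemma excessMultiplicity_lt {c : Fin n → ℂ} {z : ℂ} (hz : eval z (monicOfFn n c) = 0) :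
    excessMultiplicity c z < n := by
  rw [← Nat.succ_le_iff, Nat.succ_eq_add_one, ← rootMultiplicity_monicOfFn hz]
  calc rootMultiplicity z (monicOfFn n c) ≤ (monicOfFn n c).natDegree := by
        rw [← count_roots]
        exact (Multiset.count_le_card _ _).trans (card_roots' _)
    _ = n := natDegree_monicOfFn c

lemma excessMultiplicity_eq_iff {k : ℕ} {c : Fin n → ℂ} {z : ℂ}
    (hz : eval z (monicOfFn n c) = 0) (hk : k < n) : excessMultiplicity c z = k ↔
      (∀ j ≤ k, eval z (monicOfFn (n - j) (derivCoeffs n j c)) = 0) ∧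
        eval z (derivative (monicOfFn (n - k) (derivCoeffs n k c))) ≠ 0 := by
  have hne := (monicOfFn_monic c).ne_zero
  have hlt (j : ℕ) : j ≤ excessMultiplicity c z ↔
      ∀ i ≤ j, (derivative^[i] (monicOfFn n c)).IsRoot z := by
    rw [← lt_rootMultiplicity_iff_isRoot_iterate_derivative hne, rootMultiplicity_monicOfFn hz,
      Nat.lt_succ_iff]
  have hroots : (∀ j ≤ k, (derivative^[j] (monicOfFn n c)).IsRoot z) ↔
      ∀ j ≤ k, eval z (monicOfFn (n - j) (derivCoeffs n j c)) = 0 :=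
    forall₂_congr fun j hj => isRoot_iterate_derivative_monicOfFn_iff (hj.trans hk.le) c z
  rw [← hroots, ← hlt, ne_eq, ← isRoot_iterate_succ_derivative_monicOfFn_iff hk.le]
  have hsucc : k + 1 ≤ excessMultiplicity c z ↔ k ≤ excessMultiplicity c z ∧
      (derivative^[k + 1] (monicOfFn n c)).IsRoot z := by
    rw [hlt, hlt]
    exact ⟨fun h => ⟨fun i hi => h i (by omega), h _ le_rfl⟩, fun h i hi =>
      (Nat.le_succ_iff.1 hi).elim (h.1 i) fun hi => hi ▸ h.2⟩
  grind

lemma derivCoeffs_scaleCoeffs (k : ℕ) (s : ℂ) (c : Fin n → ℂ) :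
    derivCoeffs n k (scaleCoeffs s c) = scaleCoeffs s (derivCoeffs n k c) := by
  ext i
  have hexp : n - (i + k : ℕ) = n - k - i := by omega
  simp only [derivCoeffs_apply, scaleCoeffs, hexp]
  ring

lemma excessMultiplicity_scaleCoeffs {s : ℂ} (hs : s ≠ 0) {c : Fin n → ℂ} {z : ℂ}
    (hz : eval z (monicOfFn n c) = 0) :
    excessMultiplicity (scaleCoeffs s c) (s * z) = excessMultiplicity c z := by
  have hk := excessMultiplicity_lt hz
  obtain ⟨hroots, hsimple⟩ := (excessMultiplicity_eq_iff hz hk).1 rfl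
  have hsz : eval (s * z) (monicOfFn n (scaleCoeffs s c)) = 0 := by
    rw [eval_monicOfFn_scaleCoeffs, hz, mul_zero]
  refine (excessMultiplicity_eq_iff hsz hk).2 ⟨fun j hj => ?_, fun h0 => ?_⟩
  · rw [derivCoeffs_scaleCoeffs, eval_monicOfFn_scaleCoeffs, hroots j hj, mul_zero]
  · have hmul := eval_derivative_monicOfFn_scaleCoeffs s z
      (derivCoeffs n (excessMultiplicity c z) c)
    rw [← derivCoeffs_scaleCoeffs, h0, mul_zero] at hmul
    exact mul_ne_zero (pow_ne_zero _ hs) hsimple hmul.symm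

/-- The derivative of a differentiable root of the polynomials with coefficient curve `a`, when that
root passes through `z` with locally constant multiplicity, as a function of `a = a t`, of
`a' = deriv a t` and of `z`. -/
def reducedVelocity (a a' : Fin n → ℂ) (z : ℂ) : ℂ :=
  rootVelocity (derivCoeffs n (excessMultiplicity a z) a)
    (derivCoeffs n (excessMultiplicity a z) a') z

lemma reducedVelocity_scaleCoeffs {s : ℂ} (hs : s ≠ 0) (r : ℝ) {a : Fin n → ℂ} (a' : Fin n → ℂ)
    {z : ℂ} (hz : eval z (monicOfFn n a) = 0) :
    reducedVelocity (scaleCoeffs s a) (scaleCoeffs s (r • a')) (s * z) =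
      r * s * reducedVelocity a a' z := by
  rw [reducedVelocity, excessMultiplicity_scaleCoeffs hs hz, derivCoeffs_scaleCoeffs,
    derivCoeffs_scaleCoeffs, ContinuousLinearMap.map_smul_of_tower, rootVelocity_scaleCoeffs hs,
    reducedVelocity]

end Multiplicity

section Strata

open Polynomial

lemma continuousOn_rootVelocity {X : Type*} [TopologicalSpace X] {d : ℕ} {s : Set X}
    {a a' : X → Fin d → ℂ} {l : X → ℂ} (ha : ContinuousOn a s) (ha' : ContinuousOn a' s)
    (hl : ContinuousOn l s) (hsimple : ∀ x ∈ s, eval (l x) (derivative (monicOfFn d (a x))) ≠ 0) :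
    ContinuousOn (fun x => rootVelocity (a x) (a' x) (l x)) s := by
  have hnum : ContinuousOn (fun x => eval (l x) (ofFn d (a' x))) s := by
    simp only [eval_ofFn]
    fun_prop
  exact (hnum.div (continuousOn_eval_derivative_monicOfFn ha hl) hsimple).neg

lemma hasDerivWithinAt_rootVelocity {d : ℕ} {b : ℝ → Fin d → ℂ} {b' : Fin d → ℂ} {l : ℝ → ℂ}
    {s : Set ℝ} {t : ℝ} (hb : HasDerivWithinAt b b' s t) (hl : ContinuousWithinAt l s t)
    (h0 : ∀ r ∈ s, eval (l r) (monicOfFn d (b r)) = 0) (ht : t ∈ s)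
    (hsimple : eval (l t) (derivative (monicOfFn d (b t))) ≠ 0) :
    HasDerivWithinAt l (rootVelocity (b t) b' (l t)) s t := by
  have hF := hasStrictFDerivAt_eval_monicOfFn (b t) (l t)
  have hinv : (((leval (l t) ∘ₗ ofFn d).toContinuousLinearMap.coprod
      (ContinuousLinearMap.toSpanSingleton ℂ (eval (l t) (derivative (monicOfFn d (b t)))))) ∘L
        .inr ℂ (Fin d → ℂ) ℂ).IsInvertible :=
    ⟨ContinuousLinearEquiv.unitsEquivAut ℂ (Units.mk0 _ hsimple), by ext; simp⟩
  have hψ := (hF.hasStrictFDerivAt_implicitFunctionOfProdDomain hinv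
    ).hasFDerivAt.restrictScalars ℝ
  have hlψ : ∀ᶠ r in nhdsWithin t s,
      l r = hF.implicitFunctionOfProdDomain hinv (b r) := by
    filter_upwards [(hb.continuousWithinAt.prodMk hl).eventually
      (hF.eventually_apply_eq_iff_implicitFunctionOfProdDomain hinv), self_mem_nhdsWithin]
      with r hr hrs
    exact (hr.1 ((h0 r hrs).trans (h0 t ht).symm)).symm
  refine ((hψ.comp_hasDerivWithinAt t hb).congr_of_eventuallyEq_of_mem hlψ ht).congr_deriv ?_
  change -ContinuousLinearMap.inverse _ (_ : ℂ) = _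
  rw [neg_eq_iff_eq_neg, hinv.inverse_apply_eq]
  simp [rootVelocity, div_mul_cancel₀ _ hsimple]

/-- `l` is a continuous selection, over the measurable set `s`, of roots of the polynomials with
coefficients `a`. -/
structure IsContinuousRootOn {X : Type*} [TopologicalSpace X] [MeasurableSpace X] {n : ℕ}
    (a : X → Fin n → ℂ) (s : Set X) (l : X → ℂ) : Prop where
  measurableSet : MeasurableSet s
  continuousOn_coeff : ContinuousOn a s
  continuousOn : ContinuousOn l s
  eval_eq_zero : ∀ x ∈ s, eval (l x) (monicOfFn n (a x)) = 0

lemma IsContinuousRootOn.comp {X Y : Type*} [TopologicalSpace X] [MeasurableSpace X] [BorelSpace X]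
    [TopologicalSpace Y] [MeasurableSpace Y] [OpensMeasurableSpace Y] {a : X → Fin n → ℂ}
    {s : Set X} {l : X → ℂ} (h : IsContinuousRootOn a s l) {γ : Y → X} (hγ : Continuous γ) :
    IsContinuousRootOn (fun y => a (γ y)) (γ ⁻¹' s) (fun y => l (γ y)) where
  measurableSet := h.measurableSet.preimage hγ.measurable
  continuousOn_coeff := h.continuousOn_coeff.comp hγ.continuousOn fun _ hy => hy
  continuousOn := h.continuousOn.comp hγ.continuousOn fun _ hy => hy
  eval_eq_zero y hy := h.eval_eq_zero (γ y) hy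

lemma IsContinuousRootOn.mono {X : Type*} [TopologicalSpace X] [MeasurableSpace X]
    {a : X → Fin n → ℂ} {s t : Set X} {l : X → ℂ} (h : IsContinuousRootOn a s l)
    (ht : MeasurableSet t) (hts : t ⊆ s) :
    IsContinuousRootOn a t l where
  measurableSet := ht
  continuousOn_coeff := h.continuousOn_coeff.mono hts
  continuousOn := h.continuousOn.mono hts
  eval_eq_zero x hx := h.eval_eq_zero x (hts hx)

/-- The part of `s` over which the root `l` has multiplicity `k + 1`. -/
def excessStratum {X : Type*} {n : ℕ} (a : X → Fin n → ℂ) (s : Set X) (l : X → ℂ) (k : ℕ) : Set X :=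
  {x ∈ s | excessMultiplicity (a x) (l x) = k}

namespace IsContinuousRootOn

variable {X : Type*} [TopologicalSpace X] [MeasurableSpace X] {n k : ℕ} {a a' : X → Fin n → ℂ}
  {s : Set X} {l : X → ℂ}

lemma iUnion_excessStratum (h : IsContinuousRootOn a s l) :
    ⋃ k : Fin n, excessStratum a s l k = s := by
  refine Subset.antisymm (iUnion_subset fun k => sep_subset _ _) fun x hx => mem_iUnion.2 ?_
  exact ⟨⟨_, excessMultiplicity_lt (h.eval_eq_zero x hx)⟩, hx, rfl⟩

lemma mem_excessStratum_iff (h : IsContinuousRootOn a s l) (hk : k < n) {x : X} :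
    x ∈ excessStratum a s l k ↔ x ∈ s ∧
      (∀ j ≤ k, eval (l x) (monicOfFn (n - j) (derivCoeffs n j (a x))) = 0) ∧
        eval (l x) (derivative (monicOfFn (n - k) (derivCoeffs n k (a x)))) ≠ 0 :=
  and_congr_right fun hx => excessMultiplicity_eq_iff (h.eval_eq_zero x hx) hk

lemma continuousOn_reducedVelocity (h : IsContinuousRootOn a s l) (ha' : ContinuousOn a' s)
    (hk : k < n) :
    ContinuousOn (fun x => reducedVelocity (a x) (a' x) (l x)) (excessStratum a s l k) := by
  have hsub : excessStratum a s l k ⊆ s := sep_subset _ _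
  refine ContinuousOn.congr (continuousOn_rootVelocity
    ((derivCoeffs n k).continuous.comp_continuousOn (h.continuousOn_coeff.mono hsub))
    ((derivCoeffs n k).continuous.comp_continuousOn (ha'.mono hsub)) (h.continuousOn.mono hsub)
    fun x hx => ((h.mem_excessStratum_iff hk).1 hx).2.2) fun x hx => ?_
  obtain ⟨-, rfl⟩ := hx
  rfl

variable [OpensMeasurableSpace X]

lemma measurableSet_excessStratum (h : IsContinuousRootOn a s l) (hk : k < n) :
    MeasurableSet (excessStratum a s l k) := by
  have hderiv (j : ℕ) : ContinuousOn (fun x => derivCoeffs n j (a x)) s :=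
    (derivCoeffs n j).continuous.comp_continuousOn h.continuousOn_coeff
  have heq : excessStratum a s l k =
      (⋂ j : Fin (k + 1), {x ∈ s | eval (l x) (monicOfFn (n - j) (derivCoeffs n j (a x))) = 0}) \
        {x ∈ s | eval (l x) (derivative (monicOfFn (n - k) (derivCoeffs n k (a x)))) = 0} := by
    ext x
    rw [h.mem_excessStratum_iff hk]
    simp only [mem_sdiff, mem_iInter, mem_ofPred_eq, Fin.forall_iff, Nat.lt_succ_iff]
    exact ⟨fun ⟨hx, hz, hne⟩ => ⟨fun j hj => ⟨hx, hz j hj⟩, fun h0 => hne h0.2⟩, fun ⟨hz, hne⟩ =>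
      ⟨(hz 0 k.zero_le).1, fun j hj => (hz j hj).2, fun h0 => hne ⟨(hz 0 k.zero_le).1, h0⟩⟩⟩
  rw [heq]
  exact (MeasurableSet.iInter fun j : Fin (k + 1) => measurableSet_sep_eq_zero h.measurableSet
    (continuousOn_eval_monicOfFn (hderiv j) h.continuousOn)).diff
    (measurableSet_sep_eq_zero h.measurableSet
      (continuousOn_eval_derivative_monicOfFn (hderiv k) h.continuousOn))

lemma aestronglyMeasurable_reducedVelocity (h : IsContinuousRootOn a s l)
    (ha' : ContinuousOn a' s) (μ : Measure X) :
    AEStronglyMeasurable (fun x => reducedVelocity (a x) (a' x) (l x)) (μ.restrict s) := by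
  rw [← h.iUnion_excessStratum, aestronglyMeasurable_iUnion_iff]
  exact fun k => (h.continuousOn_reducedVelocity ha' k.2).aestronglyMeasurable
    (h.measurableSet_excessStratum k.2)

end IsContinuousRootOn

variable {n : ℕ} {a a' : ℝ → Fin n → ℂ} {s : Set ℝ} {l : ℝ → ℂ}

lemma IsContinuousRootOn.hasDerivWithinAt_reducedVelocity (h : IsContinuousRootOn a s l) {k : ℕ}
    (hk : k < n) {t : ℝ} (ha : HasDerivAt a (a' t) t) (ht : t ∈ excessStratum a s l k) :
    HasDerivWithinAt l (reducedVelocity (a t) (a' t) (l t)) (excessStratum a s l k) t := by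
  have hb : HasDerivAt (fun r => derivCoeffs n k (a r)) (derivCoeffs n k (a' t)) t :=
    ((derivCoeffs n k).restrictScalars ℝ).hasFDerivAt.comp_hasDerivAt t ha
  have hl := hasDerivWithinAt_rootVelocity hb.hasDerivWithinAt
    ((h.continuousOn t ht.1).mono (sep_subset _ _))
    (fun r hr => ((h.mem_excessStratum_iff hk).1 hr).2.1 k le_rfl) ht
    ((h.mem_excessStratum_iff hk).1 ht).2.2
  rwa [reducedVelocity, ht.2]

lemma IsContinuousRootOn.isSimpleRootOn_excessStratum (h : IsContinuousRootOn a s l)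
    (hs : s ⊆ Ioo 0 1) {k : ℕ} (hk : k < n) :
    IsSimpleRootOn (fun t => derivCoeffs n k (a t)) (excessStratum a s l k) l where
  measurableSet := h.measurableSet_excessStratum hk
  subset := (sep_subset _ _).trans hs
  continuousOn := h.continuousOn.mono (sep_subset _ _)
  eval_eq_zero _ ht := ((h.mem_excessStratum_iff hk).1 ht).2.1 k le_rfl
  eval_derivative_ne_zero _ ht := ((h.mem_excessStratum_iff hk).1 ht).2.2

lemma exists_setLIntegral_reducedVelocity_le {N : ℕ} {p : ℝ} (hp : 1 ≤ p)
    (hpN : p * (N + 1) < N + 2) (hn : n ≤ N + 2) (M : ℝ) :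
    ∃ C : ℝ≥0∞, C ≠ ⊤ ∧ ∀ (a a' : ℝ → Fin n → ℂ) (s : Set ℝ) (l : ℝ → ℂ),
      ContDiffLipOn (N + 1) M (Ioo 0 1) a → (∀ t ∈ Ioo (0 : ℝ) 1, HasDerivAt a (a' t) t) →
      s ⊆ Ioo 0 1 → IsContinuousRootOn a s l →
      ∫⁻ t in s, ‖reducedVelocity (a t) (a' t) (l t)‖ₑ ^ p ≤ C := by
  have hbound (k : Fin n) : UniformVelocityBound N p (n - k) :=
    uniformVelocityBound hp hpN (by omega) (by omega)
  choose C hC h using fun k : Fin n => hbound k (‖(derivCoeffs n k).restrictScalars ℝ‖ * M)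
  refine ⟨∑ k, C k, ENNReal.sum_ne_top.2 fun k _ => hC k, fun a a' s l ha ha' hs hl => ?_⟩
  have hstratum (k : Fin n) :
      ∫⁻ t in excessStratum a s l k, ‖reducedVelocity (a t) (a' t) (l t)‖ₑ ^ p ≤ C k := by
    have hsimple := hl.isSimpleRootOn_excessStratum hs k.2
    calc _ = ∫⁻ t in excessStratum a s l k,
          ‖rootVelocity (derivCoeffs n k (a t)) (derivCoeffs n k (a' t)) (l t)‖ₑ ^ p :=
          setLIntegral_congr_fun hsimple.measurableSet fun t ht => by
            rw [reducedVelocity, ht.2]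
      _ ≤ _ := hsimple.setLIntegral_le_rootEnergy p fun t => derivCoeffs n k (a' t)
      _ ≤ C k := h k _ _ (ha.clm_apply ((derivCoeffs n k).restrictScalars ℝ)) fun t ht =>
          ((derivCoeffs n k).restrictScalars ℝ).hasFDerivAt.comp_hasDerivAt t (ha' t ht)
  calc _ = ∫⁻ t in ⋃ k : Fin n, excessStratum a s l k,
        ‖reducedVelocity (a t) (a' t) (l t)‖ₑ ^ p := by rw [hl.iUnion_excessStratum]
    _ ≤ ∑ k : Fin n, ∫⁻ t in excessStratum a s l k,
        ‖reducedVelocity (a t) (a' t) (l t)‖ₑ ^ p :=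
      (lintegral_iUnion_le _ _).trans_eq (tsum_fintype _)
    _ ≤ ∑ k, C k := Finset.sum_le_sum fun k _ => hstratum k

end Strata

section LineBound

open Polynomial

variable {n N : ℕ} {u v A p : ℝ} {a a' : ℝ → Fin n → ℂ} {s : Set ℝ} {l : ℝ → ℂ}

lemma ContDiffLipOn.comp_affine {E : Type*} [NormedAddCommGroup E] [NormedSpace ℝ E] {k : ℕ}
    {M : ℝ} {f : ℝ → E} (huv : u < v) (h : ContDiffLipOn k M (Ioo u v) f) :
    ContDiffLipOn k (max 1 (v - u) ^ (k + 1) * M) (Ioo 0 1) (fun x => f (u + (v - u) * x)) := by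
  have hℓ : 0 < v - u := sub_pos.2 huv
  have hM : 0 ≤ M := h.nonneg (nonempty_Ioo.2 huv)
  have hpow {j : ℕ} (hj : j ≤ k + 1) : (v - u) ^ j ≤ max 1 (v - u) ^ (k + 1) :=
    (pow_le_pow_left₀ hℓ.le (le_max_right _ _) j).trans (pow_le_pow_right₀ (le_max_left _ _) hj)
  have hmem {x : ℝ} (hx : x ∈ Ioo (0 : ℝ) 1) := (affine_mem_Ioo_iff huv).2 hx
  obtain ⟨F, rfl, hF⟩ := h
  refine ⟨fun j x => (v - u) ^ j • F j (u + (v - u) * x), by simp, fun j hj x hx => ?_,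
    fun j hj x hx => ?_, fun x hx y hy => ?_⟩
  · have hder := ((hF.hasDerivAt j hj _ (hmem hx)).scomp x (hasDerivAt_affine u v x)).const_smul
      ((v - u) ^ j)
    rwa [smul_smul, ← pow_succ] at hder
  · rw [norm_smul, norm_pow, Real.norm_of_nonneg hℓ.le]
    exact mul_le_mul (hpow (by omega)) (hF.norm_le j hj _ (hmem hx)) (norm_nonneg _) (by positivity)
  · rw [← smul_sub, norm_smul, norm_pow, Real.norm_of_nonneg hℓ.le]
    calc (v - u) ^ k * ‖F k (u + (v - u) * x) - F k (u + (v - u) * y)‖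
        ≤ (v - u) ^ k * (M * |(u + (v - u) * x) - (u + (v - u) * y)|) := by
          gcongr
          exact hF.norm_sub_le _ (hmem hx) _ (hmem hy)
      _ = (v - u) ^ (k + 1) * M * |x - y| := by
          rw [add_sub_add_left_eq_sub, ← mul_sub, abs_mul, abs_of_pos hℓ]
          ring
      _ ≤ max 1 (v - u) ^ (k + 1) * M * |x - y| := by
          have := hpow le_rfl
          gcongr ?_ * _ * _

lemma ContDiffLipOn.zoom (huv : u < v) (hA : 0 < A)
    (h : ∀ i : Fin n, ContDiffLipOn N (A ^ (n - i : ℕ)) (Ioo u v) (fun t => a t i)) :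
    ContDiffLipOn N (max 1 (v - u) ^ (N + 1)) (Ioo 0 1) (zoom u v A a) := by
  refine ContDiffLipOn.pi (by positivity) fun i => ?_
  refine (((h i).comp_affine huv).clm_apply
    (ContinuousLinearMap.mul ℝ ℂ ((A : ℂ)⁻¹ ^ (n - i : ℕ)))).mono ?_
  calc ‖ContinuousLinearMap.mul ℝ ℂ ((A : ℂ)⁻¹ ^ (n - i : ℕ))‖ *
        (max 1 (v - u) ^ (N + 1) * A ^ (n - i : ℕ))
      ≤ ‖(A : ℂ)⁻¹ ^ (n - i : ℕ)‖ * (max 1 (v - u) ^ (N + 1) * A ^ (n - i : ℕ)) := by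
        gcongr
        exact ContinuousLinearMap.opNorm_mul_apply_le _ _ _
    _ = max 1 (v - u) ^ (N + 1) := by
        rw [norm_pow, norm_inv, Complex.norm_real, Real.norm_of_nonneg hA.le, mul_left_comm,
          inv_pow, inv_mul_cancel₀ (pow_pos hA _).ne', mul_one]

namespace IsContinuousRootOn

lemma comp_affine (h : IsContinuousRootOn a s l) (u v A : ℝ) :
    IsContinuousRootOn (zoom u v A a) ((fun x => u + (v - u) * x) ⁻¹' s)
      (fun x => (A : ℂ)⁻¹ * l (u + (v - u) * x)) := by
  have hline := h.comp (γ := fun x => u + (v - u) * x) (by fun_prop)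
  exact ⟨hline.measurableSet, continuousOn_pi.2 fun i =>
      continuousOn_const.mul (continuousOn_pi.1 hline.continuousOn_coeff i),
    continuousOn_const.mul hline.continuousOn, fun x hx => by
      rw [zoom, eval_monicOfFn_scaleCoeffs, hline.eval_eq_zero x hx, mul_zero]⟩

lemma setLIntegral_reducedVelocity_eq_zoom (h : IsContinuousRootOn a s l) (hp : 0 ≤ p)
    (huv : u < v) (hA : 0 < A) :
    ∫⁻ t in s, ‖reducedVelocity (a t) (a' t) (l t)‖ₑ ^ p =
      ENNReal.ofReal ((v - u) * (A / (v - u)) ^ p) *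
        ∫⁻ x in (fun x => u + (v - u) * x) ⁻¹' s,
          ‖reducedVelocity (zoom u v A a x) (zoom u v A (fun t => (v - u) • a' t) x)
            ((A : ℂ)⁻¹ * l (u + (v - u) * x))‖ₑ ^ p := by
  have hℓ : 0 < v - u := sub_pos.2 huv
  have hA0 : (A : ℂ)⁻¹ ≠ 0 := by simpa using hA.ne'
  have hscale {t : ℝ} (ht : t ∈ s) : ‖reducedVelocity (a t) (a' t) (l t)‖ₑ ^ p =
      ENNReal.ofReal ((A / (v - u)) ^ p) *
        ‖reducedVelocity (scaleCoeffs (A : ℂ)⁻¹ (a t)) (scaleCoeffs (A : ℂ)⁻¹ ((v - u) • a' t))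
          ((A : ℂ)⁻¹ * l t)‖ₑ ^ p := by
    rw [← ENNReal.ofReal_rpow_of_nonneg (by positivity) hp, ← ENNReal.mul_rpow_of_nonneg _ _ hp,
      reducedVelocity_scaleCoeffs hA0 _ _ (h.eval_eq_zero t ht), ← ofReal_norm, ← ofReal_norm,
      ← ENNReal.ofReal_mul (by positivity)]
    congr 2
    rw [norm_mul, norm_mul, norm_inv, Complex.norm_real, Complex.norm_real,
      Real.norm_of_nonneg hℓ.le, Real.norm_of_nonneg hA.le]
    field_simp
  rw [setLIntegral_congr_fun h.measurableSet fun _ ht => hscale ht,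
    setLIntegral_comp_affine huv h.measurableSet,
    lintegral_const_mul' _ _ ENNReal.ofReal_ne_top, ← mul_assoc, ← ENNReal.ofReal_mul hℓ.le]
  rfl

end IsContinuousRootOn

lemma exists_setLIntegral_reducedVelocity_le_mul_rpow (hp : 1 ≤ p) (hpN : p * (N + 1) < N + 2)
    (hn : n ≤ N + 2) (u v : ℝ) :
    ∃ C : ℝ≥0∞, C ≠ ⊤ ∧ ∀ (A : ℝ) (a a' : ℝ → Fin n → ℂ) (s : Set ℝ) (l : ℝ → ℂ), 0 < A →
      (∀ i : Fin n, ContDiffLipOn (N + 1) (A ^ (n - i : ℕ)) (Ioo u v) (fun t => a t i)) →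
      (∀ t ∈ Ioo u v, HasDerivAt a (a' t) t) → s ⊆ Ioo u v → IsContinuousRootOn a s l →
      ∫⁻ t in s, ‖reducedVelocity (a t) (a' t) (l t)‖ₑ ^ p ≤ C * ENNReal.ofReal (A ^ p) := by
  rcases le_or_gt v u with hvu | huv
  · refine ⟨0, ENNReal.zero_ne_top, fun A a a' s l _ _ _ hs _ => ?_⟩
    rw [Ioo_eq_empty hvu.not_gt, subset_empty_iff] at hs
    simp [hs]
  have : 0 < v - u := sub_pos.2 huv
  obtain ⟨C, hC, h⟩ := exists_setLIntegral_reducedVelocity_le hp hpN hn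
    (max 1 (v - u) ^ (N + 1 + 1))
  refine ⟨ENNReal.ofReal ((v - u) * (v - u)⁻¹ ^ p) * C,
    ENNReal.mul_ne_top ENNReal.ofReal_ne_top hC, fun A a a' s l hA ha ha' hs hl => ?_⟩
  calc _ = ENNReal.ofReal ((v - u) * (A / (v - u)) ^ p) * _ :=
        hl.setLIntegral_reducedVelocity_eq_zoom (zero_le_one.trans hp) huv hA
    _ ≤ ENNReal.ofReal ((v - u) * (A / (v - u)) ^ p) * C := by
        gcongr
        exact h _ _ _ _ (ContDiffLipOn.zoom huv hA ha) (fun x hx => hasDerivAt_zoom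
          (ha' _ ((affine_mem_Ioo_iff huv).2 hx))) (fun x hx => (affine_mem_Ioo_iff huv).1 (hs hx))
          (hl.comp_affine u v A)
    _ = ENNReal.ofReal ((v - u) * (v - u)⁻¹ ^ p) * C * ENNReal.ofReal (A ^ p) := by
        rw [div_eq_inv_mul, Real.mul_rpow (by positivity) hA.le, ← mul_assoc,
          ENNReal.ofReal_mul (by positivity), mul_right_comm]

end LineBound

section PiecewiseDerivative

/-- `s` is covered by finitely many measurable sets on each of which the relative derivative of `f`
is `f'`. The pieces may be as irregular as a level set of the multiplicity of a root. -/
def HasDerivPiecewiseOn {E : Type*} [NormedAddCommGroup E] [NormedSpace ℝ E] (f f' : ℝ → E)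
    (s : Set ℝ) : Prop :=
  ∃ 𝒯 : Finset (Set ℝ), s ⊆ ⋃ T ∈ 𝒯, T ∧
    ∀ T ∈ 𝒯, MeasurableSet T ∧ ∀ t ∈ T, HasDerivWithinAt f (f' t) T t

namespace HasDerivPiecewiseOn

variable {E F : Type*} [NormedAddCommGroup E] [NormedSpace ℝ E] [NormedAddCommGroup F]
  [NormedSpace ℝ F] {f f' : ℝ → E} {s t : Set ℝ}

lemma of_hasDerivAt (hs : MeasurableSet s) (h : ∀ t ∈ s, HasDerivAt f (f' t) t) :
    HasDerivPiecewiseOn f f' s :=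
  ⟨{s}, by simp, by simpa using ⟨hs, fun t ht => (h t ht).hasDerivWithinAt⟩⟩

lemma mono (h : HasDerivPiecewiseOn f f' s) (hts : t ⊆ s) : HasDerivPiecewiseOn f f' t :=
  let ⟨𝒯, hs, h𝒯⟩ := h
  ⟨𝒯, hts.trans hs, h𝒯⟩

lemma union (hs : HasDerivPiecewiseOn f f' s) (ht : HasDerivPiecewiseOn f f' t) :
    HasDerivPiecewiseOn f f' (s ∪ t) := by
  classical
  obtain ⟨𝒮, hs𝒮, h𝒮⟩ := hs
  obtain ⟨𝒯, ht𝒯, h𝒯⟩ := ht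
  refine ⟨𝒮 ∪ 𝒯, ?_, fun T hT => (Finset.mem_union.1 hT).elim (h𝒮 T) (h𝒯 T)⟩
  rw [Finset.set_biUnion_union]
  exact union_subset_union hs𝒮 ht𝒯

lemma clm_apply (h : HasDerivPiecewiseOn f f' s) (L : E →L[ℝ] F) :
    HasDerivPiecewiseOn (fun t => L (f t)) (fun t => L (f' t)) s :=
  let ⟨𝒯, hs, h𝒯⟩ := h
  ⟨𝒯, hs, fun T hT => ⟨(h𝒯 T hT).1, fun t ht =>
    L.hasFDerivAt.comp_hasDerivWithinAt t ((h𝒯 T hT).2 t ht)⟩⟩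

lemma mul {A : Type*} [NormedRing A] [NormedAlgebra ℝ A] {f f' g g' : ℝ → A}
    (hf : HasDerivPiecewiseOn f f' s) (hg : ∀ t, HasDerivAt g (g' t) t) :
    HasDerivPiecewiseOn (fun t => f t * g t) (fun t => f' t * g t + f t * g' t) s :=
  let ⟨𝒯, hs, h𝒯⟩ := hf
  ⟨𝒯, hs, fun T hT => ⟨(h𝒯 T hT).1, fun t ht =>
    ((h𝒯 T hT).2 t ht).mul (hg t).hasDerivWithinAt⟩⟩

lemma ae_deriv_eq (h : HasDerivPiecewiseOn f f' s) :
    ∀ᵐ t, t ∈ s → DifferentiableAt ℝ f t → deriv f t = f' t := by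
  obtain ⟨𝒯, hs, h𝒯⟩ := h
  have hacc : ∀ᵐ t, ∀ T ∈ 𝒯, t ∈ T → AccPt t (Filter.principal T) := by
    refine (Filter.eventually_all_finset 𝒯).2 fun T _ => ?_
    filter_upwards [(countable_setOfPred_isolated_right_within (s := T)).ae_notMem volume]
      with t ht htT
    rw [accPt_principal_iff_nhdsWithin]
    have : (nhdsWithin t (T ∩ Ioi t)).NeBot := ⟨fun h0 => ht ⟨htT, h0⟩⟩
    exact this.mono (nhdsWithin_mono t fun r hr => ⟨hr.1, ne_of_gt hr.2⟩)
  filter_upwards [hacc] with t ht hts hdiff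
  obtain ⟨T, hT, htT⟩ := mem_iUnion₂.1 (hs hts)
  exact (uniqueDiffWithinAt_iff_accPt.2 (ht T hT htT)).eq_deriv _
    hdiff.hasDerivAt.hasDerivWithinAt ((h𝒯 T hT).2 t htT)

end HasDerivPiecewiseOn

lemma absolutelyContinuousOnInterval_of_dist_le {X Y : Type*} [PseudoMetricSpace X]
    [PseudoMetricSpace Y] {f : ℝ → X} {g : ℝ → Y} {a b c : ℝ}
    (hg : AbsolutelyContinuousOnInterval g a b) (hc : 0 < c)
    (h : ∀ s ∈ uIcc a b, ∀ t ∈ uIcc a b, dist (f s) (f t) ≤ c * dist (g s) (g t)) :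
    AbsolutelyContinuousOnInterval f a b := by
  rw [absolutelyContinuousOnInterval_iff] at hg ⊢
  intro ε hε
  obtain ⟨δ, hδ, hsmall⟩ := hg (ε / c) (by positivity)
  refine ⟨δ, hδ, fun I hI hIδ => ?_⟩
  calc _ ≤ ∑ i ∈ Finset.range I.1, c * dist (g (I.2 i).1) (g (I.2 i).2) :=
        Finset.sum_le_sum fun i hi => h _ (hI.1 i hi).1 _ (hI.1 i hi).2
    _ < ε := by
        rw [← Finset.mul_sum, ← lt_div_iff₀' hc]
        exact hsmall I hI hIδ

variable {f f' : ℝ → ℝ} {a b : ℝ}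

lemma setLIntegral_enorm_Icc {g : ℝ → ℝ} (hab : a ≤ b) (hg : IntegrableOn g (Icc a b)) :
    ∫⁻ t in Icc a b, ‖g t‖ₑ = ENNReal.ofReal (∫ t in a..b, |g t|) := by
  rw [intervalIntegral.integral_of_le hab, ← integral_Icc_eq_integral_Ioc]
  exact (ofReal_integral_norm_eq_lintegral_enorm hg).symm

lemma HasDerivPiecewiseOn.exists_abs_sub_le (h : HasDerivPiecewiseOn f f' (Icc a b))
    (hf : ContinuousOn f (Icc a b)) (hf' : IntegrableOn f' (Icc a b)) :
    ∃ c : ℝ, 0 < c ∧ ∀ s ∈ Icc a b, ∀ t ∈ Icc a b, s ≤ t →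
      |f t - f s| ≤ c * ∫ r in s..t, |f' r| := by
  obtain ⟨𝒯, hcover, h𝒯⟩ := h
  refine ⟨𝒯.card + 1, by positivity, fun s hs t ht hst => ?_⟩
  have hsub : Icc s t ⊆ Icc a b := Icc_subset_Icc hs.1 ht.2
  have hnonneg : 0 ≤ ∫ r in s..t, |f' r| :=
    intervalIntegral.integral_nonneg hst fun _ _ => abs_nonneg _
  have himage : uIcc (f s) (f t) ⊆ ⋃ T ∈ 𝒯, f '' (T ∩ Icc s t) := by
    have hivt := intermediate_value_uIcc (f := f) (a := s) (b := t)
      (by rw [uIcc_of_le hst]; exact hf.mono hsub)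
    rw [uIcc_of_le hst] at hivt
    refine hivt.trans ?_
    rw [← image_iUnion₂, ← iUnion₂_inter]
    exact image_mono fun r hr => ⟨hcover (hsub hr), hr⟩
  have hpiece : ∀ T ∈ 𝒯, volume (f '' (T ∩ Icc s t)) ≤ ∫⁻ r in Icc s t, ‖f' r‖ₑ := fun T hT => by
    calc volume (f '' (T ∩ Icc s t))
        ≤ ∫⁻ r in T ∩ Icc s t, ENNReal.ofReal
            |(ContinuousLinearMap.toSpanSingleton ℝ (f' r)).det| :=
          addHaar_image_le_lintegral_abs_det_fderiv volume
            ((h𝒯 T hT).1.inter measurableSet_Icc) fun r hr =>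
              (((h𝒯 T hT).2 r hr.1).mono inter_subset_left).hasFDerivWithinAt
      _ ≤ ∫⁻ r in Icc s t, ‖f' r‖ₑ := by
          simp only [ContinuousLinearMap.det_toSpanSingleton, ← Real.enorm_eq_ofReal_abs]
          exact lintegral_mono_set inter_subset_right
  have hmeasure : ENNReal.ofReal |f t - f s| ≤ ENNReal.ofReal (𝒯.card * ∫ r in s..t, |f' r|) := by
    calc ENNReal.ofReal |f t - f s| = volume (uIcc (f s) (f t)) := Real.volume_interval.symm
      _ ≤ ∑ T ∈ 𝒯, volume (f '' (T ∩ Icc s t)) :=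
          (measure_mono himage).trans (measure_biUnion_finset_le _ _)
      _ ≤ 𝒯.card • ∫⁻ r in Icc s t, ‖f' r‖ₑ := Finset.sum_le_card_nsmul _ _ _ hpiece
      _ = _ := by
          rw [setLIntegral_enorm_Icc hst (hf'.mono_set hsub), nsmul_eq_mul,
            ENNReal.ofReal_mul (by positivity), ENNReal.ofReal_natCast]
  have := (ENNReal.ofReal_le_ofReal_iff (by positivity)).1 hmeasure
  linarith

lemma HasDerivPiecewiseOn.absolutelyContinuousOnInterval
    (h : HasDerivPiecewiseOn f f' (Icc a b)) (hab : a ≤ b) (hf : ContinuousOn f (Icc a b))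
    (hf' : IntegrableOn f' (Icc a b)) : AbsolutelyContinuousOnInterval f a b := by
  obtain ⟨c, hc, hbound⟩ := h.exists_abs_sub_le hf hf'
  have hint : IntervalIntegrable (fun t => |f' t|) volume a b :=
    (intervalIntegrable_iff_integrableOn_Icc_of_le hab).2 hf'.norm
  refine absolutelyContinuousOnInterval_of_dist_le
    (hint.absolutelyContinuousOnInterval_intervalIntegral (c := a) left_mem_uIcc) hc ?_
  rw [uIcc_of_le hab]
  have hle : ∀ s ∈ Icc a b, ∀ t ∈ Icc a b, s ≤ t →
      dist (f s) (f t) ≤ c * dist (∫ r in a..s, |f' r|) (∫ r in a..t, |f' r|) :=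
    fun s hs t ht hst => by
      have hfrom {r : ℝ} (hr : r ∈ Icc a b) : IntervalIntegrable (fun t => |f' t|) volume a r :=
        hint.mono_set (by
          rw [uIcc_of_le hab, uIcc_of_le hr.1]
          exact Icc_subset_Icc_right hr.2)
      rw [dist_comm, Real.dist_eq, dist_comm, Real.dist_eq,
        intervalIntegral.integral_interval_sub_left (hfrom ht) (hfrom hs)]
      exact (hbound s hs t ht hst).trans (by gcongr; exact le_abs_self _)
  intro s hs t ht
  rcases le_total s t with hst | hts
  · exact hle s hs t ht hst
  · rw [dist_comm, dist_comm (∫ r in a..s, |f' r|)]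
    exact hle t ht s hs hts

lemma HasDerivPiecewiseOn.integral_eq_sub (h : HasDerivPiecewiseOn f f' (Icc a b)) (hab : a ≤ b)
    (hf : ContinuousOn f (Icc a b)) (hf' : IntegrableOn f' (Icc a b)) :
    ∫ t in a..b, f' t = f b - f a := by
  have hAC := h.absolutelyContinuousOnInterval hab hf hf'
  rw [← hAC.integral_deriv_eq_sub]
  refine intervalIntegral.integral_congr_ae ?_
  filter_upwards [h.ae_deriv_eq, hAC.ae_differentiableAt] with t hderiv hdiff ht
  have ht' : t ∈ Icc a b := Ioc_subset_Icc_self (uIoc_of_le hab ▸ ht)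
  exact (hderiv ht' (hdiff (by rwa [uIcc_of_le hab]))).symm

lemma HasDerivPiecewiseOn.integral_eq_zero_of_tendsto (h : HasDerivPiecewiseOn f f' univ)
    (hf : Continuous f) (hf' : Integrable f')
    (h0 : Filter.Tendsto f (Filter.cocompact ℝ) (nhds 0)) : ∫ t, f' t = 0 := by
  have hends : Filter.Tendsto (fun r => f r - f (-r)) Filter.atTop (nhds 0) := by
    simpa using (h0.mono_left atTop_le_cocompact).sub
      ((h0.mono_left atBot_le_cocompact).comp Filter.tendsto_neg_atTop_atBot)
  refine tendsto_nhds_unique (intervalIntegral_tendsto_integral hf'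
    Filter.tendsto_neg_atTop_atBot Filter.tendsto_id) (hends.congr' ?_)
  filter_upwards [Filter.eventually_ge_atTop 0] with r hr
  exact ((h.mono (subset_univ _)).integral_eq_sub (neg_le_self hr) hf.continuousOn
    hf'.integrableOn).symm

lemma HasDerivPiecewiseOn.integral_eq_zero_of_tendsto_complex {f f' : ℝ → ℂ}
    (h : HasDerivPiecewiseOn f f' univ) (hf : Continuous f) (hf' : Integrable f')
    (h0 : Filter.Tendsto f (Filter.cocompact ℝ) (nhds 0)) : ∫ t, f' t = 0 := by
  have hpart (L : ℂ →L[ℝ] ℝ) : L (∫ t, f' t) = 0 := by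
    rw [← L.integral_comp_comm hf']
    exact (h.clm_apply L).integral_eq_zero_of_tendsto (L.continuous.comp hf)
      (L.integrable_comp hf') (by rw [← map_zero L]; exact (L.continuous.tendsto 0).comp h0)
  exact Complex.ext (hpart Complex.reCLM) (hpart Complex.imCLM)

lemma continuous_mul_of_tsupport_subset {X A : Type*} [TopologicalSpace X] [TopologicalSpace A]
    [MulZeroClass A] [ContinuousMul A] {s : Set X} (hs : IsOpen s) {f φ : X → A}
    (hf : ContinuousOn f s) (hφ : Continuous φ) (hφs : tsupport φ ⊆ s) :
    Continuous fun x => f x * φ x :=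
  continuous_of_tsupport fun _ hx =>
    (hf.continuousAt (hs.mem_nhds (hφs (tsupport_mul_subset_right hx)))).mul hφ.continuousAt

lemma HasDerivPiecewiseOn.integral_mul_deriv_eq_neg {f f' φ : ℝ → ℂ} {s : Set ℝ} (hs : IsOpen s)
    (h : HasDerivPiecewiseOn f f' s) (hf : ContinuousOn f s) (hf' : IntegrableOn f' s)
    (hφ : ContDiff ℝ 1 φ) (hφc : HasCompactSupport φ) (hφs : tsupport φ ⊆ s) :
    ∫ t in s, f t * deriv φ t = -∫ t in s, f' t * φ t := by
  have hφ0 {t : ℝ} (ht : t ∉ tsupport φ) : φ t = 0 := image_eq_zero_of_notMem_tsupport ht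
  have hdφ0 {t : ℝ} (ht : t ∉ tsupport φ) : deriv φ t = 0 :=
    Function.notMem_support.1 fun h0 => ht (support_deriv_subset h0)
  have hfdφ : Integrable fun t => f t * deriv φ t :=
    (continuous_mul_of_tsupport_subset hs hf (hφ.continuous_deriv le_rfl)
      (tsupport_deriv_subset.trans hφs)).integrable_of_hasCompactSupport hφc.deriv.mul_left
  have hf'φ : Integrable fun t => f' t * φ t := by
    obtain ⟨B, hB⟩ := hφ.continuous.bounded_above_of_compact_support hφc
    refine (integrableOn_iff_integrable_of_support_subset fun t ht => ?_).1
      (Integrable.mul_bdd (c := B) hf' hφ.continuous.aestronglyMeasurable (.of_forall hB))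
    by_contra hts
    exact ht (by simp [hφ0 fun h0 => hts (hφs h0)])
  have hpiecewise : HasDerivPiecewiseOn (fun t => f t * φ t)
      (fun t => f' t * φ t + f t * deriv φ t) univ := by
    refine ((h.mul fun t => (hφ.differentiable one_ne_zero t).hasDerivAt).union
      (.of_hasDerivAt (isClosed_tsupport φ).measurableSet.compl fun t ht => ?_)).mono fun t _ =>
        (em (t ∈ tsupport φ)).imp (fun ht => hφs ht) id
    rw [hφ0 ht, hdφ0 ht, mul_zero, mul_zero, add_zero]
    refine (hasDerivAt_const t (0 : ℂ)).congr_of_eventuallyEq ?_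
    filter_upwards [notMem_tsupport_iff_eventuallyEq.1 ht] with r hr
    simp [hr]
  have hzero := hpiecewise.integral_eq_zero_of_tendsto_complex
    (continuous_mul_of_tsupport_subset hs hf hφ.continuous hφs) (hf'φ.add hfdφ)
    hφc.mul_left.is_zero_at_infty
  rw [integral_add hf'φ hfdφ, add_comm] at hzero
  rw [setIntegral_eq_integral_of_forall_compl_eq_zero,
    setIntegral_eq_integral_of_forall_compl_eq_zero]
  · exact eq_neg_of_add_eq_zero_left hzero
  · exact fun t ht => by simp [hφ0 fun h0 => ht (hφs h0)]
  · exact fun t ht => by simp [hdφ0 fun h0 => ht (hφs h0)]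

end PiecewiseDerivative

section OpenBox

/-- The open box `∏ i, (k.1 i, k.2 i)`, encoded as in `boxUnion`. -/
def openBox {ι : Type*} (k : (ι → ℝ) × (ι → ℝ)) : Set (ι → ℝ) :=
  univ.pi fun i => Ioo (k.1 i) (k.2 i)

variable {ι : Type*} {k : (ι → ℝ) × (ι → ℝ)} {x : ι → ℝ} {i : ι}

lemma mem_openBox : x ∈ openBox k ↔ ∀ i, x i ∈ Ioo (k.1 i) (k.2 i) :=
  mem_univ_pi

lemma update_mem_openBox [DecidableEq ι] (hx : x ∈ openBox k) {t : ℝ}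
    (ht : t ∈ Ioo (k.1 i) (k.2 i)) : Function.update x i t ∈ openBox k :=
  (update_mem_pi_iff_of_mem hx).2 fun _ => ht

lemma isOpen_openBox [Finite ι] : IsOpen (openBox k) :=
  isOpen_set_pi finite_univ fun _ _ => isOpen_Ioo

lemma isBounded_openBox : Bornology.IsBounded (openBox k) :=
  .pi fun _ => Metric.isBounded_Ioo _ _

variable [DecidableEq ι] {E : Type*} [NormedAddCommGroup E] {f : (ι → ℝ) → E}

lemma norm_piecewise_sub_le_of_norm_update_sub_le {M : ℝ}
    (h : ∀ i, ∀ x ∈ openBox k, ∀ t ∈ Ioo (k.1 i) (k.2 i),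
      ‖f (Function.update x i t) - f x‖ ≤ M * |t - x i|) {x y : ι → ℝ} (hx : x ∈ openBox k)
    (hy : y ∈ openBox k) (S : Finset ι) :
    S.piecewise x y ∈ openBox k ∧ ‖f (S.piecewise x y) - f y‖ ≤ ∑ i ∈ S, M * |x i - y i| := by
  induction S using Finset.induction_on with
  | empty => simpa using hy
  | insert j S hj ih =>
    rw [Finset.piecewise_insert, Finset.sum_insert hj]
    have hxj := mem_openBox.1 hx j
    refine ⟨update_mem_openBox ih.1 hxj, ?_⟩
    have hstep := h j _ ih.1 _ hxj
    rw [Finset.piecewise_eq_of_notMem _ _ _ hj] at hstep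
    exact (norm_sub_le_norm_sub_add_norm_sub _ _ _).trans (add_le_add hstep ih.2)

lemma lipschitzOnWith_openBox_of_hasDerivAt_update [Fintype ι] [NormedSpace ℝ E]
    {f' : ι → (ι → ℝ) → E} {M : ℝ≥0}
    (hd : ∀ i, ∀ x ∈ openBox k,
      HasDerivAt (fun t => f (Function.update x i t)) (f' i x) (x i))
    (hM : ∀ i, ∀ x ∈ openBox k, ‖f' i x‖ ≤ M) :
    LipschitzOnWith (Fintype.card ι * M) f (openBox k) := by
  have hupdate : ∀ i, ∀ x ∈ openBox k, ∀ t ∈ Ioo (k.1 i) (k.2 i),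
      ‖f (Function.update x i t) - f x‖ ≤ M * |t - x i| := fun i x hx t ht => by
    have hline := norm_sub_le_of_hasDerivAt_of_convex (convex_Ioo (k.1 i) (k.2 i))
      (fun r hr => by simpa using hd i _ (update_mem_openBox hx hr))
      (fun r hr => hM i _ (update_mem_openBox hx hr)) t ht (x i) (mem_openBox.1 hx i)
    rwa [Function.update_eq_self] at hline
  refine LipschitzOnWith.of_dist_le_mul fun x hx y hy => ?_
  have htotal := (norm_piecewise_sub_le_of_norm_update_sub_le hupdate hx hy Finset.univ).2
  rw [Finset.piecewise_univ] at htotal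
  rw [dist_eq_norm]
  calc ‖f x - f y‖ ≤ ∑ _ : ι, M * dist x y := htotal.trans <| Finset.sum_le_sum fun i _ => by
        gcongr
        exact dist_le_pi_dist x y i
    _ = _ := by
        rw [Finset.sum_const, Finset.card_univ, nsmul_eq_mul]
        push_cast
        ring

end OpenBox

section BoxUnion

variable {m n k : ℕ} {M M' : ℝ} {𝒦 : Finset ((Fin m → ℝ) × (Fin m → ℝ))}
  {s t : Set (Fin m → ℝ)} {D : List (Fin m) → (Fin m → ℝ) → ℂ}

lemma boxUnion_eq_biUnion_openBox : boxUnion 𝒦 = ⋃ b ∈ 𝒦, openBox b := rfl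

lemma openBox_subset_boxUnion {b : (Fin m → ℝ) × (Fin m → ℝ)} (hb : b ∈ 𝒦) :
    openBox b ⊆ boxUnion 𝒦 :=
  subset_biUnion_of_mem (u := openBox) hb

lemma isBounded_boxUnion : Bornology.IsBounded (boxUnion 𝒦) :=
  (Bornology.isBounded_biUnion_finset 𝒦).2 fun _ _ => isBounded_openBox

lemma isBounded_image_boxUnion {E : Type*} [PseudoMetricSpace E] {f : (Fin m → ℝ) → E}
    (h : ∀ b ∈ 𝒦, ∃ K, LipschitzOnWith K f (openBox b)) :
    Bornology.IsBounded (f '' boxUnion 𝒦) := by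
  rw [boxUnion_eq_biUnion_openBox, image_iUnion₂]
  refine (Bornology.isBounded_biUnion_finset 𝒦).2 fun b hb => ?_
  obtain ⟨K, hK⟩ := h b hb
  exact Metric.isBounded_image_iff.2 ⟨K * Metric.diam (openBox b), fun x hx y hy =>
    (hK.dist_le_mul x hx y hy).trans <| mul_le_mul_of_nonneg_left
      (Metric.dist_le_diam_of_mem isBounded_openBox hx hy) K.2⟩

/-- `D L`, for `L` a list of coordinate directions of length `≤ k`, are the iterated partial
derivatives on `s` of `D []`, all bounded by `M`, and those of order `k` are `M`-Lipschitz. The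
values `D L` for longer lists are irrelevant. -/
structure LipschitzPartialDerivChain (k : ℕ) (M : ℝ) (s : Set (Fin m → ℝ))
    (D : List (Fin m) → (Fin m → ℝ) → ℂ) : Prop where
  hasDerivAt : ∀ L : List (Fin m), L.length < k → ∀ i, ∀ x ∈ s,
    HasDerivAt (fun t => D L (Function.update x i t)) (D (i :: L) x) (x i)
  norm_le : ∀ L : List (Fin m), L.length ≤ k → ∀ x ∈ s, ‖D L x‖ ≤ M
  norm_sub_le : ∀ L : List (Fin m), L.length = k → ∀ x ∈ s, ∀ y ∈ s,
    ‖D L x - D L y‖ ≤ M * dist x y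

lemma LipschitzPartialDerivChain.mono (h : LipschitzPartialDerivChain k M s D) (hM : M ≤ M')
    (hts : t ⊆ s) : LipschitzPartialDerivChain k M' t D where
  hasDerivAt L hL i x hx := h.hasDerivAt L hL i x (hts hx)
  norm_le L hL x hx := (h.norm_le L hL x (hts hx)).trans hM
  norm_sub_le L hL x hx y hy := (h.norm_sub_le L hL x (hts hx) y (hts hy)).trans (by gcongr)

lemma LipschitzPartialDerivChain.exists_lipschitzOnWith {b : (Fin m → ℝ) × (Fin m → ℝ)}
    (h : LipschitzPartialDerivChain k M (openBox b) D) {L : List (Fin m)} (hL : L.length ≤ k) :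
    ∃ K, LipschitzOnWith K (D L) (openBox b) := by
  rcases hL.eq_or_lt with hL | hL
  · exact ⟨_, .of_dist_le' fun x hx y hy =>
      (dist_eq_norm _ _).trans_le (h.norm_sub_le L hL x hx y hy)⟩
  · exact ⟨_, lipschitzOnWith_openBox_of_hasDerivAt_update (h.hasDerivAt L hL) fun i x hx =>
      (h.norm_le (i :: L) hL x hx).trans (Real.le_coe_toNNReal M)⟩

lemma LipschitzPartialDerivChain.continuousOn
    (h : LipschitzPartialDerivChain k M (boxUnion 𝒦) D) {L : List (Fin m)} (hL : L.length ≤ k) :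
    ContinuousOn (D L) (boxUnion 𝒦) := by
  rw [boxUnion_eq_biUnion_openBox]
  refine continuousOn_of_forall_continuousAt fun x hx => ?_
  obtain ⟨b, hb, hxb⟩ := mem_iUnion₂.1 hx
  obtain ⟨K, hK⟩ := (h.mono le_rfl (openBox_subset_boxUnion hb)).exists_lipschitzOnWith hL
  exact hK.continuousOn.continuousAt (isOpen_openBox.mem_nhds hxb)

lemma isBounded_image_boxUnion_of_length_le
    (hd : ∀ L : List (Fin m), L.length < k → ∀ i, ∀ x ∈ boxUnion 𝒦,
      HasDerivAt (fun t => D L (Function.update x i t)) (D (i :: L) x) (x i)) {K : ℝ}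
    (hK : ∀ L : List (Fin m), L.length = k → ∀ x ∈ boxUnion 𝒦, ∀ y ∈ boxUnion 𝒦,
      ‖D L x - D L y‖ ≤ K * dist x y) {L : List (Fin m)} (hL : L.length ≤ k) :
    Bornology.IsBounded (D L '' boxUnion 𝒦) := by
  induction hj : k - L.length generalizing L with
  | zero =>
    exact isBounded_image_boxUnion fun b hb => ⟨_, .of_dist_le' fun x hx y hy =>
      (dist_eq_norm _ _).trans_le (hK L (by omega) x (openBox_subset_boxUnion hb hx) y
        (openBox_subset_boxUnion hb hy))⟩
  | succ j ih =>
    have hnext : Bornology.IsBounded (⋃ i, D (i :: L) '' boxUnion 𝒦) :=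
      Bornology.isBounded_iUnion.2 fun i =>
        ih (by rw [List.length_cons]; omega) (by rw [List.length_cons]; omega)
    obtain ⟨M, hM⟩ := isBounded_iff_forall_norm_le.1 hnext
    refine isBounded_image_boxUnion fun b hb => ?_
    have hsub := openBox_subset_boxUnion hb
    exact ⟨_, lipschitzOnWith_openBox_of_hasDerivAt_update
      (fun i x hx => hd L (by omega) i x (hsub hx)) fun i x hx =>
        (hM _ (mem_iUnion.2 ⟨i, mem_image_of_mem _ (hsub hx)⟩)).trans (Real.le_coe_toNNReal M)⟩

/-- The values whose supremum is the first summand of `CNormMulti (k + 1) s D`. -/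
def partialDerivNorms (k : ℕ) (s : Set (Fin m → ℝ)) (D : List (Fin m) → (Fin m → ℝ) → ℂ) : Set ℝ :=
  {r | ∃ L : List (Fin m), L.length ≤ k ∧ ∃ x ∈ s, r = ‖D L x‖}

/-- The difference quotients whose supremum is the second summand of `CNormMulti (k + 1) s D`. -/
def partialDerivSlopes (k : ℕ) (s : Set (Fin m → ℝ)) (D : List (Fin m) → (Fin m → ℝ) → ℂ) : Set ℝ :=
  {r | ∃ L : List (Fin m), L.length = k ∧ ∃ x ∈ s, ∃ y ∈ s, x ≠ y ∧ r = ‖D L x - D L y‖ / dist x y}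

lemma CNormMulti_succ : CNormMulti (k + 1) s D =
    sSup (partialDerivNorms k s D) + sSup (partialDerivSlopes k s D) := rfl

lemma sSup_partialDerivNorms_nonneg : 0 ≤ sSup (partialDerivNorms k s D) :=
  Real.sSup_nonneg fun _ ⟨_, _, _, _, h⟩ => h ▸ norm_nonneg _

lemma sSup_partialDerivSlopes_nonneg : 0 ≤ sSup (partialDerivSlopes k s D) :=
  Real.sSup_nonneg fun _ ⟨_, _, _, _, _, _, _, h⟩ => h ▸ by positivity

lemma CNormMulti_succ_nonneg : 0 ≤ CNormMulti (k + 1) s D :=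
  add_nonneg sSup_partialDerivNorms_nonneg sSup_partialDerivSlopes_nonneg

lemma lipschitzPartialDerivChain_CNormMulti
    (hd : ∀ L : List (Fin m), L.length < k → ∀ i, ∀ x ∈ boxUnion 𝒦,
      HasDerivAt (fun t => D L (Function.update x i t)) (D (i :: L) x) (x i))
    (hK : ∃ K : ℝ, ∀ L : List (Fin m), L.length = k → ∀ x ∈ boxUnion 𝒦, ∀ y ∈ boxUnion 𝒦,
      ‖D L x - D L y‖ ≤ K * dist x y) :
    LipschitzPartialDerivChain k (CNormMulti (k + 1) (boxUnion 𝒦) D) (boxUnion 𝒦) D := by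
  obtain ⟨K, hK⟩ := hK
  have hnorms : BddAbove (partialDerivNorms k (boxUnion 𝒦) D) := by
    have hbounded : Bornology.IsBounded
        (⋃ L ∈ {L : List (Fin m) | L.length ≤ k}, D L '' boxUnion 𝒦) :=
      (Bornology.isBounded_biUnion (List.finite_length_le _ _)).2 fun L hL =>
        isBounded_image_boxUnion_of_length_le hd hK hL
    obtain ⟨M, hM⟩ := isBounded_iff_forall_norm_le.1 hbounded
    exact ⟨M, fun r ⟨L, hL, x, hx, hr⟩ =>
      hr ▸ hM _ (mem_iUnion₂.2 ⟨L, hL, mem_image_of_mem _ hx⟩)⟩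
  have hslopes : BddAbove (partialDerivSlopes k (boxUnion 𝒦) D) :=
    ⟨K, fun r ⟨L, hL, x, hx, y, hy, hxy, hr⟩ =>
      hr ▸ (div_le_iff₀ (dist_pos.2 hxy)).2 (hK L hL x hx y hy)⟩
  rw [CNormMulti_succ]
  refine ⟨hd, fun L hL x hx => ?_, fun L hL x hx y hy => ?_⟩
  · exact le_add_of_le_of_nonneg (le_csSup hnorms ⟨L, hL, x, hx, rfl⟩)
      sSup_partialDerivSlopes_nonneg
  · rcases eq_or_ne x y with rfl | hxy
    · simp
    rw [← div_le_iff₀ (dist_pos.2 hxy)]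
    exact le_add_of_nonneg_of_le sSup_partialDerivNorms_nonneg
      (le_csSup hslopes ⟨L, hL, x, hx, y, hy, hxy, rfl⟩)

end BoxUnion

section CoordinateLines

variable {m : ℕ} {i : Fin (m + 1)} {y : Fin m → ℝ} {s : Set (Fin (m + 1) → ℝ)}

/-- The line in direction `i` all of whose points have `y` as their remaining coordinates,
parametrized by its `i`-th coordinate. -/
def coordLine (i : Fin (m + 1)) (y : Fin m → ℝ) (t : ℝ) : Fin (m + 1) → ℝ :=
  i.insertNth t y

lemma coordLine_apply_same (t : ℝ) : coordLine i y t i = t :=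
  Fin.insertNth_apply_same (α := fun _ => ℝ) i t y

lemma update_coordLine (r t : ℝ) : Function.update (coordLine i y r) i t = coordLine i y t :=
  Fin.update_insertNth (α := fun _ => ℝ) i r t y

lemma continuous_coordLine : Continuous (coordLine i y) :=
  Continuous.finInsertNth (A := fun _ => ℝ) i continuous_id continuous_const

lemma dist_coordLine_le (t r : ℝ) : dist (coordLine i y t) (coordLine i y r) ≤ |t - r| := by
  rw [dist_pi_le_iff (abs_nonneg _), Fin.forall_iff_succAbove i]
  simp [coordLine, Real.dist_eq]

lemma hasDerivAt_coordLine (t : ℝ) : HasDerivAt (coordLine i y) (Pi.single i 1) t := by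
  refine (hasDerivAt_update (𝕜 := ℝ) (coordLine i y t) i t).congr_of_eventuallyEq ?_
  exact .of_forall fun r => (update_coordLine t r).symm

lemma hasDerivAt_comp_coordLine {E : Type*} [NormedAddCommGroup E] [NormedSpace ℝ E]
    {f : (Fin (m + 1) → ℝ) → E} {f' : E} {t : ℝ}
    (h : HasDerivAt (fun r => f (Function.update (coordLine i y t) i r)) f' (coordLine i y t i)) :
    HasDerivAt (fun r => f (coordLine i y r)) f' t := by
  simpa only [update_coordLine, coordLine_apply_same] using h

lemma measurePreserving_coordLine (i : Fin (m + 1)) :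
    MeasurePreserving (MeasurableEquiv.piFinSuccAbove (fun _ => ℝ) i).symm
      (volume : Measure (ℝ × (Fin m → ℝ))) volume :=
  (volume_preserving_piFinSuccAbove (fun _ => ℝ) i).symm

lemma setLIntegral_eq_lintegral_coordLine (i : Fin (m + 1)) (hs : MeasurableSet s)
    {F : (Fin (m + 1) → ℝ) → ℝ≥0∞} (hF : AEMeasurable F (volume.restrict s)) :
    ∫⁻ x in s, F x = ∫⁻ y, ∫⁻ t in coordLine i y ⁻¹' s, F (coordLine i y t) := by
  have he := measurePreserving_coordLine i
  rw [← lintegral_indicator hs, ← he.lintegral_comp_emb (MeasurableEquiv.measurableEmbedding _)]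
  refine (lintegral_prod_symm _ (((aemeasurable_indicator_iff hs).2 hF).comp_quasiMeasurePreserving
    he.quasiMeasurePreserving)).trans (lintegral_congr fun y => ?_)
  exact lintegral_indicator (hs.preimage continuous_coordLine.measurable) _

variable {E : Type*} [NormedAddCommGroup E] {f : (Fin (m + 1) → ℝ) → E}

lemma integrable_indicator_comp_coordLine (i : Fin (m + 1)) (hs : MeasurableSet s)
    (hf : IntegrableOn f s) :
    Integrable (s.indicator f ∘ (MeasurableEquiv.piFinSuccAbove (fun _ => ℝ) i).symm) :=
  ((measurePreserving_coordLine i).integrable_comp_emb (MeasurableEquiv.measurableEmbedding _)).2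
    ((integrable_indicator_iff hs).2 hf)

lemma ae_integrableOn_coordLine (i : Fin (m + 1)) (hs : MeasurableSet s) (hf : IntegrableOn f s) :
    ∀ᵐ y, IntegrableOn (fun t => f (coordLine i y t)) (coordLine i y ⁻¹' s) := by
  filter_upwards [(integrable_indicator_comp_coordLine i hs hf).prod_left_ae] with y hy
  exact (integrable_indicator_iff (hs.preimage continuous_coordLine.measurable)).1 hy

lemma setIntegral_eq_integral_coordLine [NormedSpace ℝ E] (i : Fin (m + 1)) (hs : MeasurableSet s)
    (hf : IntegrableOn f s) :
    ∫ x in s, f x = ∫ y, ∫ t in coordLine i y ⁻¹' s, f (coordLine i y t) := by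
  rw [← integral_indicator hs, ← (measurePreserving_coordLine i).integral_comp']
  refine (integral_prod_symm _ (integrable_indicator_comp_coordLine i hs hf)).trans
    (integral_congr_ae (.of_forall fun y => ?_))
  exact integral_indicator (hs.preimage continuous_coordLine.measurable)

/-- The image of the open box `b` under deletion of the coordinate `i`. -/
def boxFace (i : Fin (m + 1)) (b : (Fin (m + 1) → ℝ) × (Fin (m + 1) → ℝ)) : Set (Fin m → ℝ) :=
  openBox (i.removeNth b.1, i.removeNth b.2)

lemma coordLine_mem_openBox {b : (Fin (m + 1) → ℝ) × (Fin (m + 1) → ℝ)} {t : ℝ} :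
    coordLine i y t ∈ openBox b ↔ t ∈ Ioo (b.1 i) (b.2 i) ∧ y ∈ boxFace i b := by
  simp only [boxFace, mem_openBox, Fin.forall_iff_succAbove i, coordLine, Fin.insertNth_apply_same,
    Fin.insertNth_apply_succAbove, Fin.removeNth]

lemma volume_boxFace_ne_top {b : (Fin (m + 1) → ℝ) × (Fin (m + 1) → ℝ)} :
    volume (boxFace i b) ≠ ⊤ :=
  isBounded_openBox.measure_lt_top.ne

lemma setLIntegral_le_mul_volume_boxFace (i : Fin (m + 1))
    {b : (Fin (m + 1) → ℝ) × (Fin (m + 1) → ℝ)} (hs : MeasurableSet s) (hsb : s ⊆ openBox b)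
    {F : (Fin (m + 1) → ℝ) → ℝ≥0∞} (hF : AEMeasurable F (volume.restrict s)) {B : ℝ≥0∞}
    (hB : ∀ y ∈ boxFace i b, ∫⁻ t in coordLine i y ⁻¹' s, F (coordLine i y t) ≤ B) :
    ∫⁻ x in s, F x ≤ B * volume (boxFace i b) := by
  rw [setLIntegral_eq_lintegral_coordLine i hs hF,
    ← lintegral_indicator_const (s := boxFace i b) isOpen_openBox.measurableSet]
  refine lintegral_mono fun y => ?_
  by_cases hy : y ∈ boxFace i b
  · rw [indicator_of_mem hy]
    exact hB y hy
  · have hempty : coordLine i y ⁻¹' s = ∅ :=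
      eq_empty_of_forall_notMem fun t ht => hy (coordLine_mem_openBox.1 (hsb ht)).2
    simp [hempty]

end CoordinateLines

section WeakDerivative

/-- `g` is the weak partial derivative of `f` in direction `i` on the open set `V`, tested against
real-valued functions. -/
def IsWeakPartialDerivOn {m : ℕ} (i : Fin m) (f g : (Fin m → ℝ) → ℂ) (V : Set (Fin m → ℝ)) : Prop :=
  ∀ φ : (Fin m → ℝ) → ℝ, ContDiff ℝ (⊤ : ℕ∞) φ → HasCompactSupport φ → tsupport φ ⊆ V →
    ∫ x in V, f x * ((fderiv ℝ φ x) (Pi.single i 1) : ℂ) = -∫ x in V, g x * (φ x : ℂ)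

variable {m : ℕ} {i : Fin (m + 1)} {y : Fin m → ℝ} {V : Set (Fin (m + 1) → ℝ)}

lemma contDiff_coordLine {k : WithTop ℕ∞} : ContDiff ℝ k (coordLine i y) := by
  rw [contDiff_pi, Fin.forall_iff_succAbove i]
  simp only [coordLine, Fin.insertNth_apply_same, Fin.insertNth_apply_succAbove]
  exact ⟨contDiff_id, fun _ => contDiff_const⟩

lemma hasCompactSupport_comp_coordLine {E : Type*} [Zero E] {φ : (Fin (m + 1) → ℝ) → E}
    (hφ : HasCompactSupport φ) : HasCompactSupport fun t => φ (coordLine i y t) := by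
  refine .of_support_subset_isCompact (hφ.isCompact.image (continuous_apply i)) fun t ht => ?_
  exact ⟨coordLine i y t, subset_tsupport _ ht, coordLine_apply_same t⟩

lemma deriv_ofReal_comp_coordLine {φ : (Fin (m + 1) → ℝ) → ℝ} {t : ℝ}
    (hφ : DifferentiableAt ℝ φ (coordLine i y t)) :
    deriv (fun t => (φ (coordLine i y t) : ℂ)) t =
      (fderiv ℝ φ (coordLine i y t) (Pi.single i 1) : ℂ) :=
  (hφ.hasFDerivAt.comp_hasDerivAt t (hasDerivAt_coordLine t)).ofReal_comp.deriv

lemma setIntegral_coordLine_mul_fderiv_eq_neg {f g : (Fin (m + 1) → ℝ) → ℂ} (hV : IsOpen V)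
    (hf : ContinuousOn f V)
    (hg : IntegrableOn (fun t => g (coordLine i y t)) (coordLine i y ⁻¹' V))
    (h : HasDerivPiecewiseOn (fun t => f (coordLine i y t)) (fun t => g (coordLine i y t))
      (coordLine i y ⁻¹' V)) {φ : (Fin (m + 1) → ℝ) → ℝ} (hφ : ContDiff ℝ 1 φ)
    (hφc : HasCompactSupport φ) (hφV : tsupport φ ⊆ V) :
    ∫ t in coordLine i y ⁻¹' V,
        f (coordLine i y t) * (fderiv ℝ φ (coordLine i y t) (Pi.single i 1) : ℂ) =
      -∫ t in coordLine i y ⁻¹' V, g (coordLine i y t) * (φ (coordLine i y t) : ℂ) := by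
  have hψ : tsupport (fun t => (φ (coordLine i y t) : ℂ)) ⊆ coordLine i y ⁻¹' V :=
    (tsupport_comp_subset Complex.ofReal_zero _).trans
      ((tsupport_comp_subset_preimage φ continuous_coordLine).trans (preimage_mono hφV))
  simp only [← deriv_ofReal_comp_coordLine (hφ.differentiable one_ne_zero _)]
  exact h.integral_mul_deriv_eq_neg (hV.preimage continuous_coordLine)
    (hf.comp continuous_coordLine.continuousOn fun _ ht => ht) hg
    (Complex.ofRealCLM.contDiff.comp (hφ.comp contDiff_coordLine))
    ((hasCompactSupport_comp_coordLine hφc).comp_left Complex.ofReal_zero) hψ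

lemma isWeakPartialDerivOn_of_coordLine {f g : (Fin (m + 1) → ℝ) → ℂ} (hV : IsOpen V)
    (hf : ContinuousOn f V) (hg : IntegrableOn g V)
    (h : ∀ y, HasDerivPiecewiseOn (fun t => f (coordLine i y t)) (fun t => g (coordLine i y t))
      (coordLine i y ⁻¹' V)) : IsWeakPartialDerivOn i f g V := by
  intro φ hφ hφc hφV
  have hφ1 : ContDiff ℝ 1 φ := hφ.of_le (by simp)
  have hdφ : Continuous fun x => ((fderiv ℝ φ x) (Pi.single i 1) : ℂ) :=
    Complex.continuous_ofReal.comp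
      ((hφ1.continuous_fderiv one_ne_zero).clm_apply continuous_const)
  have hdφV : tsupport (fun x => ((fderiv ℝ φ x) (Pi.single i 1) : ℂ)) ⊆ tsupport φ :=
    (tsupport_comp_subset Complex.ofReal_zero _).trans (tsupport_fderiv_apply_subset ℝ _)
  have hfdφ : IntegrableOn (fun x => f x * ((fderiv ℝ φ x) (Pi.single i 1) : ℂ)) V :=
    ((continuous_mul_of_tsupport_subset hV hf hdφ (hdφV.trans hφV)).integrable_of_hasCompactSupport
      (HasCompactSupport.mul_left (hφc.of_isClosed_subset (isClosed_tsupport _) hdφV))).integrableOn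
  have hgφ : IntegrableOn (fun x => g x * (φ x : ℂ)) V := by
    obtain ⟨M, hM⟩ := hφ.continuous.bounded_above_of_compact_support hφc
    exact Integrable.mul_bdd (c := M) hg
      (Complex.continuous_ofReal.comp hφ.continuous).aestronglyMeasurable
      (.of_forall fun x => by simpa using hM x)
  rw [setIntegral_eq_integral_coordLine i hV.measurableSet hfdφ,
    setIntegral_eq_integral_coordLine i hV.measurableSet hgφ, ← integral_neg]
  refine integral_congr_ae ?_
  filter_upwards [ae_integrableOn_coordLine i hV.measurableSet hg] with y hy
  exact setIntegral_coordLine_mul_fderiv_eq_neg hV hf hy (h y) hφ1 hφc hφV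

end WeakDerivative

section GradientBound

variable {m n N : ℕ} {p : ℝ}

namespace IsContinuousRootOn

lemma hasDerivPiecewiseOn {a a' : ℝ → Fin n → ℂ} {s : Set ℝ} {l : ℝ → ℂ}
    (h : IsContinuousRootOn a s l) (ha : ∀ t ∈ s, HasDerivAt a (a' t) t) :
    HasDerivPiecewiseOn l (fun t => reducedVelocity (a t) (a' t) (l t)) s := by
  classical
  refine ⟨Finset.univ.image fun k : Fin n => excessStratum a s l k, ?_, fun T hT => ?_⟩
  · simp [h.iUnion_excessStratum]
  · obtain ⟨k, -, rfl⟩ := Finset.mem_image.1 hT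
    exact ⟨h.measurableSet_excessStratum k.2, fun t ht =>
      h.hasDerivWithinAt_reducedVelocity k.2 (ha t ht.1) ht⟩

end IsContinuousRootOn

/-- For a root `l` of the monic polynomials with coefficients `D j []`, the formal partial
derivative of `l` in direction `i`. -/
def rootPartialDeriv (D : Fin n → List (Fin m) → (Fin m → ℝ) → ℂ) (l : (Fin m → ℝ) → ℂ)
    (i : Fin m) (x : Fin m → ℝ) : ℂ :=
  reducedVelocity (fun j => D j [] x) (fun j => D j [i] x) (l x)

lemma LipschitzPartialDerivChain.contDiffLipOn_coordLine {k : ℕ} {M : ℝ} {i : Fin (m + 1)}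
    {b : (Fin (m + 1) → ℝ) × (Fin (m + 1) → ℝ)} {y : Fin m → ℝ}
    {D : List (Fin (m + 1)) → (Fin (m + 1) → ℝ) → ℂ} (hM : 0 ≤ M)
    (h : LipschitzPartialDerivChain k M (openBox b) D) (hy : y ∈ boxFace i b) :
    ContDiffLipOn k M (Ioo (b.1 i) (b.2 i)) (fun t => D [] (coordLine i y t)) := by
  have hmem {t : ℝ} (ht : t ∈ Ioo (b.1 i) (b.2 i)) : coordLine i y t ∈ openBox b :=
    coordLine_mem_openBox.2 ⟨ht, hy⟩
  refine ⟨fun j t => D (List.replicate j i) (coordLine i y t), rfl, fun j hj t ht => ?_,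
    fun j hj t ht => ?_, fun t ht r hr => ?_⟩
  · exact hasDerivAt_comp_coordLine (h.hasDerivAt _ (by simpa using hj) i _ (hmem ht))
  · exact h.norm_le _ (by simpa using hj) _ (hmem ht)
  · exact (h.norm_sub_le _ (by simp) _ (hmem ht) _ (hmem hr)).trans
      (by gcongr; exact dist_coordLine_le t r)

lemma exists_setLIntegral_rootPartialDeriv_le_of_subset_openBox (hp : 1 ≤ p)
    (hpN : p * (N + 1) < N + 2) (hn : n ≤ N + 2) (i : Fin (m + 1))
    (b : (Fin (m + 1) → ℝ) × (Fin (m + 1) → ℝ)) :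
    ∃ C : ℝ≥0∞, C ≠ ⊤ ∧ ∀ (A : ℝ) (D : Fin n → List (Fin (m + 1)) → (Fin (m + 1) → ℝ) → ℂ)
      (s : Set (Fin (m + 1) → ℝ)) (l : (Fin (m + 1) → ℝ) → ℂ), 0 < A →
      (∀ j : Fin n, LipschitzPartialDerivChain (N + 1) (A ^ (n - j : ℕ)) (openBox b) (D j)) →
      s ⊆ openBox b → IsContinuousRootOn (fun x j => D j [] x) s l →
      ∫⁻ x in s, ‖rootPartialDeriv D l i x‖ₑ ^ p ≤ C * ENNReal.ofReal (A ^ p) := by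
  obtain ⟨C, hC, hline⟩ := exists_setLIntegral_reducedVelocity_le_mul_rpow hp hpN hn (b.1 i) (b.2 i)
  refine ⟨C * volume (boxFace i b), ENNReal.mul_ne_top hC volume_boxFace_ne_top,
    fun A D s l hA hD hs hl => ?_⟩
  have hD' : ContinuousOn (fun x j => D j [i] x) s := continuousOn_pi.2 fun j =>
    ((hD j).exists_lipschitzOnWith (by simp)).choose_spec.continuousOn.mono hs
  rw [mul_right_comm]
  refine setLIntegral_le_mul_volume_boxFace i hl.measurableSet hs
    ((hl.aestronglyMeasurable_reducedVelocity hD' volume).enorm.pow_const p) fun y hy => ?_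
  refine hline A _ _ _ _ hA (fun j => (hD j).contDiffLipOn_coordLine (by positivity) hy)
    (fun t ht => hasDerivAt_pi.2 fun j => ?_)
    (fun t ht => (coordLine_mem_openBox.1 (hs ht)).1) (hl.comp continuous_coordLine)
  exact hasDerivAt_comp_coordLine
    ((hD j).hasDerivAt [] (by simp) i _ (coordLine_mem_openBox.2 ⟨ht, hy⟩))

lemma lintegral_biUnion_finset_le {X ι : Type*} [MeasurableSpace X] {μ : Measure X}
    (f : X → ℝ≥0∞) (S : Finset ι) (s : ι → Set X) :
    ∫⁻ x in ⋃ k ∈ S, s k, f x ∂μ ≤ ∑ k ∈ S, ∫⁻ x in s k, f x ∂μ := by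
  rw [← iUnion_subtype (· ∈ S) fun k => s k]
  exact (lintegral_iUnion_le _ _).trans_eq (Finset.tsum_subtype S fun k => ∫⁻ x in s k, f x ∂μ)

lemma exists_setLIntegral_rootPartialDeriv_le_of_pos (hp : 1 ≤ p) (hpN : p * (N + 1) < N + 2)
    (hn : n ≤ N + 2) (𝒦 : Finset ((Fin m → ℝ) × (Fin m → ℝ))) (i : Fin m) :
    ∃ C : ℝ≥0∞, C ≠ ⊤ ∧ ∀ (A : ℝ) (D : Fin n → List (Fin m) → (Fin m → ℝ) → ℂ)
      (s : Set (Fin m → ℝ)) (l : (Fin m → ℝ) → ℂ), 0 < A →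
      (∀ j : Fin n, LipschitzPartialDerivChain (N + 1) (A ^ (n - j : ℕ)) (boxUnion 𝒦) (D j)) →
      s ⊆ boxUnion 𝒦 → IsContinuousRootOn (fun x j => D j [] x) s l →
      ∫⁻ x in s, ‖rootPartialDeriv D l i x‖ₑ ^ p ≤ C * ENNReal.ofReal (A ^ p) := by
  rcases m with _ | m
  · exact i.elim0
  choose C hC hbox using fun b : (Fin (m + 1) → ℝ) × (Fin (m + 1) → ℝ) =>
    exists_setLIntegral_rootPartialDeriv_le_of_subset_openBox (n := n) hp hpN hn i b
  refine ⟨∑ b ∈ 𝒦, C b, ENNReal.sum_ne_top.2 fun b _ => hC b, fun A D s l hA hD hs hl => ?_⟩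
  calc ∫⁻ x in s, ‖rootPartialDeriv D l i x‖ₑ ^ p
      = ∫⁻ x in ⋃ b ∈ 𝒦, s ∩ openBox b, ‖rootPartialDeriv D l i x‖ₑ ^ p := by
        rw [← inter_iUnion₂, ← boxUnion_eq_biUnion_openBox, inter_eq_left.2 hs]
    _ ≤ ∑ b ∈ 𝒦, ∫⁻ x in s ∩ openBox b, ‖rootPartialDeriv D l i x‖ₑ ^ p :=
        lintegral_biUnion_finset_le _ _ _
    _ ≤ ∑ b ∈ 𝒦, C b * ENNReal.ofReal (A ^ p) := Finset.sum_le_sum fun b hb =>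
        hbox b A D _ l hA (fun j => (hD j).mono le_rfl (openBox_subset_boxUnion hb))
          inter_subset_right (hl.mono (hl.measurableSet.inter isOpen_openBox.measurableSet)
            inter_subset_left)
    _ = (∑ b ∈ 𝒦, C b) * ENNReal.ofReal (A ^ p) := (Finset.sum_mul _ _ _).symm

lemma exists_setLIntegral_rootPartialDeriv_le (hp : 1 ≤ p) (hpN : p * (N + 1) < N + 2)
    (hn : n ≤ N + 2) (𝒦 : Finset ((Fin m → ℝ) × (Fin m → ℝ))) (i : Fin m) :
    ∃ C : ℝ≥0∞, C ≠ ⊤ ∧ ∀ (A : ℝ) (D : Fin n → List (Fin m) → (Fin m → ℝ) → ℂ)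
      (s : Set (Fin m → ℝ)) (l : (Fin m → ℝ) → ℂ), 0 ≤ A →
      (∀ j : Fin n, LipschitzPartialDerivChain (N + 1) (A ^ (n - j : ℕ)) (boxUnion 𝒦) (D j)) →
      s ⊆ boxUnion 𝒦 → IsContinuousRootOn (fun x j => D j [] x) s l →
      ∫⁻ x in s, ‖rootPartialDeriv D l i x‖ₑ ^ p ≤ C * ENNReal.ofReal (A ^ p) := by
  obtain ⟨C, hC, h⟩ := exists_setLIntegral_rootPartialDeriv_le_of_pos (n := n) hp hpN hn 𝒦 i
  refine ⟨C, hC, fun A D s l hA hD hs hl => ?_⟩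
  have htendsto : Filter.Tendsto (fun B : ℝ => C * ENNReal.ofReal (B ^ p)) (nhdsWithin A (Ioi A))
      (nhds (C * ENNReal.ofReal (A ^ p))) :=
    (ENNReal.Tendsto.const_mul (ENNReal.tendsto_ofReal
      (Real.continuousAt_rpow_const A p (.inr (by linarith)))) (.inr hC)).mono_left
        nhdsWithin_le_nhds
  refine ge_of_tendsto htendsto (Filter.eventually_of_mem self_mem_nhdsWithin fun B hB => ?_)
  exact h B D s l (hA.trans_lt hB)
    (fun j => (hD j).mono (pow_le_pow_left₀ hA (mem_Ioi.1 hB).le _) subset_rfl) hs hl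

lemma isWeakPartialDerivOn_rootPartialDeriv {D : Fin n → List (Fin m) → (Fin m → ℝ) → ℂ}
    {V : Set (Fin m → ℝ)} {l : (Fin m → ℝ) → ℂ} {i : Fin m} (hV : IsOpen V)
    (hD : ∀ j, ∀ x ∈ V, HasDerivAt (fun t => D j [] (Function.update x i t)) (D j [i] x) (x i))
    (hl : IsContinuousRootOn (fun x j => D j [] x) V l)
    (hint : IntegrableOn (rootPartialDeriv D l i) V) :
    IsWeakPartialDerivOn i l (rootPartialDeriv D l i) V := by
  rcases m with _ | m
  · exact i.elim0
  exact isWeakPartialDerivOn_of_coordLine hV hl.continuousOn hint fun y =>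
    (hl.comp continuous_coordLine).hasDerivPiecewiseOn fun t ht =>
      hasDerivAt_pi.2 fun j => hasDerivAt_comp_coordLine (hD j _ ht)

end GradientBound

section LpBound

variable {X E : Type*} [MeasurableSpace X] {μ : Measure X} [NormedAddCommGroup E] {g : X → E}
  {p : ℝ} {S : ℝ≥0∞}

lemma memLp_of_lintegral_rpow_enorm_le (hp : 0 < p) (hg : AEStronglyMeasurable g μ) (hS : S ≠ ⊤)
    (h : ∫⁻ x, ‖g x‖ₑ ^ p ∂μ ≤ S) : MemLp g (ENNReal.ofReal p) μ := by
  refine ⟨hg, (eLpNorm_lt_top_iff_lintegral_rpow_enorm_lt_top (by simpa using hp)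
    ENNReal.ofReal_ne_top).2 ?_⟩
  rw [ENNReal.toReal_ofReal hp.le]
  exact h.trans_lt hS.lt_top

lemma integral_rpow_norm_le_toReal (hg : AEStronglyMeasurable g μ) (hS : S ≠ ⊤)
    (h : ∫⁻ x, ‖g x‖ₑ ^ p ∂μ ≤ S) : ∫ x, ‖g x‖ ^ p ∂μ ≤ S.toReal := by
  simp only [← toReal_enorm, ENNReal.toReal_rpow]
  rw [integral_toReal (hg.enorm.pow_const p) (ae_lt_top' (hg.enorm.pow_const p)
    (h.trans_lt hS.lt_top).ne)]
  exact ENNReal.toReal_mono hS h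

end LpBound

section Sobolev

variable {m : ℕ}

lemma eval_monicOfFn_sub (n : ℕ) (c : ℕ → ℂ) (z : ℂ) :
    Polynomial.eval z (monicOfFn n fun j : Fin n => c (n - j)) =
      z ^ n + ∑ j ∈ Finset.Icc 1 n, c j * z ^ (n - j) := by
  rw [eval_monicOfFn, Fin.sum_univ_eq_sum_range (fun i => c (n - i) * z ^ i) n]
  congr 1
  refine Finset.sum_nbij' (fun i => n - i) (fun j => n - j) ?_ ?_ ?_ ?_ ?_ <;>
    intro i hi <;> simp only [Finset.mem_range, Finset.mem_Icc] at hi ⊢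
  iterate 4 omega
  rw [Nat.sub_sub_self hi.le]

lemma le_sup'_rpow_inv_pow {S : Finset ℕ} (hS : S.Nonempty) {c : ℕ → ℝ} {j : ℕ} (hj : j ∈ S)
    (hj0 : j ≠ 0) (hc : 0 ≤ c j) : c j ≤ S.sup' hS (fun j => c j ^ (j : ℝ)⁻¹) ^ j := by
  calc c j = (c j ^ (j : ℝ)⁻¹) ^ j := (Real.rpow_inv_natCast_pow hc hj0).symm
    _ ≤ _ := pow_le_pow_left₀ (Real.rpow_nonneg hc _)
        (Finset.le_sup' (fun j => c j ^ (j : ℝ)⁻¹) hj) j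

lemma lipschitzPartialDerivChain_sup'_CNormMulti {k : ℕ} {𝒦 : Finset ((Fin m → ℝ) × (Fin m → ℝ))}
    {D : ℕ → List (Fin m) → (Fin m → ℝ) → ℂ} {S : Finset ℕ} (hS : S.Nonempty) {j : ℕ} (hj : j ∈ S)
    (hj0 : j ≠ 0)
    (hd : ∀ L : List (Fin m), L.length < k → ∀ i, ∀ x ∈ boxUnion 𝒦,
      HasDerivAt (fun t => D j L (Function.update x i t)) (D j (i :: L) x) (x i))
    (hK : ∃ K : ℝ, ∀ L : List (Fin m), L.length = k → ∀ x ∈ boxUnion 𝒦, ∀ y ∈ boxUnion 𝒦,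
      ‖D j L x - D j L y‖ ≤ K * dist x y) :
    LipschitzPartialDerivChain k
      (S.sup' hS (fun j => CNormMulti (k + 1) (boxUnion 𝒦) (D j) ^ ((j : ℝ)⁻¹)) ^ j)
      (boxUnion 𝒦) (D j) :=
  (lipschitzPartialDerivChain_CNormMulti hd hK).mono
    (le_sup'_rpow_inv_pow (c := fun j => CNormMulti (k + 1) (boxUnion 𝒦) (D j)) hS hj hj0
      CNormMulti_succ_nonneg) subset_rfl

lemma rpow_one_div_le_mul {r T A p : ℝ} (hp : 0 < p) (hr : 0 ≤ r) (hT : 0 ≤ T) (hA : 0 ≤ A)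
    (h : r ≤ T * A ^ p) : r ^ (1 / p) ≤ T ^ (1 / p) * A := by
  calc r ^ (1 / p) ≤ (T * A ^ p) ^ (1 / p) := by gcongr
    _ = T ^ (1 / p) * A := by
      rw [Real.mul_rpow hT (by positivity), ← Real.rpow_mul hA, mul_one_div_cancel hp.ne',
        Real.rpow_one]

lemma exists_memLp_rootPartialDeriv_and_integral_le {n N : ℕ} {p : ℝ} (hp : 1 ≤ p)
    (hpN : p * (N + 1) < N + 2) (hn : n ≤ N + 2) (𝒦 : Finset ((Fin m → ℝ) × (Fin m → ℝ)))
    (i : Fin m) :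
    ∃ C : ℝ, 0 ≤ C ∧ ∀ (A : ℝ) (D : Fin n → List (Fin m) → (Fin m → ℝ) → ℂ)
      (s : Set (Fin m → ℝ)) (l : (Fin m → ℝ) → ℂ), 0 ≤ A →
      (∀ j : Fin n, LipschitzPartialDerivChain (N + 1) (A ^ (n - j : ℕ)) (boxUnion 𝒦) (D j)) →
      s ⊆ boxUnion 𝒦 → IsContinuousRootOn (fun x j => D j [] x) s l →
      MemLp (rootPartialDeriv D l i) (ENNReal.ofReal p) (volume.restrict s) ∧
        ∫ x in s, ‖rootPartialDeriv D l i x‖ ^ p ≤ C * A ^ p := by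
  obtain ⟨C, hC, h⟩ := exists_setLIntegral_rootPartialDeriv_le (n := n) hp hpN hn 𝒦 i
  refine ⟨C.toReal, ENNReal.toReal_nonneg, fun A D s l hA hD hs hl => ?_⟩
  have hD' : ContinuousOn (fun x j => D j [i] x) s :=
    continuousOn_pi.2 fun j => ((hD j).continuousOn (by simp)).mono hs
  have hmeas : AEStronglyMeasurable (rootPartialDeriv D l i) (volume.restrict s) :=
    hl.aestronglyMeasurable_reducedVelocity hD' volume
  have htop : C * ENNReal.ofReal (A ^ p) ≠ ⊤ := ENNReal.mul_ne_top hC ENNReal.ofReal_ne_top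
  refine ⟨memLp_of_lintegral_rpow_enorm_le (by linarith) hmeas htop (h A D s l hA hD hs hl),
    (integral_rpow_norm_le_toReal hmeas htop (h A D s l hA hD hs hl)).trans_eq ?_⟩
  rw [ENNReal.toReal_mul, ENNReal.toReal_ofReal (by positivity)]

lemma exists_isWeakPartialDerivOn_root {n N : ℕ} {p : ℝ} (hp : 1 ≤ p) (hpN : p * (N + 1) < N + 2)
    (hn : n ≤ N + 2) (𝒦 : Finset ((Fin m → ℝ) × (Fin m → ℝ))) :
    ∃ C : ℝ, 0 < C ∧ ∀ (A : ℝ) (D : Fin n → List (Fin m) → (Fin m → ℝ) → ℂ)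
      (V : Set (Fin m → ℝ)) (l : (Fin m → ℝ) → ℂ), 0 ≤ A →
      (∀ j : Fin n, LipschitzPartialDerivChain (N + 1) (A ^ (n - j : ℕ)) (boxUnion 𝒦) (D j)) →
      IsOpen V → V ⊆ boxUnion 𝒦 → IsContinuousRootOn (fun x j => D j [] x) V l →
      ∃ g : Fin m → (Fin m → ℝ) → ℂ,
        (∀ i, IntegrableOn (fun x => ‖g i x‖ ^ p) V) ∧
        (∀ i, IsWeakPartialDerivOn i l (g i) V) ∧
        (∑ i : Fin m, ∫ x in V, ‖g i x‖ ^ p) ^ (1 / p) ≤ C * A := by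
  choose C hC h using exists_memLp_rootPartialDeriv_and_integral_le hp hpN hn 𝒦
  have hCsum : 0 ≤ ∑ i, C i := Finset.sum_nonneg fun i _ => hC i
  refine ⟨(∑ i, C i + 1) ^ (1 / p), by positivity, fun A D V l hA hD hV hVW hl => ?_⟩
  have : IsFiniteMeasure (volume.restrict V) :=
    ⟨by simpa using (isBounded_boxUnion.subset hVW).measure_lt_top⟩
  have hp0 : 0 < p := by linarith
  have hg (i : Fin m) := h i A D V l hA hD hVW hl
  refine ⟨rootPartialDeriv D l, fun i => ?_, fun i => ?_, ?_⟩
  · have hint := (hg i).1.integrable_norm_rpow (by simpa using hp0) ENNReal.ofReal_ne_top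
    rwa [ENNReal.toReal_ofReal hp0.le] at hint
  · exact isWeakPartialDerivOn_rootPartialDeriv hV
      (fun j x hx => (hD j).hasDerivAt [] (by simp) i x (hVW hx)) hl
      ((hg i).1.integrable (by simpa using hp))
  · refine rpow_one_div_le_mul hp0 (Finset.sum_nonneg fun i _ => by positivity) (by positivity) hA
      ((Finset.sum_le_sum fun i _ => (hg i).2).trans ?_)
    rw [← Finset.sum_mul]
    gcongr
    linarith

theorem continuous_root_Sobolev_multiparameter_general
    (m n : ℕ) (hn : 2 ≤ n) (p : ℝ) (hp1 : 1 ≤ p) (hp2 : p < (n : ℝ) / ((n : ℝ) - 1))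
    (𝒦 : Finset ((Fin m → ℝ) × (Fin m → ℝ))) :
    ∃ C : ℝ, 0 < C ∧ ∀ D : ℕ → List (Fin m) → (Fin m → ℝ) → ℂ,
      (∀ j ∈ Finset.Icc 1 n, ∀ L : List (Fin m), L.length < n - 1 → ∀ i : Fin m,
        ∀ x ∈ boxUnion 𝒦,
        HasDerivAt (fun s : ℝ => D j L (Function.update x i s)) (D j (i :: L) x) (x i)) →
      (∀ j ∈ Finset.Icc 1 n, ∃ K : ℝ, ∀ L : List (Fin m), L.length = n - 1 →
        ∀ x ∈ boxUnion 𝒦, ∀ y ∈ boxUnion 𝒦, ‖D j L x - D j L y‖ ≤ K * dist x y) →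
      ∀ V : Set (Fin m → ℝ), IsOpen V → V ⊆ boxUnion 𝒦 →
      ∀ l : (Fin m → ℝ) → ℂ, ContinuousOn l V →
      (∀ x ∈ V, l x ^ n + ∑ j ∈ Finset.Icc 1 n, D j [] x * l x ^ (n - j) = 0) →
      ∃ g : Fin m → (Fin m → ℝ) → ℂ,
        (∀ i, IntegrableOn (fun x => ‖g i x‖ ^ p) V) ∧
        (∀ i, IsWeakPartialDerivOn i l (g i) V) ∧
        (∑ i : Fin m, ∫ x in V, ‖g i x‖ ^ p) ^ (1 / p) ≤
          C * (Finset.Icc 1 n).sup' (Finset.nonempty_Icc.mpr (by omega))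
            (fun j => CNormMulti n (boxUnion 𝒦) (D j) ^ ((j : ℝ)⁻¹)) := by
  obtain ⟨N, rfl⟩ : ∃ N, n = N + 2 := ⟨n - 2, by omega⟩
  have hpN : p * (N + 1) < N + 2 := by
    rw [lt_div_iff₀ (by push_cast; linarith)] at hp2
    push_cast at hp2
    linarith
  obtain ⟨C, hC, h⟩ := exists_isWeakPartialDerivOn_root hp1 hpN le_rfl 𝒦
  refine ⟨C, hC, fun D hd hK V hV hVW l hl h0 => ?_⟩
  have hmem (j : Fin (N + 2)) : N + 2 - (j : ℕ) ∈ Finset.Icc 1 (N + 2) := by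
    simp only [Finset.mem_Icc]
    omega
  have hchain (j : Fin (N + 2)) := lipschitzPartialDerivChain_sup'_CNormMulti
    ⟨_, hmem j⟩ (hmem j) (by omega) (hd _ (hmem j)) (hK _ (hmem j))
  refine h _ (fun j => D (N + 2 - j)) V l ((Finset.le_sup'_iff _).2
    ⟨1, by simp, Real.rpow_nonneg CNormMulti_succ_nonneg _⟩) hchain hV hVW
    ⟨hV.measurableSet, continuousOn_pi.2 fun j => ((hchain j).continuousOn (by simp)).mono hVW, hl,
      fun x hx => (eval_monicOfFn_sub _ (fun j => D j [] x) _).trans (h0 x hx)⟩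

end Sobolev

/-- A continuous root `λ` on a relatively compact open `V ⊆ U` of a monic
polynomial of degree `n` whose coefficients are `(n-1)`-times continuously differentiable on
`U` with Lipschitz top partial derivatives on the box union `W ⊇ V̄` belongs to `W^{1,p}(V)`
for `1 ≤ p < n/(n-1)`: there are `g_i ∈ L^p(V)` representing the distributional partial
derivatives of `λ`, with `(∑_i ‖g_i‖_{L^p(V)}^p)^{1/p} ≤ C(m,n,p,𝒦) max_j ‖a_j‖^{1/j}`. -/
theorem continuous_root_Sobolev_multiparameter
    (m n : ℕ) (hm : 1 ≤ m) (hn : 2 ≤ n) (p : ℝ) (hp1 : 1 ≤ p)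
    (hp2 : p < (n : ℝ) / ((n : ℝ) - 1))
    (𝒦 : Finset ((Fin m → ℝ) × (Fin m → ℝ))) :
    ∃ C : ℝ, 0 < C ∧
      ∀ (U : Set (Fin m → ℝ)), IsOpen U → boxUnion 𝒦 ⊆ U →
      ∀ D : ℕ → List (Fin m) → (Fin m → ℝ) → ℂ,
      (∀ j ∈ Finset.Icc 1 n, ∀ L : List (Fin m), L.length ≤ n - 1 → ContinuousOn (D j L) U) →
      (∀ j ∈ Finset.Icc 1 n, ∀ L : List (Fin m), L.length < n - 1 → ∀ i : Fin m, ∀ x ∈ U,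
        HasDerivAt (fun s : ℝ => D j L (Function.update x i s)) (D j (i :: L) x) (x i)) →
      (∀ j ∈ Finset.Icc 1 n, ∃ K : ℝ, ∀ L : List (Fin m), L.length = n - 1 →
        ∀ x ∈ boxUnion 𝒦, ∀ y ∈ boxUnion 𝒦, ‖D j L x - D j L y‖ ≤ K * dist x y) →
      ∀ V : Set (Fin m → ℝ), IsOpen V → IsCompact (closure V) →
        closure V ⊆ U → closure V ⊆ boxUnion 𝒦 →
      ∀ l : (Fin m → ℝ) → ℂ, ContinuousOn l V →
      (∀ x ∈ V, l x ^ n + ∑ j ∈ Finset.Icc 1 n, D j [] x * l x ^ (n - j) = 0) →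
      ∃ g : Fin m → (Fin m → ℝ) → ℂ,
        (∀ i, IntegrableOn (fun x => ‖g i x‖ ^ p) V volume) ∧
        (∀ i : Fin m, ∀ φ : (Fin m → ℝ) → ℝ,
          ContDiff ℝ (⊤ : ℕ∞) φ → HasCompactSupport φ → tsupport φ ⊆ V →
          ∫ x in V, l x * ((fderiv ℝ φ x) (Pi.single i 1) : ℂ) =
            - ∫ x in V, g i x * (φ x : ℂ)) ∧
        (∑ i : Fin m, ∫ x in V, ‖g i x‖ ^ p) ^ (1 / p) ≤
          C * (Finset.Icc 1 n).sup' (Finset.nonempty_Icc.mpr (by omega))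
            (fun j => CNormMulti n (boxUnion 𝒦) (D j) ^ ((j : ℝ)⁻¹)) := by
  obtain ⟨C, hC, h⟩ := continuous_root_Sobolev_multiparameter_general m n hn p hp1 hp2 𝒦
  exact ⟨C, hC, fun U _ hWU D _ hd hK V hV _ _ hVW l hl h0 =>
    h D (fun j hj L hL i x hx => hd j hj L hL i x (hWU hx)) hK V hV (subset_closure.trans hVW) l hl
      h0⟩
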